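/- arXiv:1302.2638 — 2 statements merged into one kernel-verified Lean document; each statement's English description precedes it below -/
import Mathlib

section
/- Let n be a positive integer and let α₁, α₂ be real parameters with α₁ ≥ 0 and α₂ > α₁ + 3n + 1. For G drawn from the quaternion real spherical ensemble of size 2n with parameters (α₁, α₂), and for every complex number z, ⟨det(z·I − G)⟩ = Σ_{j=0}^{n} z^{2(n−j)} · ∏_{i=1}^{j} (α₁ + n + 1 − i)/(α₂ − α₁ − 2n − 1/2 + i). Equivalently, the even-degree skew orthogonal polynomial is Q_{2n}(z) = (Γ(α₁+n+1)/Γ(2n+1/2+α₁−α₂)) · Σ_{j=0}^{n} (−1)^{n−j} (Γ(n+j+1/2+α₁−α₂)/Γ(j+1+α₁)) z^{2j}. -/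
open MeasureTheory Matrix

/-- The `2n × 2n` complex matrix (indexed by `Fin n × Fin 2`) whose `(j,k)`-th `2 × 2`
block is `[[z_{jk}, w_{jk}], [-conj w_{jk}, conj z_{jk}]]`. -/
noncomputable def quatMatrix (n : ℕ) (x : Fin n → Fin n → ℂ × ℂ) :
    Matrix (Fin n × Fin 2) (Fin n × Fin 2) ℂ :=
  Matrix.of fun a b =>
    if a.2 = 0 then
      (if b.2 = 0 then (x a.1 b.1).1 else (x a.1 b.1).2)
    else
      (if b.2 = 0 then -(starRingEnd ℂ) ((x a.1 b.1).2)
        else (starRingEnd ℂ) ((x a.1 b.1).1))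

/-- The (unnormalized) density of the quaternion real spherical ensemble of size `2n`
with parameters `(α₁, α₂)`: `det(G† G)^{α₁} det(I + G† G)^{-α₂}` (both determinants
are real, so we take real parts). -/
noncomputable def quatSphericalWeight (n : ℕ) (α₁ α₂ : ℝ) (x : Fin n → Fin n → ℂ × ℂ) : ℝ :=
  (((quatMatrix n x)ᴴ * quatMatrix n x).det.re) ^ α₁ *
    ((1 + (quatMatrix n x)ᴴ * quatMatrix n x).det.re) ^ (-α₂)

/-! Expand `det (z - G)` in principal minors. Changing the sign of one quaternion row of `G`
preserves the law and kills every minor that uses exactly one of the two complex rows of that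
quaternion row, so only the minors of quaternion blocks survive. By column symmetry a `j × j`
quaternion block has the same average as any other `j × j` minor with the same `j` quaternion rows
`Y`, and the sum of all of these is `√det (Y Y†)`, a Cauchy–Binet formula for Pfaffians. Averaging
it amounts to raising `α₁` by `1 / 2` in the normalisation constant for `j` rows. The rows are
integrated out one at a time: given the others, both Gram determinants are squares of affine
functions of squared norms of the remaining row, which leaves a ratio of beta integrals. -/

section RadialIntegrals

variable {ι : Type*}

/-- The squared Euclidean norm of the coordinates of `x` in `s`. -/
noncomputable def sqSum (s : Finset ι) (x : ι → ℂ) : ℝ := ∑ i ∈ s, ‖x i‖ ^ 2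

theorem sqSum_nonneg (s : Finset ι) (x : ι → ℂ) : 0 ≤ sqSum s x :=
  Finset.sum_nonneg fun _ _ => by positivity

@[fun_prop]
theorem continuous_sqSum (s : Finset ι) : Continuous (sqSum s) := by
  unfold sqSum; fun_prop

theorem sqSum_sqrt_smul_of_subset [DecidableEq ι] {s u : Finset ι} (h : u ⊆ s) {t : ℝ} (ht : 0 ≤ t)
    (x : ι → ℂ) : sqSum u (fun i => if i ∈ s then √t * x i else x i) = t * sqSum u x := by
  rw [sqSum, sqSum, Finset.mul_sum]
  refine Finset.sum_congr rfl fun i hi => ?_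
  rw [if_pos (h hi), norm_mul, mul_pow, Complex.norm_of_nonneg (Real.sqrt_nonneg t),
    Real.sq_sqrt ht]

/-- The function `(∑_{i ∈ s} |x_i|²)^a (1 + ∑_i |x_i|²)^{-b}`, integrated over `ℂ^ι` when the
other rows of a quaternion matrix are held fixed. -/
noncomputable def radialWeight [Fintype ι] (s : Finset ι) (a b : ℝ) (x : ι → ℂ) : ℝ :=
  sqSum s x ^ a * (1 + sqSum Finset.univ x) ^ (-b)

/-- The integral over `ℂ^ι` of `radialWeight`, possibly infinite. -/
noncomputable def radialIntegral [Fintype ι] (s : Finset ι) (a b : ℝ) : ENNReal :=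
  ∫⁻ x : ι → ℂ, ENNReal.ofReal (radialWeight s a b x)

theorem lintegral_Ioi_affine_rpow {A B b : ℝ} (hA : 0 ≤ A) (hB : 0 < B) (hb : 0 < b) :
    ∫⁻ t in Set.Ioi (1 : ℝ), ENNReal.ofReal ((A + t * B) ^ (-(b + 1))) =
      ENNReal.ofReal ((A + B) ^ (-b) / (b * B)) := by
  have hpos : ∀ t ∈ Set.Ici (1 : ℝ), 0 < A + t * B := fun t ht => by
    have : 0 < t := one_pos.trans_le ht
    positivity
  have hderiv : ∀ t ∈ Set.Ici (1 : ℝ),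
      HasDerivAt (fun t => -((A + t * B) ^ (-b) / (b * B))) ((A + t * B) ^ (-(b + 1))) t := by
    intro t ht
    have haff : HasDerivAt (fun t => A + t * B) B t := by
      simpa using ((hasDerivAt_id t).mul_const B).const_add A
    refine (((haff.rpow_const (p := -b) (Or.inl (hpos t ht).ne')).div_const
      (b * B)).neg).congr_deriv ?_
    rw [show -b - 1 = -(b + 1) by ring]
    field_simp
  have hlim : Filter.Tendsto (fun t => -((A + t * B) ^ (-b) / (b * B))) Filter.atTop
      (nhds 0) := by
    have haff : Filter.Tendsto (fun t : ℝ => A + t * B) Filter.atTop Filter.atTop :=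
      Filter.tendsto_atTop_add_const_left _ _ (Filter.tendsto_id.atTop_mul_const hB)
    simpa using (((tendsto_rpow_neg_atTop hb).comp haff).div_const (b * B)).neg
  have hnn : ∀ t ∈ Set.Ioi (1 : ℝ), 0 ≤ (A + t * B) ^ (-(b + 1)) := fun t ht =>
    Real.rpow_nonneg (hpos t (Set.Ioi_subset_Ici_self ht)).le _
  rw [← ofReal_integral_eq_lintegral_ofReal (integrableOn_Ioi_deriv_of_nonneg' hderiv hnn hlim)
    ((ae_restrict_iff' measurableSet_Ioi).2 (.of_forall hnn)),
    integral_Ioi_of_hasDerivAt_of_nonneg' hderiv hnn hlim]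
  simp

/-- If `f` is a superposition over `t > 1` of functions whose integrals scale like a power of
`t`, then only the integral at `t = 1` matters. -/
theorem lintegral_eq_of_superposition {α : Type*} [MeasurableSpace α] {μ : Measure α}
    [SFinite μ] {f : α → ENNReal} {g : α → ℝ → ENNReal} {K : ENNReal} {b c : ℝ}
    (hg : Measurable (Function.uncurry g)) (hb : 0 < b) (hc : 0 < c)
    (hf : ∀ᵐ x ∂μ, f x = ENNReal.ofReal b * ∫⁻ t in Set.Ioi (1 : ℝ), g x t)
    (hscale : ∀ t : ℝ, 1 < t → ∫⁻ x, g x t ∂μ = ENNReal.ofReal (t ^ (-(c + 1))) * K) :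
    ∫⁻ x, f x ∂μ = ENNReal.ofReal (b / c) * K := by
  have hpow := lintegral_Ioi_affine_rpow le_rfl one_pos hc
  simp only [zero_add, mul_one, Real.one_rpow] at hpow
  have hmeas : Measurable fun x => ∫⁻ t in Set.Ioi (1 : ℝ), g x t := hg.lintegral_prod_right'
  rw [lintegral_congr_ae hf, lintegral_const_mul _ hmeas,
    lintegral_lintegral_swap hg.aemeasurable,
    setLIntegral_congr_fun measurableSet_Ioi hscale, lintegral_mul_const _ (by fun_prop), hpow,
    ← mul_assoc, ← ENNReal.ofReal_mul hb.le, mul_one_div]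

variable [Fintype ι]

theorem measurable_radialWeight (s : Finset ι) (a b : ℝ) : Measurable (radialWeight s a b) := by
  unfold radialWeight; fun_prop

theorem sqSum_le_sqSum_univ (s : Finset ι) (x : ι → ℂ) : sqSum s x ≤ sqSum Finset.univ x :=
  Finset.sum_le_sum_of_subset_of_nonneg s.subset_univ fun _ _ _ => by positivity

theorem norm_sq_le_sqSum_univ (x : ι → ℂ) : ‖x‖ ^ 2 ≤ sqSum Finset.univ x := by
  rw [← Real.le_sqrt (norm_nonneg _) (sqSum_nonneg _ _),
    pi_norm_le_iff_of_nonneg (Real.sqrt_nonneg _)]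
  exact fun i => Real.le_sqrt_of_sq_le
    (Finset.single_le_sum (f := fun i => ‖x i‖ ^ 2) (fun _ _ => by positivity) (Finset.mem_univ i))

theorem ae_sqSum_pos {s : Finset ι} (hs : s.Nonempty) : ∀ᵐ x : ι → ℂ, 0 < sqSum s x := by
  classical
  obtain ⟨i, hi⟩ := hs
  have hker : LinearMap.ker (LinearMap.proj (R := ℝ) (φ := fun _ : ι => ℂ) i) ≠ ⊤ := fun h => by
    simpa using LinearMap.congr_fun (LinearMap.ker_eq_top.1 h) (Pi.single i 1)
  have hne : ∀ᵐ x : ι → ℂ, x i ≠ 0 := by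
    rw [ae_iff]
    convert Measure.addHaar_submodule volume _ hker using 2
    ext x
    simp
  filter_upwards [hne] with x hx
  exact Finset.sum_pos' (fun _ _ => by positivity) ⟨i, hi, by positivity⟩

section ChangeOfVariables

variable [DecidableEq ι]

theorem det_toLin'_restrictScalars_real (L : Matrix ι ι ℂ) :
    LinearMap.det ((Matrix.toLin' L).restrictScalars ℝ) = ‖L.det‖ ^ 2 := by
  rw [LinearMap.det_restrictScalars, LinearMap.det_toLin', Algebra.norm_complex_apply,
    Complex.normSq_eq_norm_sq]

theorem quasiMeasurePreserving_mulVec {L : Matrix ι ι ℂ} (hL : L.det ≠ 0) :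
    Measure.QuasiMeasurePreserving (fun v : ι → ℂ => L *ᵥ v) := by
  refine Measure.LinearMap.quasiMeasurePreserving volume
    ((Matrix.toLin' L).restrictScalars ℝ) ?_
  rw [det_toLin'_restrictScalars_real]
  positivity

theorem lintegral_comp_mulVec {L : Matrix ι ι ℂ} (hL : L.det ≠ 0) (f : (ι → ℂ) → ENNReal) :
    ∫⁻ v, f (L *ᵥ v) = ENNReal.ofReal ((‖L.det‖ ^ 2)⁻¹) * ∫⁻ v, f v := by
  have hemb : MeasurableEmbedding (fun v : ι → ℂ => L *ᵥ v) :=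
    (by fun_prop : Continuous _).measurableEmbedding
      (Matrix.mulVec_injective_of_isUnit ((Matrix.isUnit_iff_isUnit_det L).2 hL.isUnit))
  have hmap := Measure.map_linearMap_addHaar_eq_smul_addHaar (volume : Measure (ι → ℂ))
    (f := (Matrix.toLin' L).restrictScalars ℝ)
    (by rw [det_toLin'_restrictScalars_real]; positivity)
  rw [det_toLin'_restrictScalars_real, abs_of_nonneg (by positivity)] at hmap
  rw [← hemb.lintegral_map f, ← smul_eq_mul, ← lintegral_smul_measure, ← hmap]
  rfl

theorem lintegral_comp_sqrt_smul (s : Finset ι) {t : ℝ} (ht : 0 < t)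
    (f : (ι → ℂ) → ENNReal) :
    ∫⁻ x : ι → ℂ, f (fun i => if i ∈ s then √t * x i else x i) =
      ENNReal.ofReal (t ^ (-(s.card : ℝ))) * ∫⁻ x, f x := by
  set L : Matrix ι ι ℂ := diagonal fun i => if i ∈ s then (√t : ℂ) else 1 with hLdef
  have hdet : L.det = (√t : ℂ) ^ s.card := by
    rw [hLdef, det_diagonal, Finset.prod_ite_mem, Finset.univ_inter, Finset.prod_const]
  have hL : L.det ≠ 0 := by
    rw [hdet]; exact pow_ne_zero _ (by exact_mod_cast (Real.sqrt_pos.2 ht).ne')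
  have hnorm : ‖L.det‖ ^ 2 = t ^ s.card := by
    rw [hdet, norm_pow, Complex.norm_of_nonneg (Real.sqrt_nonneg t), ← pow_mul, mul_comm, pow_mul,
      Real.sq_sqrt ht.le]
  have hvec : ∀ x : ι → ℂ, L *ᵥ x = fun i => if i ∈ s then √t * x i else x i := fun x => by
    ext i
    rw [hLdef, mulVec_diagonal, ite_mul, one_mul]
  simpa only [hvec, hnorm, Real.rpow_neg ht.le, Real.rpow_natCast]
    using lintegral_comp_mulVec hL f

theorem sqSum_compl_sqrt_smul (s : Finset ι) (t : ℝ) (x : ι → ℂ) :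
    sqSum sᶜ (fun i => if i ∈ s then √t * x i else x i) = sqSum sᶜ x :=
  Finset.sum_congr rfl fun i hi => by simp only [if_neg (Finset.mem_compl.1 hi)]

theorem sqSum_univ_eq_add (s : Finset ι) (x : ι → ℂ) :
    sqSum Finset.univ x = sqSum sᶜ x + sqSum s x :=
  (Finset.sum_compl_add_sum s _).symm

end ChangeOfVariables

theorem radialIntegral_eq_succ_succ {s : Finset ι} (hs : s.Nonempty) {a b : ℝ}
    (ha : 0 < a + s.card) (hb : 0 < b) :
    radialIntegral s a b =
      ENNReal.ofReal (b / (a + s.card)) * radialIntegral s (a + 1) (b + 1) := by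
  classical
  refine lintegral_eq_of_superposition (g := fun x t => ENNReal.ofReal
    (sqSum s x ^ (a + 1) * (1 + sqSum sᶜ x + t * sqSum s x) ^ (-(b + 1)))) (by fun_prop) hb ha
    ?_ fun t ht => ?_
  · filter_upwards [ae_sqSum_pos hs] with x hx
    have hcompl := sqSum_nonneg sᶜ x
    simp_rw [ENNReal.ofReal_mul (Real.rpow_nonneg hx.le _)]
    rw [lintegral_const_mul _ (by fun_prop), lintegral_Ioi_affine_rpow (by positivity) hx hb,
      ← ENNReal.ofReal_mul (by positivity), ← ENNReal.ofReal_mul hb.le, radialWeight,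
      sqSum_univ_eq_add s, Real.rpow_add_one hx.ne', add_assoc]
    congr 1
    field_simp
  · have ht0 : 0 < t := one_pos.trans ht
    have hpt : ∀ x : ι → ℂ, ENNReal.ofReal (sqSum s x ^ (a + 1) *
          (1 + sqSum sᶜ x + t * sqSum s x) ^ (-(b + 1))) =
        ENNReal.ofReal (t ^ (-(a + 1))) * ENNReal.ofReal (radialWeight s (a + 1) (b + 1)
          (fun i => if i ∈ s then √t * x i else x i)) := fun x => by
      rw [← ENNReal.ofReal_mul (by positivity), radialWeight, sqSum_univ_eq_add s,
        sqSum_sqrt_smul_of_subset subset_rfl ht0.le, sqSum_compl_sqrt_smul,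
        Real.mul_rpow ht0.le (sqSum_nonneg _ _), ← mul_assoc, ← mul_assoc, ← Real.rpow_add ht0,
        neg_add_cancel, Real.rpow_zero, one_mul, add_assoc]
    simp_rw [hpt]
    rw [lintegral_const_mul' _ _ ENNReal.ofReal_ne_top,
      lintegral_comp_sqrt_smul s ht0 fun x => ENNReal.ofReal (radialWeight s (a + 1) (b + 1) x),
      ← mul_assoc, ← ENNReal.ofReal_mul (by positivity), ← Real.rpow_add ht0, radialIntegral]
    congr 3
    ring

theorem radialIntegral_eq_succ_right (s : Finset ι) {a b : ℝ} (hb : 0 < b)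
    (hab : a + Fintype.card ι < b) :
    radialIntegral s a b =
      ENNReal.ofReal (b / (b - a - Fintype.card ι)) * radialIntegral s a (b + 1) := by
  classical
  refine lintegral_eq_of_superposition (g := fun x t => ENNReal.ofReal
    (sqSum s x ^ a * (sqSum Finset.univ x + t * 1) ^ (-(b + 1)))) (by fun_prop) hb
    (by linarith) (.of_forall fun x => ?_) fun t ht => ?_
  · have h0 := sqSum_nonneg s x
    simp_rw [ENNReal.ofReal_mul (Real.rpow_nonneg h0 _)]
    rw [lintegral_const_mul _ (by fun_prop),
      lintegral_Ioi_affine_rpow (sqSum_nonneg _ _) one_pos hb,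
      ← ENNReal.ofReal_mul (by positivity), ← ENNReal.ofReal_mul hb.le, radialWeight, add_comm 1]
    congr 1
    field_simp
  · have ht0 : 0 < t := one_pos.trans ht
    have hpt : ∀ x : ι → ℂ, ENNReal.ofReal (radialWeight s a (b + 1) x) =
        ENNReal.ofReal (t ^ (b + 1 - a)) * ENNReal.ofReal
          ((sqSum s fun i => if i ∈ Finset.univ then √t * x i else x i) ^ a *
            ((sqSum Finset.univ fun i => if i ∈ Finset.univ then √t * x i else x i) + t * 1) ^
              (-(b + 1))) := fun x => by
      have h0 := sqSum_nonneg Finset.univ x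
      rw [← ENNReal.ofReal_mul (by positivity), radialWeight,
        sqSum_sqrt_smul_of_subset s.subset_univ ht0.le, sqSum_sqrt_smul_of_subset subset_rfl ht0.le,
        ← mul_add, add_comm (sqSum Finset.univ x) 1, Real.mul_rpow ht0.le (sqSum_nonneg _ _),
        Real.mul_rpow ht0.le (by positivity), mul_mul_mul_comm, ← mul_assoc, ← Real.rpow_add ht0,
        ← Real.rpow_add ht0, show b + 1 - a + (a + -(b + 1)) = 0 by ring, Real.rpow_zero, one_mul]
    rw [radialIntegral]
    simp_rw [hpt]
    rw [lintegral_const_mul' _ _ ENNReal.ofReal_ne_top,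
      lintegral_comp_sqrt_smul Finset.univ ht0 fun x => ENNReal.ofReal
        (sqSum s x ^ a * (sqSum Finset.univ x + t * 1) ^ (-(b + 1))), ← mul_assoc, ← mul_assoc,
      ← ENNReal.ofReal_mul (by positivity), ← ENNReal.ofReal_mul (by positivity),
      ← Real.rpow_add ht0, ← Real.rpow_add ht0, Finset.card_univ, show
        -(b - a - Fintype.card ι + 1) + (b + 1 - a) + -(Fintype.card ι : ℝ) = 0 by ring,
      Real.rpow_zero, ENNReal.ofReal_one, one_mul]

theorem radialIntegral_succ_left {s : Finset ι} (hs : s.Nonempty) {a b : ℝ}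
    (ha : 0 < a + s.card) (hab : a + 1 + Fintype.card ι < b) :
    radialIntegral s (a + 1) b =
      ENNReal.ofReal ((a + s.card) / (b - (a + 1) - Fintype.card ι)) * radialIntegral s a b := by
  have hcard : (s.card : ℝ) ≤ Fintype.card ι := by exact_mod_cast s.card_le_univ
  have hb : 0 < b := by linarith
  have hden : 0 < b - (a + 1) - Fintype.card ι := by linarith
  rw [radialIntegral_eq_succ_right s hb hab, radialIntegral_eq_succ_succ hs ha hb, ← mul_assoc,
    ← ENNReal.ofReal_mul (by positivity)]
  congr 2
  field_simp

theorem radialIntegral_ne_top {s : Finset ι} (hs : s.Nonempty) {a b : ℝ}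
    (ha : 0 < a + s.card) (hab : a + Fintype.card ι < b) : radialIntegral s a b ≠ ⊤ := by
  have hcard : (s.card : ℝ) ≤ Fintype.card ι := by exact_mod_cast s.card_le_univ
  obtain ⟨k, hk⟩ := exists_nat_gt (-a)
  induction k generalizing a b with
  | zero =>
    have ha0 : 0 ≤ a := by simpa using hk.le
    have hr : (Module.finrank ℝ (ι → ℂ) : ℝ) < 2 * (b - a) := by
      rw [Module.finrank_pi_fintype]
      simp only [Complex.finrank_real_complex, Finset.sum_const, Finset.card_univ, smul_eq_mul]
      push_cast; linarith
    refine ((integrable_rpow_neg_one_add_norm_sq (μ := volume) hr).lintegral_lt_top.trans_le'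
      (lintegral_mono fun x => ENNReal.ofReal_le_ofReal ?_)).ne
    have h0 := sqSum_nonneg s x
    have hle := sqSum_le_sqSum_univ s x
    have hpos : 0 < 1 + sqSum Finset.univ x := by linarith
    calc radialWeight s a b x
        ≤ (1 + sqSum Finset.univ x) ^ a * (1 + sqSum Finset.univ x) ^ (-b) := by
          unfold radialWeight; gcongr; linarith
      _ = (1 + sqSum Finset.univ x) ^ (-(2 * (b - a)) / 2) := by
          rw [← Real.rpow_add hpos]; congr 1; ring
      _ ≤ (1 + ‖x‖ ^ 2) ^ (-(2 * (b - a)) / 2) :=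
          Real.rpow_le_rpow_of_nonpos (by positivity) (by linarith [norm_sq_le_sqSum_univ x])
            (by linarith [(Fintype.card ι).cast_nonneg (α := ℝ)])
  | succ k ih =>
    push_cast at hk
    rw [radialIntegral_eq_succ_succ hs ha (by linarith)]
    exact ENNReal.mul_ne_top ENNReal.ofReal_ne_top
      (ih (by linarith) (by linarith) (by linarith))

theorem radialIntegral_congr_card {s t : Finset ι} (h : s.card = t.card) (a b : ℝ) :
    radialIntegral s a b = radialIntegral t a b := by
  obtain ⟨σ, rfl⟩ := Equiv.Perm.exists_map_finset_eq s t h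
  have hcomp : ∀ (u : Finset ι) (x : ι → ℂ), sqSum (u.map σ.toEmbedding) x = sqSum u (x ∘ σ) :=
    fun u x => Finset.sum_map _ _ _
  have hweight : ∀ x : ι → ℂ, radialWeight s a b (x ∘ σ) =
      radialWeight (s.map σ.toEmbedding) a b x := fun x => by
    rw [radialWeight, radialWeight, ← hcomp, ← hcomp, Finset.map_univ_equiv]
  simp only [radialIntegral, ← hweight]
  exact ((volume_measurePreserving_piCongrLeft (fun _ => ℂ) σ).symm.lintegral_comp
    (measurable_radialWeight s a b).ennreal_ofReal).symm

end RadialIntegrals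

section Quaternionic

open scoped Kronecker

variable {ρ σ κ : Type*}

/-- The block diagonal matrix with blocks `[[0, 1], [-1, 0]]`, through which quaternionic matrices
are characterised among complex ones. -/
noncomputable def symplecticUnit (κ : Type*) [DecidableEq κ] : Matrix (κ × Fin 2) (κ × Fin 2) ℂ :=
  (1 : Matrix κ κ ℂ) ⊗ₖ !![0, 1; -1, 0]

/-- `M` is the complex representation of a quaternion matrix, that is, all its `2 × 2` blocks have
the form `[[z, w], [-conj w, conj z]]`. -/
def IsQuaternionic [Fintype ρ] [Fintype κ] [DecidableEq ρ] [DecidableEq κ]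
    (M : Matrix (ρ × Fin 2) (κ × Fin 2) ℂ) : Prop :=
  M * symplecticUnit κ = symplecticUnit ρ * Mᴴᵀ

/-- The complex representation of the quaternion matrix whose entries have first complex rows
`(X a (b, 0), X a (b, 1))`. -/
noncomputable def quatRows (X : ρ → κ × Fin 2 → ℂ) : Matrix (ρ × Fin 2) (κ × Fin 2) ℂ :=
  of fun p q => if p.2 = 0 then X p.1 q else if q.2 = 0 then -star (X p.1 (q.1, 1))
    else star (X p.1 (q.1, 0))

theorem continuous_quatRows : Continuous (quatRows : (ρ → κ × Fin 2 → ℂ) → _) := by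
  refine continuous_matrix fun p q => ?_
  simp only [quatRows, of_apply]
  split_ifs <;> fun_prop

variable [DecidableEq κ]

theorem transpose_symplecticUnit : (symplecticUnit κ)ᵀ = -symplecticUnit κ := by
  ext ⟨i, s⟩ ⟨j, r⟩
  fin_cases s <;> fin_cases r <;> simp [symplecticUnit, one_apply, eq_comm]

variable [Fintype κ]

theorem symplecticUnit_apply_mul (M : Matrix (κ × Fin 2) σ ℂ) (b : κ) (q : σ) :
    (symplecticUnit κ * M) (b, 0) q = M (b, 1) q ∧
      (symplecticUnit κ * M) (b, 1) q = -M (b, 0) q := by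
  simp [symplecticUnit, mul_apply, Fintype.sum_prod_type, one_apply]

theorem mul_symplecticUnit_apply (M : Matrix σ (κ × Fin 2) ℂ) (q : σ) (b : κ) :
    (M * symplecticUnit κ) q (b, 0) = -M q (b, 1) ∧
      (M * symplecticUnit κ) q (b, 1) = M q (b, 0) := by
  simp [symplecticUnit, mul_apply, Fintype.sum_prod_type, one_apply]

variable [Fintype ρ] [Fintype σ] [DecidableEq ρ] [DecidableEq σ]

theorem isQuaternionic_iff {M : Matrix (ρ × Fin 2) (κ × Fin 2) ℂ} :
    IsQuaternionic M ↔ ∀ a b, M (a, 1) (b, 0) = -star (M (a, 0) (b, 1)) ∧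
      M (a, 1) (b, 1) = star (M (a, 0) (b, 0)) := by
  simp only [IsQuaternionic, ← Matrix.ext_iff, Prod.forall, Fin.forall_fin_two,
    symplecticUnit_apply_mul, mul_symplecticUnit_apply, transpose_apply, conjTranspose_apply]
  refine ⟨fun h a b => ⟨(h a).2 b |>.2, neg_inj.1 ((h a).2 b).1⟩, fun h a => ⟨fun b => ?_, fun b =>
    ⟨congrArg Neg.neg (h a b).2, (h a b).1⟩⟩⟩
  simp [h a b]

theorem isQuaternionic_quatRows (X : ρ → κ × Fin 2 → ℂ) : IsQuaternionic (quatRows X) :=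
  isQuaternionic_iff.2 fun a b => by simp [quatRows]

namespace IsQuaternionic

variable {M : Matrix (ρ × Fin 2) (κ × Fin 2) ℂ}

theorem one : IsQuaternionic (1 : Matrix (κ × Fin 2) (κ × Fin 2) ℂ) := by
  simp [IsQuaternionic]

theorem mul {N : Matrix (κ × Fin 2) (σ × Fin 2) ℂ} (hM : IsQuaternionic M)
    (hN : IsQuaternionic N) : IsQuaternionic (M * N) := by
  rw [IsQuaternionic, Matrix.mul_assoc, hN, ← Matrix.mul_assoc, hM, Matrix.mul_assoc,
    conjTranspose_mul, transpose_mul]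

theorem add {N : Matrix (ρ × Fin 2) (κ × Fin 2) ℂ} (hM : IsQuaternionic M)
    (hN : IsQuaternionic N) : IsQuaternionic (M + N) := by
  rw [IsQuaternionic, Matrix.add_mul, hM, hN, conjTranspose_add, transpose_add, Matrix.mul_add]

theorem sub {N : Matrix (ρ × Fin 2) (κ × Fin 2) ℂ} (hM : IsQuaternionic M)
    (hN : IsQuaternionic N) : IsQuaternionic (M - N) := by
  rw [IsQuaternionic, Matrix.sub_mul, hM, hN, conjTranspose_sub, transpose_sub, Matrix.mul_sub]

theorem ofReal_smul (hM : IsQuaternionic M) (t : ℝ) : IsQuaternionic ((t : ℂ) • M) := by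
  rw [IsQuaternionic, Matrix.smul_mul, hM, conjTranspose_smul, transpose_smul, Matrix.mul_smul,
    Complex.star_def, Complex.conj_ofReal]

theorem symplecticUnit_mul_transpose (hM : IsQuaternionic M) :
    symplecticUnit κ * Mᵀ = Mᴴ * symplecticUnit ρ := by
  have h := congrArg transpose hM
  rwa [transpose_mul, transpose_mul, transpose_symplecticUnit, transpose_symplecticUnit,
    transpose_transpose, Matrix.neg_mul, Matrix.mul_neg, neg_inj] at h

theorem conjTranspose (hM : IsQuaternionic M) : IsQuaternionic Mᴴ := by
  rw [IsQuaternionic, conjTranspose_conjTranspose, hM.symplecticUnit_mul_transpose]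

theorem inv {M : Matrix (κ × Fin 2) (κ × Fin 2) ℂ} (hM : IsQuaternionic M) (h : M.det ≠ 0) :
    IsQuaternionic M⁻¹ := by
  have hstar : IsUnit Mᴴᵀ.det := by
    rw [det_transpose, det_conjTranspose]; exact (star_ne_zero.2 h).isUnit
  have hMJ : M⁻¹ * (symplecticUnit κ * Mᴴᵀ) = symplecticUnit κ := by
    rw [← hM, ← Matrix.mul_assoc, nonsing_inv_mul _ h.isUnit, Matrix.one_mul]
  rw [IsQuaternionic, conjTranspose_nonsing_inv, transpose_nonsing_inv]
  nth_rw 2 [← hMJ]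
  rw [Matrix.mul_assoc, Matrix.mul_assoc, mul_nonsing_inv _ hstar, Matrix.mul_one]

theorem eq_smul_one_of_isHermitian {u : Type*} [Unique u] [Fintype u] [DecidableEq u]
    {M : Matrix (u × Fin 2) (u × Fin 2) ℂ} (hM : IsQuaternionic M) (hH : M.IsHermitian) :
    M = M (default, 0) (default, 0) • 1 := by
  obtain ⟨h10, h11⟩ := isQuaternionic_iff.1 hM default default
  have hself : star (M (default, 0) (default, 0)) = M (default, 0) (default, 0) :=
    hH.apply _ _
  have h01 : M (default, 0) (default, 1) = 0 := by
    have h := hH.apply (default, 1) (default, 0)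
    rw [h10] at h
    exact self_eq_neg.1 (star_injective (by simpa using h))
  have h10' : M (default, 1) (default, 0) = 0 := by rw [h10, h01, star_zero, neg_zero]
  ext ⟨a, s⟩ ⟨b, r⟩
  rw [Unique.eq_default a, Unique.eq_default b]
  fin_cases s <;> fin_cases r <;> simp [h01, h10', h11, hself]

end IsQuaternionic

end Quaternionic

section Gram

variable {τ σ ι ν : Type*} [Fintype ι] [DecidableEq τ]

theorem isHermitian_smul_one_add_gram (t : ℝ) (N : Matrix τ ι ℂ) :
    ((t : ℂ) • (1 : Matrix τ τ ℂ) + N * Nᴴ).IsHermitian := by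
  simp [IsHermitian]

variable [Fintype τ] [Fintype σ] [DecidableEq σ]

/-- The determinant of `t + N N†`, real because this matrix is Hermitian. -/
noncomputable def gramDet (t : ℝ) (N : Matrix τ ι ℂ) : ℝ :=
  ((t : ℂ) • (1 : Matrix τ τ ℂ) + N * Nᴴ).det.re

theorem ofReal_gramDet (t : ℝ) (N : Matrix τ ι ℂ) :
    (gramDet t N : ℂ) = ((t : ℂ) • (1 : Matrix τ τ ℂ) + N * Nᴴ).det := by
  refine Complex.conj_eq_iff_re.1 ?_
  rw [← Complex.star_def, ← det_conjTranspose, (isHermitian_smul_one_add_gram t N).eq]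

open scoped ComplexOrder in
theorem gramDet_nonneg {t : ℝ} (ht : 0 ≤ t) (N : Matrix τ ι ℂ) : 0 ≤ gramDet t N :=
  (Complex.nonneg_iff.1 ((PosSemidef.one.smul (by exact_mod_cast ht)).add
    (posSemidef_self_mul_conjTranspose N)).det_nonneg).1

open scoped ComplexOrder in
theorem gramDet_pos {t : ℝ} (ht : 0 < t) (N : Matrix τ ι ℂ) : 0 < gramDet t N :=
  (Complex.pos_iff.1 ((PosDef.one.smul (by exact_mod_cast ht)).add_posSemidef
    (posSemidef_self_mul_conjTranspose N)).det_pos).1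

theorem ofReal_gramDet_zero (N : Matrix τ ι ℂ) : (gramDet 0 N : ℂ) = (N * Nᴴ).det := by
  rw [ofReal_gramDet, Complex.ofReal_zero, zero_smul, zero_add]

open scoped ComplexOrder in
theorem gramDet_zero_submatrix_ne_zero {N : Matrix τ ι ℂ} (h : gramDet 0 N ≠ 0) {f : σ → τ}
    (hf : Function.Injective f) : gramDet 0 (N.submatrix f id) ≠ 0 := by
  have hpos : (N * Nᴴ).PosDef := by
    rw [(posSemidef_self_mul_conjTranspose N).posDef_iff_isUnit, isUnit_iff_isUnit_det,
      ← ofReal_gramDet_zero]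
    exact (Complex.ofReal_ne_zero.2 h).isUnit
  have hsub : (gramDet 0 (N.submatrix f id) : ℂ) = ((N * Nᴴ).submatrix f f).det :=
    ofReal_gramDet_zero _
  exact Complex.ofReal_ne_zero.1 (hsub ▸ (hpos.submatrix hf).det_pos.ne')

theorem gramDet_submatrix_equiv (t : ℝ) [Fintype ν] (N : Matrix τ ι ℂ) (e : σ ≃ τ)
    (f : ν ≃ ι) :
    gramDet t (N.submatrix e f) = gramDet t N := by
  have h : (t : ℂ) • (1 : Matrix σ σ ℂ) + N.submatrix e f * (N.submatrix e f)ᴴ =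
      ((t : ℂ) • (1 : Matrix τ τ ℂ) + N * Nᴴ).submatrix e e := by
    rw [conjTranspose_submatrix, submatrix_mul_equiv, ← submatrix_one_equiv e]
    rfl
  rw [gramDet, h, det_submatrix_equiv_self, gramDet]

theorem gramDet_mul_of_conjTranspose_mul_self {D : Matrix τ τ ℂ} (hD : Dᴴ * D = 1) (t : ℝ)
    (N : Matrix τ ι ℂ) : gramDet t (D * N) = gramDet t N := by
  have h : (t : ℂ) • (1 : Matrix τ τ ℂ) + D * N * (D * N)ᴴ =
      D * ((t : ℂ) • (1 : Matrix τ τ ℂ) + N * Nᴴ) * Dᴴ := by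
    rw [Matrix.mul_add, Matrix.add_mul, Matrix.mul_smul, Matrix.smul_mul, Matrix.mul_one,
      mul_eq_one_comm.1 hD, conjTranspose_mul]
    simp only [Matrix.mul_assoc]
  rw [gramDet, h, det_mul_comm, ← Matrix.mul_assoc, hD, Matrix.one_mul, gramDet]

theorem continuous_gramDet (t : ℝ) : Continuous (gramDet t : Matrix τ ι ℂ → ℝ) := by
  unfold gramDet; fun_prop

variable [DecidableEq ι]

theorem gramDet_one_conjTranspose (N : Matrix τ ι ℂ) : gramDet 1 Nᴴ = gramDet 1 N := by
  rw [gramDet, gramDet, Complex.ofReal_one, one_smul, one_smul, conjTranspose_conjTranspose,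
    det_one_add_mul_comm]

theorem gramDet_zero_of_square (N : Matrix τ τ ℂ) : gramDet 0 N = ‖N.det‖ ^ 2 := by
  have h : (gramDet 0 N : ℂ) = ((‖N.det‖ ^ 2 : ℝ) : ℂ) := by
    rw [ofReal_gramDet_zero, det_mul, det_conjTranspose]
    push_cast
    exact Complex.mul_conj' _
  exact_mod_cast h

/-- The matrix `1 - N† (t + N N†)⁻¹ N`: the orthogonal projection onto the kernel of `N` when
`t = 0` and `N N†` is invertible, and `t (t + N† N)⁻¹` when `t > 0`. -/
noncomputable def regKerProj (t : ℝ) (N : Matrix τ ι ℂ) : Matrix ι ι ℂ :=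
  1 - Nᴴ * ((t : ℂ) • (1 : Matrix τ τ ℂ) + N * Nᴴ)⁻¹ * N

theorem isHermitian_regKerProj (t : ℝ) (N : Matrix τ ι ℂ) : (regKerProj t N).IsHermitian := by
  rw [IsHermitian, regKerProj, conjTranspose_sub, conjTranspose_one, conjTranspose_mul,
    conjTranspose_mul, conjTranspose_conjTranspose, conjTranspose_nonsing_inv,
    (isHermitian_smul_one_add_gram t N).eq, Matrix.mul_assoc]

theorem regKerProj_mul_conjTranspose {t : ℝ} {N : Matrix τ ι ℂ} (h : gramDet t N ≠ 0) :
    regKerProj t N * Nᴴ = (t : ℂ) • (Nᴴ * ((t : ℂ) • (1 : Matrix τ τ ℂ) + N * Nᴴ)⁻¹) := by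
  have hunit : IsUnit ((t : ℂ) • (1 : Matrix τ τ ℂ) + N * Nᴴ).det := by
    rw [← ofReal_gramDet]; exact (Complex.ofReal_ne_zero.2 h).isUnit
  set D := (t : ℂ) • (1 : Matrix τ τ ℂ) + N * Nᴴ with hD
  calc regKerProj t N * Nᴴ = Nᴴ - Nᴴ * D⁻¹ * (D - (t : ℂ) • 1) := by
        rw [regKerProj, ← hD, Matrix.sub_mul, Matrix.one_mul, Matrix.mul_assoc _ N, hD,
          add_sub_cancel_left]
    _ = (t : ℂ) • (Nᴴ * D⁻¹) := by
        rw [Matrix.mul_sub, Matrix.mul_assoc, nonsing_inv_mul _ hunit, Matrix.mul_one,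
          Matrix.mul_smul, Matrix.mul_one, sub_sub_cancel]

theorem regKerProj_zero_mul_self {N : Matrix τ ι ℂ} (h : gramDet 0 N ≠ 0) :
    regKerProj 0 N * regKerProj 0 N = regKerProj 0 N := by
  have hker : regKerProj 0 N * Nᴴ = 0 := by
    rw [regKerProj_mul_conjTranspose h, Complex.ofReal_zero, zero_smul]
  nth_rw 2 [regKerProj]
  rw [Matrix.mul_sub, Matrix.mul_one, ← Matrix.mul_assoc, ← Matrix.mul_assoc, hker,
    Matrix.zero_mul, Matrix.zero_mul, sub_zero]

theorem gramDet_fromRows {t : ℝ} (C : Matrix σ ι ℂ) {N : Matrix τ ι ℂ} (h : gramDet t N ≠ 0) :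
    (gramDet t (C.fromRows N) : ℂ) =
      gramDet t N * ((t : ℂ) • (1 : Matrix σ σ ℂ) + C * regKerProj t N * Cᴴ).det := by
  have hdet : ((t : ℂ) • (1 : Matrix τ τ ℂ) + N * Nᴴ).det ≠ 0 := by
    rw [← ofReal_gramDet]; exact_mod_cast h
  let := invertibleOfIsUnitDet _ hdet.isUnit
  have hblocks : (t : ℂ) • (1 : Matrix (σ ⊕ τ) (σ ⊕ τ) ℂ) + C.fromRows N * (C.fromRows N)ᴴ =
      fromBlocks ((t : ℂ) • 1 + C * Cᴴ) (C * Nᴴ) (N * Cᴴ) ((t : ℂ) • 1 + N * Nᴴ) := by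
    rw [conjTranspose_fromRows_eq_fromCols_conjTranspose, fromRows_mul_fromCols,
      ← fromBlocks_one, fromBlocks_smul, fromBlocks_add]
    simp
  rw [ofReal_gramDet, hblocks, det_fromBlocks₂₂, invOf_eq_nonsing_inv, ofReal_gramDet,
    regKerProj, Matrix.mul_sub, Matrix.sub_mul, Matrix.mul_one, add_sub_assoc]
  simp only [Matrix.mul_assoc]

end Gram

section Spectral

variable {τ ι : Type*} [Fintype τ] [Fintype ι] [DecidableEq ι]

open scoped ComplexOrder in
theorem exists_unitary_diagonalization_gram (N : Matrix τ ι ℂ) :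
    ∃ (U : Matrix ι ι ℂ) (d : ι → ℝ), Uᴴ * U = 1 ∧ (∀ i, 0 ≤ d i) ∧
      Nᴴ * N = U * diagonal (fun i => (d i : ℂ)) * Uᴴ := by
  have hH := posSemidef_conjTranspose_mul_self N
  refine ⟨hH.1.eigenvectorUnitary, hH.1.eigenvalues, ?_, hH.eigenvalues_nonneg, ?_⟩
  · exact Unitary.coe_star_mul_self hH.1.eigenvectorUnitary
  · conv_lhs => rw [hH.1.spectral_theorem, Unitary.conjStarAlgAut_apply]
    rfl

variable {N : Matrix τ ι ℂ} {U : Matrix ι ι ℂ} {d : ι → ℝ}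

open scoped ComplexOrder in
theorem mul_apply_eq_zero_of_eigenvalue_eq_zero (hU : Uᴴ * U = 1)
    (hN : Nᴴ * N = U * diagonal (fun i => (d i : ℂ)) * Uᴴ) {i : ι} (hi : d i = 0) (k : τ) :
    (N * U) k i = 0 := by
  have hgram : (N * U)ᴴ * (N * U) = diagonal fun i => (d i : ℂ) := by
    calc (N * U)ᴴ * (N * U) = Uᴴ * (Nᴴ * N) * U := by
          simp only [conjTranspose_mul, Matrix.mul_assoc]
      _ = (Uᴴ * U) * diagonal (fun i => (d i : ℂ)) * (Uᴴ * U) := by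
          rw [hN]; simp only [Matrix.mul_assoc]
      _ = _ := by rw [hU, Matrix.one_mul, Matrix.mul_one]
  have hcol : star ((N * U).col i) ⬝ᵥ (N * U).col i = 0 := by
    have := congr_fun₂ hgram i i
    rwa [diagonal_apply_eq, hi, Complex.ofReal_zero] at this
  exact congr_fun (dotProduct_star_self_eq_zero.1 hcol) k

variable [DecidableEq τ]

theorem gramDet_one_eq_prod (hU : Uᴴ * U = 1)
    (hN : Nᴴ * N = U * diagonal (fun i => (d i : ℂ)) * Uᴴ) :
    gramDet 1 N = ∏ i, (1 + d i) := by
  have h : (gramDet 1 N : ℂ) = ((∏ i, (1 + d i) : ℝ) : ℂ) := by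
    rw [ofReal_gramDet, Complex.ofReal_one, one_smul, det_one_add_mul_comm, hN,
      Matrix.mul_assoc, det_one_add_mul_comm, Matrix.mul_assoc, hU, Matrix.mul_one,
      ← diagonal_one, diagonal_add, det_diagonal]
    push_cast
    rfl
  exact_mod_cast h

theorem regKerProj_eq_unitary_conj {t : ℝ} (ht : 0 ≤ t) (h : gramDet t N ≠ 0)
    (hU : Uᴴ * U = 1) (hd : ∀ i, 0 ≤ d i)
    (hN : Nᴴ * N = U * diagonal (fun i => (d i : ℂ)) * Uᴴ) :
    regKerProj t N =
      U * diagonal (fun i => ((if d i = 0 then 1 else t / (t + d i) : ℝ) : ℂ)) * Uᴴ := by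
  set D := (t : ℂ) • (1 : Matrix τ τ ℂ) + N * Nᴴ
  have hPU : regKerProj t N * U = U - Nᴴ * D⁻¹ * (N * U) := by
    rw [regKerProj, Matrix.sub_mul, Matrix.one_mul, Matrix.mul_assoc _ N]
  have hPUd : regKerProj t N * U * diagonal (fun i => (d i : ℂ)) =
      (t : ℂ) • (U - regKerProj t N * U) := by
    calc regKerProj t N * U * diagonal (fun i => (d i : ℂ))
        = regKerProj t N * (U * diagonal (fun i => (d i : ℂ)) * Uᴴ) * U := by
          rw [Matrix.mul_assoc, Matrix.mul_assoc, Matrix.mul_assoc (U * _), hU, Matrix.mul_one]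
      _ = regKerProj t N * Nᴴ * (N * U) := by
          rw [← hN]; simp only [Matrix.mul_assoc]
      _ = (t : ℂ) • (U - regKerProj t N * U) := by
          rw [regKerProj_mul_conjTranspose h, Matrix.smul_mul, hPU, sub_sub_cancel]
  have hcol : regKerProj t N * U =
      U * diagonal (fun i => ((if d i = 0 then 1 else t / (t + d i) : ℝ) : ℂ)) := by
    ext k i
    rw [mul_diagonal]
    split_ifs with hi
    · rw [hPU, Matrix.sub_apply, mul_apply]
      simp [mul_apply_eq_zero_of_eigenvalue_eq_zero hU hN hi]
    · have hne : (t : ℂ) + d i ≠ 0 := by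
        exact_mod_cast (add_pos_of_nonneg_of_pos ht ((hd i).lt_of_ne' hi)).ne'
      have := congr_fun₂ hPUd k i
      rw [mul_diagonal, Matrix.smul_apply, Matrix.sub_apply, smul_eq_mul] at this
      push_cast
      field_simp
      linear_combination this
  rw [← hcol, Matrix.mul_assoc, mul_eq_one_comm.1 hU, Matrix.mul_one]

theorem vecMul_unitary_conj_dotProduct_star (p : ι → ℝ) (c : ι → ℂ) :
    c ᵥ* (U * diagonal (fun i => (p i : ℂ)) * Uᴴ) ⬝ᵥ star c =
      ((∑ i, p i * ‖(Uᵀ *ᵥ c) i‖ ^ 2 : ℝ) : ℂ) := by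
  rw [← vecMul_vecMul, ← vecMul_vecMul, ← dotProduct_mulVec, ← star_vecMul, mulVec_transpose]
  simp only [dotProduct, vecMul_diagonal, Pi.star_apply]
  push_cast
  refine Finset.sum_congr rfl fun i _ => ?_
  rw [mul_comm ((c ᵥ* U) i), mul_assoc]
  congr 1
  exact Complex.mul_conj' _

open scoped ComplexOrder in
theorem card_eigenvalue_eq_zero_add_card (h : gramDet 0 N ≠ 0) (hU : Uᴴ * U = 1)
    (hN : Nᴴ * N = U * diagonal (fun i => (d i : ℂ)) * Uᴴ) :
    (Finset.univ.filter fun i => d i = 0).card + Fintype.card τ = Fintype.card ι := by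
  have hUu : IsUnit U.det := isUnit_det_of_left_inverse hU
  have hUu' : IsUnit Uᴴ.det := isUnit_det_of_right_inverse hU
  have hrank : (diagonal fun i => (d i : ℂ)).rank = Fintype.card τ := by
    rw [← rank_mul_eq_right_of_isUnit_det _ _ hUu, ← rank_mul_eq_left_of_isUnit_det _ _ hUu', ← hN,
      rank_conjTranspose_mul_self, ← rank_self_mul_conjTranspose, rank_of_isUnit]
    rw [isUnit_iff_isUnit_det]
    simpa [ofReal_gramDet] using (Complex.ofReal_ne_zero.2 h).isUnit
  rw [rank_diagonal, Fintype.card_subtype] at hrank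
  simp only [ne_eq, Complex.ofReal_eq_zero] at hrank
  rw [← hrank, Finset.card_filter_add_card_filter_not, Finset.card_univ]

theorem exists_simultaneous_diagonalization_regKerProj (h : gramDet 0 N ≠ 0) :
    ∃ (L : Matrix ι ι ℂ) (Z : Finset ι), Z.card + Fintype.card τ = Fintype.card ι ∧
      ‖L.det‖ ^ 2 * gramDet 1 N = 1 ∧
      (∀ c, c ᵥ* regKerProj 0 N ⬝ᵥ star c = sqSum Z (L *ᵥ c)) ∧
      ∀ c, c ᵥ* regKerProj 1 N ⬝ᵥ star c = sqSum Finset.univ (L *ᵥ c) := by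
  obtain ⟨U, d, hU, hd, hN⟩ := exists_unitary_diagonalization_gram N
  have h1d : ∀ i, 0 < 1 + d i := fun i => by linarith [hd i]
  set L : Matrix ι ι ℂ := diagonal (fun i => ((√(1 + d i))⁻¹ : ℂ)) * Uᵀ with hL
  have hLapply : ∀ c i, ‖(L *ᵥ c) i‖ ^ 2 = (1 + d i)⁻¹ * ‖(Uᵀ *ᵥ c) i‖ ^ 2 := fun c i => by
    rw [hL, ← mulVec_mulVec, mulVec_diagonal, norm_mul, mul_pow, norm_inv, inv_pow,
      Complex.norm_of_nonneg (Real.sqrt_nonneg _), Real.sq_sqrt (h1d i).le]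
  refine ⟨L, Finset.univ.filter fun i => d i = 0, card_eigenvalue_eq_zero_add_card h hU hN, ?_,
    fun c => ?_, fun c => ?_⟩
  · have hUdet : ‖U.det‖ ^ 2 = 1 := by
      rw [← gramDet_zero_of_square, gramDet, mul_eq_one_comm.1 hU]
      simp
    have hprod : ∏ i, ((√(1 + d i))⁻¹) ^ 2 * (1 + d i) = 1 := Finset.prod_eq_one fun i _ => by
      rw [inv_pow, Real.sq_sqrt (h1d i).le, inv_mul_cancel₀ (h1d i).ne']
    rw [Finset.prod_mul_distrib, Finset.prod_pow] at hprod
    rw [hL, det_mul, det_transpose, det_diagonal, norm_mul, mul_pow, hUdet, mul_one,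
      gramDet_one_eq_prod hU hN, norm_prod]
    simpa only [norm_inv, Complex.norm_of_nonneg (Real.sqrt_nonneg _)] using hprod
  · rw [regKerProj_eq_unitary_conj le_rfl h hU hd hN, vecMul_unitary_conj_dotProduct_star, sqSum,
      Finset.sum_filter]
    congr 1
    refine Finset.sum_congr rfl fun i _ => ?_
    rw [hLapply]
    split_ifs with hi <;> simp [hi]
  · rw [regKerProj_eq_unitary_conj zero_le_one (gramDet_pos one_pos N).ne' hU hd hN,
      vecMul_unitary_conj_dotProduct_star, sqSum]
    congr 1
    refine Finset.sum_congr rfl fun i _ => ?_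
    rw [hLapply]
    split_ifs with hi <;> simp [hi]

end Spectral

section GramBounds

variable {σ τ ι υ : Type*} [Fintype τ] [DecidableEq τ] [Fintype ι]

theorem one_le_gramDet_one (N : Matrix τ ι ℂ) : 1 ≤ gramDet 1 N := by
  classical
  obtain ⟨U, d, hU, hd, hN⟩ := exists_unitary_diagonalization_gram N
  rw [gramDet_one_eq_prod hU hN]
  exact Finset.one_le_prod fun i _ => by linarith [hd i]

theorem sq_norm_det_le_gramDet_one (N : Matrix τ τ ℂ) : ‖N.det‖ ^ 2 ≤ gramDet 1 N := by
  by_cases h : N.det = 0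
  · rw [h, norm_zero, zero_pow two_ne_zero]
    exact zero_le_one.trans (one_le_gramDet_one N)
  have hN : N * N⁻¹ = 1 := mul_nonsing_inv _ (Ne.isUnit h)
  have hfactor : (1 : Matrix τ τ ℂ) + N * Nᴴ = N * (1 + N⁻¹ * N⁻¹ᴴ) * Nᴴ := by
    rw [Matrix.mul_add, ← Matrix.mul_assoc N N⁻¹, hN, Matrix.mul_one, Matrix.one_mul,
      Matrix.add_mul, ← conjTranspose_mul, hN, conjTranspose_one, add_comm]
  have hdet : gramDet 1 N = ‖N.det‖ ^ 2 * gramDet 1 N⁻¹ := by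
    rw [← gramDet_zero_of_square]
    apply Complex.ofReal_injective
    push_cast
    rw [ofReal_gramDet_zero, ofReal_gramDet, ofReal_gramDet, Complex.ofReal_one, one_smul, hfactor,
      det_mul, det_mul, det_mul, mul_right_comm]
  exact hdet ▸ le_mul_of_one_le_right (sq_nonneg _) (one_le_gramDet_one _)

open scoped ComplexOrder in
theorem posSemidef_regKerProj_one [DecidableEq ι] (N : Matrix τ ι ℂ) :
    (regKerProj 1 N).PosSemidef := by
  have h := regKerProj_mul_conjTranspose (gramDet_pos one_pos N).ne'
  have hinv : regKerProj 1 N * (1 + Nᴴ * N) = 1 := by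
    rw [Matrix.mul_add, Matrix.mul_one, ← Matrix.mul_assoc, h, Complex.ofReal_one, one_smul,
      regKerProj, Complex.ofReal_one, sub_add_cancel]
  rw [← inv_eq_left_inv hinv]
  exact (PosDef.one.add_posSemidef (posSemidef_conjTranspose_mul_self N)).inv.posSemidef

open scoped MatrixOrder Matrix.Norms.L2Operator in
theorem gramDet_one_le_gramDet_one_fromRows [Fintype σ] [DecidableEq σ] (C : Matrix σ ι ℂ)
    (N : Matrix τ ι ℂ) : gramDet 1 N ≤ gramDet 1 (C.fromRows N) := by
  classical
  obtain ⟨B, hB⟩ := CStarAlgebra.nonneg_iff_eq_star_mul_self.1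
    (posSemidef_regKerProj_one N).nonneg
  have h : gramDet 1 (C.fromRows N) = gramDet 1 N * gramDet 1 (C * Bᴴ) := by
    apply Complex.ofReal_injective
    push_cast
    rw [gramDet_fromRows C (gramDet_pos one_pos N).ne', hB, star_eq_conjTranspose,
      ofReal_gramDet (N := C * Bᴴ), conjTranspose_mul, conjTranspose_conjTranspose]
    simp only [Matrix.mul_assoc]
  exact h ▸ le_mul_of_one_le_right (gramDet_nonneg zero_le_one N) (one_le_gramDet_one _)

theorem gramDet_one_submatrix_le [Fintype σ] [DecidableEq σ] (N : Matrix τ ι ℂ) {f : σ → τ}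
    (hf : Function.Injective f) : gramDet 1 (N.submatrix f id) ≤ gramDet 1 N := by
  classical
  let e : {x // x ∉ Set.range f} ⊕ σ ≃ τ := ((Equiv.sumComm _ _).trans
    ((Equiv.ofInjective f hf).sumCongr (Equiv.refl _))).trans (Equiv.sumCompl _)
  rw [← gramDet_submatrix_equiv 1 N e (Equiv.refl ι),
    show N.submatrix e (Equiv.refl ι) =
      (N.submatrix Subtype.val id).fromRows (N.submatrix f id) by ext (_ | _) _ <;> rfl]
  exact gramDet_one_le_gramDet_one_fromRows _ _

theorem sq_norm_det_submatrix_le_gramDet_one [Fintype υ] [DecidableEq υ] (N : Matrix τ ι ℂ)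
    {f : υ → τ} {g : υ → ι} (hf : Function.Injective f) (hg : Function.Injective g) :
    ‖(N.submatrix f g).det‖ ^ 2 ≤ gramDet 1 N := by
  classical
  calc ‖(N.submatrix f g).det‖ ^ 2 ≤ gramDet 1 (N.submatrix f g) := sq_norm_det_le_gramDet_one _
    _ = gramDet 1 ((N.submatrix f id)ᴴ.submatrix g id) := by
      rw [← gramDet_one_conjTranspose, conjTranspose_submatrix, conjTranspose_submatrix,
        submatrix_submatrix]
      rfl
    _ ≤ gramDet 1 (N.submatrix f id)ᴴ := gramDet_one_submatrix_le _ hg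
    _ = gramDet 1 (N.submatrix f id) := gramDet_one_conjTranspose _
    _ ≤ gramDet 1 N := gramDet_one_submatrix_le N hf

end GramBounds

section RowExpansion

variable {τ ι ρ κ : Type*}

section

variable [Fintype τ] [DecidableEq τ] [Fintype ι]

/-- The function `det (N N†)^a det (1 + N N†)^{-b}`. -/
noncomputable def gramWeight (a b : ℝ) (N : Matrix τ ι ℂ) : ℝ :=
  gramDet 0 N ^ a * gramDet 1 N ^ (-b)

theorem gramWeight_nonneg (a b : ℝ) (N : Matrix τ ι ℂ) : 0 ≤ gramWeight a b N :=
  mul_nonneg (Real.rpow_nonneg (gramDet_nonneg le_rfl N) _)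
    (Real.rpow_nonneg (gramDet_nonneg zero_le_one N) _)

theorem gramWeight_pos {N : Matrix τ ι ℂ} (hN : gramDet 0 N ≠ 0) (a b : ℝ) :
    0 < gramWeight a b N :=
  mul_pos (Real.rpow_pos_of_pos ((gramDet_nonneg le_rfl N).lt_of_ne' hN) a)
    (Real.rpow_pos_of_pos (gramDet_pos one_pos N) _)

end

/-- The identification of the index type of the rows of a quaternion matrix with an extra row. -/
def optionRowsEquiv (ρ : Type*) : Option ρ × Fin 2 ≃ (Unit × Fin 2) ⊕ (ρ × Fin 2) :=
  (((Equiv.optionEquivSumPUnit ρ).trans (Equiv.sumComm _ _)).prodCongr (Equiv.refl _)).trans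
    (Equiv.sumProdDistrib _ _ _)

theorem quatRows_option (c : κ × Fin 2 → ℂ) (X : ρ → κ × Fin 2 → ℂ) :
    quatRows (fun o : Option ρ => o.elim c X) =
      ((quatRows fun _ : Unit => c).fromRows (quatRows X)).submatrix (optionRowsEquiv ρ)
        (Equiv.refl _) := by
  ext ⟨_ | i, s⟩ q <;> rfl

variable [Fintype ρ] [DecidableEq ρ] [Fintype κ]

theorem measurable_gramWeight_quatRows (a b : ℝ) :
    Measurable fun X : ρ → κ × Fin 2 → ℂ => gramWeight a b (quatRows X) :=
  (((continuous_gramDet 0).comp continuous_quatRows).measurable.pow_const _).mul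
    (((continuous_gramDet 1).comp continuous_quatRows).measurable.pow_const _)

theorem IsQuaternionic.regKerProj [DecidableEq κ] {t : ℝ} {N : Matrix (ρ × Fin 2) (κ × Fin 2) ℂ}
    (hN : IsQuaternionic N) (h : gramDet t N ≠ 0) : IsQuaternionic (regKerProj t N) := by
  refine .sub .one ((hN.conjTranspose.mul (.inv ((IsQuaternionic.one.ofReal_smul t).add
    (hN.mul hN.conjTranspose)) ?_)).mul hN)
  rw [← ofReal_gramDet]
  exact_mod_cast h

theorem gramDet_quatRows_option [DecidableEq κ] {t : ℝ} {X : ρ → κ × Fin 2 → ℂ}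
    (h : gramDet t (quatRows X) ≠ 0) (c : κ × Fin 2 → ℂ) :
    (gramDet t (quatRows fun o : Option ρ => o.elim c X) : ℂ) = gramDet t (quatRows X) *
      (t + c ᵥ* regKerProj t (quatRows X) ⬝ᵥ star c) ^ 2 := by
  set C := quatRows fun _ : Unit => c
  have hQ : IsQuaternionic C := isQuaternionic_quatRows _
  have hscalar := ((hQ.mul ((isQuaternionic_quatRows X).regKerProj h)).mul
    hQ.conjTranspose).eq_smul_one_of_isHermitian
      (isHermitian_mul_mul_conjTranspose C (isHermitian_regKerProj t _))
  have hentry : (C * regKerProj t (quatRows X) * Cᴴ) (default, 0) (default, 0) =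
      c ᵥ* regKerProj t (quatRows X) ⬝ᵥ star c := rfl
  rw [quatRows_option, gramDet_submatrix_equiv, gramDet_fromRows _ h, hscalar, hentry, ← add_smul,
    det_smul, det_one, mul_one]
  simp

/-- Adding a quaternion row multiplies both Gram determinants by squares of affine functions of
the squared norms of the row, in coordinates independent of the row. -/
theorem exists_gramDet_quatRows_option [DecidableEq κ] {X : ρ → κ × Fin 2 → ℂ}
    (h : gramDet 0 (quatRows X) ≠ 0) :
    ∃ (L : Matrix (κ × Fin 2) (κ × Fin 2) ℂ) (Z : Finset (κ × Fin 2)),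
      Z.card + 2 * Fintype.card ρ = 2 * Fintype.card κ ∧
      ‖L.det‖ ^ 2 * gramDet 1 (quatRows X) = 1 ∧
      (∀ c, gramDet 0 (quatRows fun o : Option ρ => o.elim c X) =
        gramDet 0 (quatRows X) * sqSum Z (L *ᵥ c) ^ 2) ∧
      ∀ c, gramDet 1 (quatRows fun o : Option ρ => o.elim c X) =
        gramDet 1 (quatRows X) * (1 + sqSum Finset.univ (L *ᵥ c)) ^ 2 := by
  obtain ⟨L, Z, hZ, hL, h0, h1⟩ := exists_simultaneous_diagonalization_regKerProj h
  refine ⟨L, Z, by simpa [mul_comm] using hZ, hL, fun c => ?_, fun c => ?_⟩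
  · have := gramDet_quatRows_option h c
    rw [h0, Complex.ofReal_zero, zero_add] at this
    exact_mod_cast this
  · have := gramDet_quatRows_option (gramDet_pos one_pos (quatRows X)).ne' c
    rw [h1] at this
    exact_mod_cast this

theorem ae_gramDet_quatRows_option_ne_zero {X : ρ → κ × Fin 2 → ℂ}
    (h : gramDet 0 (quatRows X) ≠ 0) (hcard : Fintype.card ρ < Fintype.card κ) :
    ∀ᵐ c : κ × Fin 2 → ℂ, gramDet 0 (quatRows fun o : Option ρ => o.elim c X) ≠ 0 := by
  classical
  obtain ⟨L, Z, hZ, hL, h0, -⟩ := exists_gramDet_quatRows_option h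
  have hZne : Z.Nonempty := Finset.card_pos.1 (by omega)
  have hdet : L.det ≠ 0 := fun h0 => by simp [h0] at hL
  filter_upwards [(quasiMeasurePreserving_mulVec hdet).ae (ae_sqSum_pos hZne)] with c hc
  rw [h0]
  exact mul_ne_zero h (pow_ne_zero 2 hc.ne')

theorem lintegral_gramWeight_quatRows_option {X : ρ → κ × Fin 2 → ℂ}
    (h : gramDet 0 (quatRows X) ≠ 0) {Z : Finset (κ × Fin 2)}
    (hZ : Z.card + 2 * Fintype.card ρ = 2 * Fintype.card κ) (a b : ℝ) :
    ∫⁻ c : κ × Fin 2 → ℂ,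
        ENNReal.ofReal (gramWeight a b (quatRows fun o : Option ρ => o.elim c X)) =
      radialIntegral Z (2 * a) (2 * b) * ENNReal.ofReal (gramWeight a (b - 1) (quatRows X)) := by
  classical
  obtain ⟨L, Z', hZ', hL, h0, h1⟩ := exists_gramDet_quatRows_option h
  have hdet : L.det ≠ 0 := fun h0 => by simp [h0] at hL
  have hg1 : 0 < gramDet 1 (quatRows X) := gramDet_pos one_pos _
  have hsq : ∀ {x : ℝ}, 0 ≤ x → ∀ p : ℝ, (x ^ 2) ^ p = x ^ (2 * p) := fun hx p => by
    rw [Real.rpow_mul hx, Real.rpow_two]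
  have hweight : ∀ c : κ × Fin 2 → ℂ, ENNReal.ofReal
      (gramWeight a b (quatRows fun o : Option ρ => o.elim c X)) =
        ENNReal.ofReal (gramWeight a b (quatRows X)) *
          ENNReal.ofReal (radialWeight Z' (2 * a) (2 * b) (L *ᵥ c)) := fun c => by
    have hs := sqSum_nonneg Finset.univ (L *ᵥ c)
    rw [← ENNReal.ofReal_mul (gramWeight_nonneg _ _ _), gramWeight, h0, h1,
      Real.mul_rpow (gramDet_nonneg le_rfl _) (sq_nonneg _), Real.mul_rpow hg1.le (sq_nonneg _),
      hsq (sqSum_nonneg _ _), hsq (by positivity), mul_mul_mul_comm, mul_neg]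
    rfl
  have hjac : (‖L.det‖ ^ 2)⁻¹ = gramDet 1 (quatRows X) := inv_eq_of_mul_eq_one_right hL
  simp_rw [hweight]
  rw [lintegral_const_mul' _ _ ENNReal.ofReal_ne_top,
    lintegral_comp_mulVec hdet fun v => ENNReal.ofReal (radialWeight Z' (2 * a) (2 * b) v), hjac,
    ← mul_assoc, ← ENNReal.ofReal_mul (gramWeight_nonneg _ _ _), gramWeight, mul_assoc,
    ← Real.rpow_add_one hg1.ne', show -b + 1 = -(b - 1) by ring, mul_comm, ← radialIntegral,
    radialIntegral_congr_card (by omega : Z'.card = Z.card), gramWeight]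

end RowExpansion

section MarginalsOfGramMeasure

section RowCoordinates

variable {ρ σ E : Type*} [Fintype ρ] [Fintype σ] [MeasureSpace E]
  [SigmaFinite (volume : Measure E)]

theorem measurePreserving_comp_equiv (e : ρ ≃ σ) :
    MeasurePreserving (fun X : σ → E => X ∘ e) :=
  (volume_measurePreserving_piCongrLeft (fun _ => E) e).symm

theorem measurePreserving_option_elim :
    MeasurePreserving (fun p : (ρ → E) × E => fun o : Option ρ => o.elim p.2 p.1) := by
  have hmap := Measure.pi_map_piOptionEquivProd fun _ : Option ρ => (volume : Measure E)
  have hfun : ⇑(MeasurableEquiv.piOptionEquivProd fun _ : Option ρ => E).symm =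
      fun p o => o.elim p.2 p.1 := by
    ext p (_ | i) <;> rfl
  rw [hfun] at hmap
  exact ⟨measurable_pi_lambda _ (by rintro (_ | i) <;> simp only [Option.elim] <;> fun_prop), hmap⟩

theorem lintegral_option {f : (Option ρ → E) → ENNReal} (hf : Measurable f) :
    ∫⁻ X, f X = ∫⁻ X : ρ → E, ∫⁻ c, f fun o => o.elim c X := by
  rw [← measurePreserving_option_elim.lintegral_comp hf, Measure.volume_eq_prod]
  exact lintegral_prod _ (hf.comp measurePreserving_option_elim.measurable).aemeasurable

theorem ae_option_iff {p : (Option ρ → E) → Prop} (hp : MeasurableSet {X | p X}) :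
    (∀ᵐ X, p X) ↔ ∀ᵐ X : ρ → E, ∀ᵐ c, p fun o => o.elim c X := by
  rw [← measurePreserving_option_elim.map_eq,
    ae_map_iff measurePreserving_option_elim.measurable.aemeasurable hp, Measure.volume_eq_prod]
  exact Measure.ae_prod_iff_ae_ae (measurePreserving_option_elim.measurable hp)

end RowCoordinates

universe u

theorem fintype_induction_option {P : ∀ ρ : Type u, [Fintype ρ] → [DecidableEq ρ] → Prop}
    (equiv : ∀ {ρ σ : Type u} [Fintype ρ] [DecidableEq ρ] [Fintype σ] [DecidableEq σ],
      ρ ≃ σ → P ρ → P σ)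
    (empty : P PEmpty) (option : ∀ {ρ : Type u} [Fintype ρ] [DecidableEq ρ], P ρ → P (Option ρ))
    (ρ : Type u) [Fintype ρ] [DecidableEq ρ] : P ρ := by
  classical
  refine Finite.induction_empty_option (P := fun ρ => ∀ [Fintype ρ] [DecidableEq ρ], P ρ)
    (fun {ρ σ} e ih _ _ => ?_) ?_ (fun {ρ} _ ih _ _ => ?_) ρ
  · let _ : Fintype ρ := .ofEquiv σ e.symm
    exact equiv e ih
  · intro _ _
    convert empty
  · convert option ih

variable {ρ σ : Type u} {κ : Type*} [Fintype ρ] [DecidableEq ρ] [Fintype σ] [DecidableEq σ]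
  [Fintype κ]

theorem gramDet_quatRows_comp_equiv (t : ℝ) (e : ρ ≃ σ) (X : σ → κ × Fin 2 → ℂ) :
    gramDet t (quatRows (X ∘ e)) = gramDet t (quatRows X) :=
  gramDet_submatrix_equiv t (quatRows X) (e.prodCongr (Equiv.refl _)) (Equiv.refl _)

theorem measurableSet_gramDet_quatRows_ne_zero :
    MeasurableSet {X : ρ → κ × Fin 2 → ℂ | gramDet 0 (quatRows X) ≠ 0} :=
  (isOpen_ne_fun ((continuous_gramDet 0).comp continuous_quatRows) continuous_const).measurableSet

theorem ae_gramDet_quatRows_ne_zero (hcard : Fintype.card ρ ≤ Fintype.card κ) :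
    ∀ᵐ X : ρ → κ × Fin 2 → ℂ, gramDet 0 (quatRows X) ≠ 0 := by
  classical
  refine fintype_induction_option (P := fun ρ _ _ => Fintype.card ρ ≤ Fintype.card κ →
    ∀ᵐ X : ρ → κ × Fin 2 → ℂ, gramDet 0 (quatRows X) ≠ 0) ?_ ?_ ?_ ρ hcard
  · intro ρ σ _ _ _ _ e ih hcard
    filter_upwards [(measurePreserving_comp_equiv e).quasiMeasurePreserving.ae
      (ih (by rwa [Fintype.card_congr e]))] with X hX
    rwa [gramDet_quatRows_comp_equiv] at hX
  · exact fun _ => .of_forall fun X => by simp [gramDet]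
  · intro ρ _ _ ih hcard
    rw [Fintype.card_option, Nat.succ_le_iff] at hcard
    have hmeas : MeasurableSet {X : Option ρ → κ × Fin 2 → ℂ | gramDet 0 (quatRows X) ≠ 0} :=
      measurableSet_gramDet_quatRows_ne_zero
    rw [ae_option_iff hmeas]
    filter_upwards [ih hcard.le] with X hX
    exact ae_gramDet_quatRows_option_ne_zero hX hcard

section GramMeasure

/-- The unnormalised law, with density `det (N N†)^a det (1 + N N†)^{-b}`, of the rows of a
rectangular quaternion matrix `N`. -/
noncomputable def gramMeasure (ρ κ : Type*) [Fintype ρ] [DecidableEq ρ] [Fintype κ] (a b : ℝ) :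
    Measure (ρ → κ × Fin 2 → ℂ) :=
  volume.withDensity fun X => ENNReal.ofReal (gramWeight a b (quatRows X))

theorem measurable_gramWeight_mul (a b : ℝ) {f : (ρ → κ × Fin 2 → ℂ) → ENNReal}
    (hf : Measurable f) :
    Measurable fun X => ENNReal.ofReal (gramWeight a b (quatRows X)) * f X :=
  (measurable_gramWeight_quatRows a b).ennreal_ofReal.mul hf

theorem lintegral_gramMeasure (a b : ℝ) {f : (ρ → κ × Fin 2 → ℂ) → ENNReal} (hf : Measurable f) :
    ∫⁻ X, f X ∂gramMeasure ρ κ a b =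
      ∫⁻ X, ENNReal.ofReal (gramWeight a b (quatRows X)) * f X :=
  lintegral_withDensity_eq_lintegral_mul _ (measurable_gramWeight_quatRows a b).ennreal_ofReal hf

theorem ae_gramMeasure_gramDet_ne_zero (hcard : Fintype.card ρ ≤ Fintype.card κ) (a b : ℝ) :
    ∀ᵐ X ∂gramMeasure ρ κ a b, gramDet 0 (quatRows X) ≠ 0 :=
  (withDensity_absolutelyContinuous _ _).ae_le (ae_gramDet_quatRows_ne_zero hcard)

theorem gramMeasure_univ_ne_zero (hcard : Fintype.card ρ ≤ Fintype.card κ) (a b : ℝ) :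
    gramMeasure ρ κ a b Set.univ ≠ 0 := by
  have hw : Measurable fun X : ρ → κ × Fin 2 → ℂ => ENNReal.ofReal (gramWeight a b (quatRows X)) :=
    (measurable_gramWeight_quatRows a b).ennreal_ofReal
  rw [gramMeasure, withDensity_apply _ .univ, Measure.restrict_univ, Ne, lintegral_eq_zero_iff hw]
  intro h
  have : (volume : Measure (ρ → κ × Fin 2 → ℂ)).IsOpenPosMeasure := Measure.pi.isOpenPosMeasure _
  obtain ⟨X, hX, hne⟩ := (h.and (ae_gramDet_quatRows_ne_zero hcard)).exists
  exact (ENNReal.ofReal_pos.2 (gramWeight_pos hne a b)).ne' hX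

theorem measurePreserving_gramMeasure {ι : Type*} [Fintype ι]
    {φ : (σ → κ × Fin 2 → ℂ) → ρ → ι × Fin 2 → ℂ} (hφ : MeasurePreserving φ)
    (h : ∀ t X, gramDet t (quatRows (φ X)) = gramDet t (quatRows X)) (a b : ℝ) :
    MeasurePreserving φ (gramMeasure σ κ a b) (gramMeasure ρ ι a b) := by
  refine ⟨hφ.measurable, Measure.ext_of_lintegral _ fun f hf => ?_⟩
  rw [lintegral_map hf hφ.measurable,
    lintegral_gramMeasure a b (f := fun X => f (φ X)) (hf.comp hφ.measurable),
    lintegral_gramMeasure a b hf, ← hφ.lintegral_comp (measurable_gramWeight_mul a b hf)]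
  simp only [gramWeight, h]

theorem measurePreserving_comp_equiv_gramMeasure (e : ρ ≃ σ) (a b : ℝ) :
    MeasurePreserving (fun X => X ∘ e) (gramMeasure σ κ a b) (gramMeasure ρ κ a b) :=
  measurePreserving_gramMeasure (measurePreserving_comp_equiv e)
    (fun t => gramDet_quatRows_comp_equiv t e) a b

theorem map_comp_some_gramMeasure (hcard : Fintype.card ρ ≤ Fintype.card κ)
    {Z : Finset (κ × Fin 2)} (hZ : Z.card + 2 * Fintype.card ρ = 2 * Fintype.card κ) (a b : ℝ) :
    (gramMeasure (Option ρ) κ a b).map (fun X => X ∘ some) =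
      radialIntegral Z (2 * a) (2 * b) • gramMeasure ρ κ a (b - 1) := by
  classical
  refine Measure.ext_of_lintegral _ fun f hf => ?_
  have hsome : Measurable fun X : Option ρ → κ × Fin 2 → ℂ => X ∘ some := by fun_prop
  have hfsome : Measurable fun X : Option ρ → κ × Fin 2 → ℂ => f (X ∘ some) := hf.comp hsome
  rw [lintegral_map hf hsome, lintegral_gramMeasure a b hfsome,
    lintegral_option (measurable_gramWeight_mul a b hfsome), lintegral_smul_measure,
    lintegral_gramMeasure a _ hf, smul_eq_mul,
    ← lintegral_const_mul _ (measurable_gramWeight_mul a (b - 1) hf)]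
  refine lintegral_congr_ae ?_
  filter_upwards [ae_gramDet_quatRows_ne_zero hcard] with X hX
  have helim : Measurable fun (c : κ × Fin 2 → ℂ) (o : Option ρ) => o.elim c X :=
    measurePreserving_option_elim.measurable.comp measurable_prodMk_left
  have hw : Measurable fun c : κ × Fin 2 → ℂ =>
      ENNReal.ofReal (gramWeight a b (quatRows fun o : Option ρ => o.elim c X)) :=
    (measurable_gramWeight_quatRows a b).ennreal_ofReal.comp helim
  have hcomp : ∀ c : κ × Fin 2 → ℂ, (fun o : Option ρ => o.elim c X) ∘ some = X := fun _ => rfl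
  simp only [hcomp]
  rw [lintegral_mul_const _ hw,
    lintegral_gramWeight_quatRows_option hX hZ, mul_assoc]

theorem gramMeasure_option_univ (hcard : Fintype.card ρ ≤ Fintype.card κ)
    {Z : Finset (κ × Fin 2)} (hZ : Z.card + 2 * Fintype.card ρ = 2 * Fintype.card κ) (a b : ℝ) :
    gramMeasure (Option ρ) κ a b Set.univ =
      radialIntegral Z (2 * a) (2 * b) * gramMeasure ρ κ a (b - 1) Set.univ := by
  have h := congrArg (· Set.univ) (map_comp_some_gramMeasure hcard hZ a b)
  rwa [Measure.map_apply (by fun_prop) .univ, Measure.smul_apply] at h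

theorem gramMeasure_univ_congr_equiv (e : ρ ≃ σ) (a b : ℝ) :
    gramMeasure ρ κ a b Set.univ = gramMeasure σ κ a b Set.univ :=
  ((measurePreserving_comp_equiv_gramMeasure e a b).measure_preimage
    MeasurableSet.univ.nullMeasurableSet).symm

theorem exists_finset_card_add_two_mul {m : ℕ} (hm : m ≤ Fintype.card κ) :
    ∃ Z : Finset (κ × Fin 2), Z.card + 2 * m = 2 * Fintype.card κ := by
  obtain ⟨Z, -, hZ⟩ := Finset.exists_subset_card_eq
    (s := (Finset.univ : Finset (κ × Fin 2))) (n := 2 * Fintype.card κ - 2 * m)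
    (by simp; omega)
  exact ⟨Z, by omega⟩

theorem isFiniteMeasure_gramMeasure {a b : ℝ} (hcard : Fintype.card ρ ≤ Fintype.card κ)
    (ha : Fintype.card ρ < a + Fintype.card κ + 1)
    (hb : a + Fintype.card κ + Fintype.card ρ - 1 < b) :
    IsFiniteMeasure (gramMeasure ρ κ a b) := by
  suffices gramMeasure ρ κ a b Set.univ ≠ ⊤ from ⟨this.lt_top⟩
  refine fintype_induction_option (P := fun ρ _ _ => ∀ b : ℝ, Fintype.card ρ ≤ Fintype.card κ →
    Fintype.card ρ < a + Fintype.card κ + 1 → a + Fintype.card κ + Fintype.card ρ - 1 < b →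
    gramMeasure ρ κ a b Set.univ ≠ ⊤) ?_ ?_ ?_ ρ b hcard ha hb
  · intro ρ σ _ _ _ _ e ih b
    rw [← Fintype.card_congr e, ← gramMeasure_univ_congr_equiv e]
    exact ih b
  · intro b _ _ _
    simp [gramMeasure, gramWeight, gramDet, volume_pi]
  · intro ρ _ _ ih b hcard ha hb
    rw [Fintype.card_option] at hcard ha hb
    push_cast at ha hb
    obtain ⟨Z, hZ⟩ := exists_finset_card_add_two_mul (κ := κ) (Nat.le_of_succ_le hcard)
    have hZ' : (Z.card : ℝ) + 2 * Fintype.card ρ = 2 * Fintype.card κ := by exact_mod_cast hZ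
    rw [gramMeasure_option_univ (Nat.le_of_succ_le hcard) hZ]
    refine ENNReal.mul_ne_top (radialIntegral_ne_top (Finset.card_pos.1 (by omega)) (by linarith)
      ?_) (ih (b - 1) (Nat.le_of_succ_le hcard) (by linarith) (by linarith))
    rw [Fintype.card_prod, Fintype.card_fin]
    push_cast
    linarith [(Fintype.card ρ).cast_nonneg (α := ℝ)]

theorem radialIntegral_add_one_of_card {m : ℕ} {Z : Finset (κ × Fin 2)}
    (hZ : Z.card + 2 * m = 2 * Fintype.card κ) (hm : m < Fintype.card κ) {a b : ℝ}
    (ha : m < a + Fintype.card κ) (hb : a + Fintype.card κ + 1 / 2 < b) :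
    radialIntegral Z (2 * (a + 1 / 2)) (2 * b) =
      ENNReal.ofReal ((a + Fintype.card κ - m) / (b - a - Fintype.card κ - 1 / 2)) *
        radialIntegral Z (2 * a) (2 * b) := by
  have hZ' : (Z.card : ℝ) + 2 * m = 2 * Fintype.card κ := by exact_mod_cast hZ
  have hcard : (Fintype.card (κ × Fin 2) : ℝ) = 2 * Fintype.card κ := by
    rw [Fintype.card_prod, Fintype.card_fin]
    push_cast
    ring
  rw [show 2 * (a + 1 / 2) = 2 * a + 1 by ring, radialIntegral_succ_left
    (Finset.card_pos.1 (by omega)) (by linarith) (by rw [hcard]; linarith), hcard]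
  congr 2
  rw [div_eq_div_iff (by linarith) (by linarith)]
  linear_combination (b - a - Fintype.card κ - 1 / 2) * hZ'

theorem gramMeasure_add_half_univ {a b : ℝ} (hcard : Fintype.card ρ ≤ Fintype.card κ)
    (ha : Fintype.card ρ < a + Fintype.card κ + 1)
    (hb : a + Fintype.card κ + Fintype.card ρ - 1 / 2 < b) :
    gramMeasure ρ κ (a + 1 / 2) b Set.univ =
      ENNReal.ofReal (∏ i ∈ Finset.range (Fintype.card ρ), (a + Fintype.card κ - i) /
        (b - Fintype.card ρ - a - Fintype.card κ + 1 / 2 + i)) *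
      gramMeasure ρ κ a b Set.univ := by
  refine fintype_induction_option (P := fun ρ _ _ => ∀ b : ℝ, Fintype.card ρ ≤ Fintype.card κ →
    Fintype.card ρ < a + Fintype.card κ + 1 → a + Fintype.card κ + Fintype.card ρ - 1 / 2 < b →
    gramMeasure ρ κ (a + 1 / 2) b Set.univ =
      ENNReal.ofReal (∏ i ∈ Finset.range (Fintype.card ρ), (a + Fintype.card κ - i) /
        (b - Fintype.card ρ - a - Fintype.card κ + 1 / 2 + i)) *
      gramMeasure ρ κ a b Set.univ) ?_ ?_ ?_ ρ b hcard ha hb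
  · intro ρ σ _ _ _ _ e ih b
    rw [← Fintype.card_congr e, ← gramMeasure_univ_congr_equiv e, ← gramMeasure_univ_congr_equiv e]
    exact ih b
  · intro b _ _ _
    simp [gramMeasure, gramWeight, gramDet]
  · intro ρ _ _ ih b hcard ha hb
    rw [Fintype.card_option] at hcard ha hb ⊢
    push_cast at ha hb ⊢
    obtain ⟨Z, hZ⟩ := exists_finset_card_add_two_mul (κ := κ) (Nat.le_of_succ_le hcard)
    rw [gramMeasure_option_univ (Nat.le_of_succ_le hcard) hZ,
      gramMeasure_option_univ (Nat.le_of_succ_le hcard) hZ,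
      radialIntegral_add_one_of_card hZ hcard (by linarith) (by linarith),
      ih (b - 1) (Nat.le_of_succ_le hcard) (by linarith) (by linarith), Finset.prod_range_succ,
      ENNReal.ofReal_mul' (div_nonneg (by linarith) (by linarith)),
      show b - 1 - (Fintype.card ρ : ℝ) = b - (Fintype.card ρ + 1) by ring,
      show b - (Fintype.card ρ + 1) - a - Fintype.card κ + 1 / 2 + Fintype.card ρ =
        b - a - Fintype.card κ - 1 / 2 by ring]
    ring

end GramMeasure

section Average

variable {τ : Type u} [Fintype τ] [DecidableEq τ]

/-- The identification of the rows of a block with one row added with one row added to the rows of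
both blocks. -/
def optionSumEquiv (σ ρ : Type*) : Option σ ⊕ ρ ≃ Option (σ ⊕ ρ) :=
  (((((Equiv.optionEquivSumPUnit.{0} σ).trans (Equiv.sumComm _ _)).sumCongr (Equiv.refl ρ)).trans
    (Equiv.sumAssoc _ _ _)).trans (Equiv.sumComm _ _)).trans (Equiv.optionEquivSumPUnit.{0} _).symm

theorem exists_map_comp_inr_gramMeasure
    (hcard : Fintype.card τ + Fintype.card ρ ≤ Fintype.card κ) (a b : ℝ) :
    ∃ K : ENNReal, (gramMeasure (τ ⊕ ρ) κ a b).map (fun X => X ∘ Sum.inr) =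
      K • gramMeasure ρ κ a (b - Fintype.card τ) := by
  refine fintype_induction_option (P := fun τ _ _ => ∀ b : ℝ,
    Fintype.card τ + Fintype.card ρ ≤ Fintype.card κ →
    ∃ K : ENNReal, (gramMeasure (τ ⊕ ρ) κ a b).map (fun X => X ∘ Sum.inr) =
      K • gramMeasure ρ κ a (b - Fintype.card τ)) ?_ ?_ ?_ τ b hcard
  · intro τ σ _ _ _ _ e ih b hcard
    rw [← Fintype.card_congr e] at hcard ⊢
    obtain ⟨K, hK⟩ := ih b hcard
    refine ⟨K, ?_⟩
    rw [← hK, ← (measurePreserving_comp_equiv_gramMeasure (e.sumCongr (Equiv.refl ρ)) a b).map_eq,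
      Measure.map_map (by fun_prop) (by fun_prop)]
    rfl
  · intro b _
    refine ⟨1, ?_⟩
    rw [← (measurePreserving_comp_equiv_gramMeasure (Equiv.emptySum PEmpty ρ) a b).map_eq,
      Measure.map_map (by fun_prop) (by fun_prop)]
    simp [Function.comp_def]
  · intro σ _ _ ih b hcard
    rw [Fintype.card_option] at hcard ⊢
    have hcard' : Fintype.card (σ ⊕ ρ) ≤ Fintype.card κ := by
      rw [Fintype.card_sum]
      omega
    obtain ⟨K, hK⟩ := ih (b - 1) (by omega)
    obtain ⟨Z, hZ⟩ := exists_finset_card_add_two_mul hcard'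
    have he : (fun X : Option σ ⊕ ρ → κ × Fin 2 → ℂ => X ∘ Sum.inr) ∘
        (fun X => X ∘ optionSumEquiv σ ρ) =
        (fun X => X ∘ Sum.inr) ∘ fun X : Option (σ ⊕ ρ) → κ × Fin 2 → ℂ => X ∘ some := rfl
    refine ⟨radialIntegral Z (2 * a) (2 * b) * K, ?_⟩
    rw [← (measurePreserving_comp_equiv_gramMeasure (optionSumEquiv σ ρ) a b).map_eq,
      Measure.map_map (by fun_prop) (by fun_prop), he,
      ← Measure.map_map (by fun_prop) (by fun_prop), map_comp_some_gramMeasure hcard' hZ,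
      Measure.map_smul, hK, smul_smul, Nat.cast_add_one, sub_sub, add_comm (1 : ℝ)]

theorem average_comp_of_measurePreserving {α β E : Type*} [MeasurableSpace α] [MeasurableSpace β]
    [NormedAddCommGroup E] [NormedSpace ℝ E] {μ : Measure α} {ν : Measure β} {φ : α → β}
    (hφ : MeasurePreserving φ μ ν) {f : β → E} (hf : AEStronglyMeasurable f ν) :
    ⨍ x, f (φ x) ∂μ = ⨍ y, f y ∂ν := by
  rw [average_eq, average_eq, measureReal_def, measureReal_def,
    ← hφ.measure_preimage MeasurableSet.univ.nullMeasurableSet, Set.preimage_univ,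
    ← integral_map hφ.aemeasurable (hφ.map_eq.symm ▸ hf), hφ.map_eq]

theorem average_comp_inr_gramMeasure
    (hcard : Fintype.card τ + Fintype.card ρ ≤ Fintype.card κ) {a b : ℝ}
    [IsFiniteMeasure (gramMeasure (τ ⊕ ρ) κ a b)] {f : (ρ → κ × Fin 2 → ℂ) → ℂ}
    (hf : Continuous f) :
    ⨍ X, f (X ∘ Sum.inr) ∂gramMeasure (τ ⊕ ρ) κ a b =
      ⨍ X, f X ∂gramMeasure ρ κ a (b - Fintype.card τ) := by
  obtain ⟨K, hK⟩ := exists_map_comp_inr_gramMeasure hcard a b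
  have hinr : Measurable fun X : τ ⊕ ρ → κ × Fin 2 → ℂ => X ∘ Sum.inr := by fun_prop
  have hmass : gramMeasure (τ ⊕ ρ) κ a b Set.univ =
      K * gramMeasure ρ κ a (b - Fintype.card τ) Set.univ := by
    have h := congrArg (· Set.univ) hK
    rwa [Measure.map_apply hinr .univ, Measure.smul_apply] at h
  have hne : K * gramMeasure ρ κ a (b - Fintype.card τ) Set.univ ≠ 0 :=
    hmass ▸ gramMeasure_univ_ne_zero (by rwa [Fintype.card_sum]) a b
  have htop : K ≠ ⊤ := fun h => measure_ne_top (gramMeasure (τ ⊕ ρ) κ a b) Set.univ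
    (by rw [hmass, h, ENNReal.top_mul (right_ne_zero_of_mul hne)])
  have hint : ∫ X, f (X ∘ Sum.inr) ∂gramMeasure (τ ⊕ ρ) κ a b =
      K.toReal • ∫ X, f X ∂gramMeasure ρ κ a (b - Fintype.card τ) := by
    rw [← integral_smul_measure, ← hK,
      integral_map hinr.aemeasurable hf.aestronglyMeasurable]
  rw [average_eq, average_eq, hint, measureReal_def, hmass, ENNReal.toReal_mul, ← measureReal_def,
    smul_smul, _root_.mul_inv_rev,
    inv_mul_cancel_right₀ (ENNReal.toReal_ne_zero.2 ⟨left_ne_zero_of_mul hne, htop⟩)]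

theorem average_comp_injective (hcard : Fintype.card σ ≤ Fintype.card κ) {a b : ℝ}
    [IsFiniteMeasure (gramMeasure σ κ a b)] {g : ρ → σ} (hg : Function.Injective g)
    {f : (ρ → κ × Fin 2 → ℂ) → ℂ} (hf : Continuous f) :
    ⨍ X, f (X ∘ g) ∂gramMeasure σ κ a b =
      ⨍ X, f X ∂gramMeasure ρ κ a (b - (Fintype.card σ - Fintype.card ρ)) := by
  classical
  let e : {x // x ∉ Set.range g} ⊕ ρ ≃ σ := ((Equiv.sumComm _ _).trans
    ((Equiv.ofInjective g hg).sumCongr (Equiv.refl _))).trans (Equiv.sumCompl _)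
  have hsum : Fintype.card {x // x ∉ Set.range g} + Fintype.card ρ = Fintype.card σ := by
    rw [← Fintype.card_sum, Fintype.card_congr e]
  have he := measurePreserving_comp_equiv_gramMeasure (κ := κ) e a b
  have hfin : IsFiniteMeasure (gramMeasure ({x // x ∉ Set.range g} ⊕ ρ) κ a b) :=
    he.map_eq ▸ inferInstance
  rw [← hsum, Nat.cast_add, add_sub_cancel_right,
    ← average_comp_inr_gramMeasure (hsum.trans_le hcard) hf]
  have hfinr : Continuous fun X : {x // x ∉ Set.range g} ⊕ ρ → κ × Fin 2 → ℂ =>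
      f (X ∘ Sum.inr) := by
    fun_prop
  exact average_comp_of_measurePreserving he hfinr.aestronglyMeasurable

end Average

end MarginalsOfGramMeasure

section PairedMinors

variable {ρ σ κ R : Type*} [Fintype ρ] [DecidableEq ρ] [Fintype σ] [DecidableEq σ]

section

variable [CommRing R]

theorem adjugate_apply_eq_det_updateCol (A : Matrix σ σ R) (i j : σ) :
    A.adjugate i j = (A.updateCol i (Pi.single j 1)).det := by
  rw [← cramer_apply, cramer_eq_adjugate_mulVec, mulVec_single_one, col_apply]

theorem det_submatrix_prodMap_perm (A : Matrix (ρ × Fin 2) (ρ × Fin 2) R) (τ : Equiv.Perm ρ) :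
    (A.submatrix id (Prod.map τ id)).det = A.det := by
  calc _ = _ := det_permute' (Equiv.prodCongrLeft fun _ : Fin 2 => τ) A
    _ = A.det := by simp [Equiv.Perm.sign_prodCongrLeft]

theorem adjugate_submatrix_prodMap_comp_perm (M : Matrix (ρ × Fin 2) (κ × Fin 2) R) (e : ρ → κ)
    (τ : Equiv.Perm ρ) (i : ρ) (s : Fin 2) (p : ρ × Fin 2) :
    (M.submatrix id (Prod.map (e ∘ τ) id)).adjugate (i, s) p =
      (M.submatrix id (Prod.map e id)).adjugate (τ i, s) p := by
  rw [adjugate_apply_eq_det_updateCol, adjugate_apply_eq_det_updateCol,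
    ← det_submatrix_prodMap_perm ((M.submatrix id (Prod.map e id)).updateCol _ _) τ]
  congr 1
  ext q ⟨j, r⟩
  simp [updateCol_apply, τ.injective.eq_iff]

/-- The matrix whose first pair of columns is `(e_{(none, 0)}, u)` and whose remaining columns are
the pairs of columns of `M` chosen by `e`. -/
def pivotMatrix (M : Matrix (Option ρ × Fin 2) (κ × Fin 2) R) (e : ρ → κ)
    (u : Option ρ × Fin 2 → R) : Matrix (Option ρ × Fin 2) (Option ρ × Fin 2) R :=
  of fun p q => q.1.elim (if q.2 = 0 then (Pi.single (none, 0) 1 : _ → R) p else u p)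
    fun i => M p (e i, q.2)

theorem det_pivotMatrix_eq_cramer (M : Matrix (Option ρ × Fin 2) (κ × Fin 2) R) (e : ρ → κ)
    (u : Option ρ × Fin 2 → R) :
    (pivotMatrix M e u).det = (pivotMatrix M e 0).cramer u (none, 1) := by
  rw [cramer_apply]
  congr 1
  ext p ⟨_ | i, s⟩
  · fin_cases s <;> simp [pivotMatrix]
  · simp [pivotMatrix]

theorem det_pivotMatrix (M : Matrix (Option ρ × Fin 2) (κ × Fin 2) R) (e : ρ → κ)
    {u : Option ρ × Fin 2 → R} (hu : ∀ i s, u (some i, s) = 0) :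
    (pivotMatrix M e u).det =
      u (none, 1) * (M.submatrix (Prod.map some id) (Prod.map e id)).det := by
  have h₂₁ : ((pivotMatrix M e u).submatrix (optionRowsEquiv ρ).symm
      (optionRowsEquiv ρ).symm).toBlocks₂₁ = 0 := by
    ext ⟨i, s⟩ ⟨⟨⟩, s'⟩
    fin_cases s' <;> simp [toBlocks₂₁, pivotMatrix, optionRowsEquiv, hu]
  rw [← det_submatrix_equiv_self (optionRowsEquiv ρ).symm, ← fromBlocks_toBlocks
    ((pivotMatrix M e u).submatrix (optionRowsEquiv ρ).symm (optionRowsEquiv ρ).symm), h₂₁,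
    det_fromBlocks_zero₂₁]
  congr 1
  rw [← det_submatrix_equiv_self (Equiv.punitProd (Fin 2)).symm, det_fin_two]
  simp [toBlocks₁₁, pivotMatrix, optionRowsEquiv]

theorem adjugate_option_eq_det_pivotMatrix (M : Matrix (Option ρ × Fin 2) (κ × Fin 2) R)
    (e : ρ → κ) (k : κ) :
    (M.submatrix id (Prod.map (fun o : Option ρ => o.elim k e) id)).adjugate
        (none, 0) (none, 0) = (pivotMatrix M e fun p => M p (k, 1)).det ∧
      (M.submatrix id (Prod.map (fun o : Option ρ => o.elim k e) id)).adjugate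
        (none, 1) (none, 0) = -(pivotMatrix M e fun p => M p (k, 0)).det := by
  constructor <;> rw [adjugate_apply_eq_det_updateCol]
  · congr 1
    ext p ⟨_ | i, s⟩
    · fin_cases s <;> simp [pivotMatrix]
    · simp [pivotMatrix]
  · have hne : ((none, 0) : Option ρ × Fin 2) ≠ (none, 1) := by simp
    have h := det_permute' (Equiv.swap (none, 0) (none, 1)) (pivotMatrix M e fun p => M p (k, 0))
    rw [Equiv.Perm.sign_swap hne] at h
    push_cast at h
    rw [neg_one_mul] at h
    rw [← h]
    congr 1
    ext p ⟨_ | i, s⟩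
    · fin_cases s <;> simp [pivotMatrix]
    · simp [pivotMatrix, Equiv.swap_apply_of_ne_of_ne]

variable [Fintype κ]

/-- The sum of the minors of `M` using all rows and one pair of columns for each pair of rows. -/
def pairedMinorSum (M : Matrix (ρ × Fin 2) (κ × Fin 2) R) : R :=
  ∑ e : ρ → κ, (M.submatrix id (Prod.map e id)).det

theorem pairedMinorSum_mul (T : Matrix (ρ × Fin 2) (ρ × Fin 2) R)
    (M : Matrix (ρ × Fin 2) (κ × Fin 2) R) :
    pairedMinorSum (T * M) = T.det * pairedMinorSum M := by
  simp only [pairedMinorSum, Finset.mul_sum, ← det_mul]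
  rfl

theorem pairedMinorSum_submatrix_equiv (f : ρ ≃ σ) (M : Matrix (σ × Fin 2) (κ × Fin 2) R) :
    pairedMinorSum (M.submatrix (Prod.map f id) id) = pairedMinorSum M := by
  rw [pairedMinorSum, pairedMinorSum, ← (f.arrowCongr (Equiv.refl κ)).sum_comp]
  refine Finset.sum_congr rfl fun e _ => ?_
  rw [← det_submatrix_equiv_self (f.prodCongr (Equiv.refl (Fin 2)))]
  congr 1
  ext ⟨i, s⟩ ⟨j, r⟩
  simp

/-- By column symmetry, the row expansion of each minor only has to use the columns chosen for the
row `none`. -/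
theorem pairedMinorSum_option (M : Matrix (Option ρ × Fin 2) (κ × Fin 2) R) :
    pairedMinorSum M = (Fintype.card ρ + 1) * ∑ k, ∑ e : ρ → κ, ∑ s, M (none, 0) (k, s) *
      (M.submatrix id (Prod.map (fun o : Option ρ => o.elim k e) id)).adjugate
        (none, s) (none, 0) := by
  set m : (Option ρ → κ) → Matrix (Option ρ × Fin 2) (Option ρ × Fin 2) R :=
    fun e => M.submatrix id (Prod.map e id) with hm
  have hadj : ∀ (e : Option ρ → κ) (o : Option ρ) (s : Fin 2),
      (m (e ∘ Equiv.swap none o)).adjugate (none, s) (none, 0) =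
        (m e).adjugate (o, s) (none, 0) := fun e o s =>
    (adjugate_submatrix_prodMap_comp_perm M e _ none s _).trans (by rw [Equiv.swap_apply_left])
  have hswap : ∀ o : Option ρ,
      ∑ e : Option ρ → κ, ∑ s, m e (none, 0) (o, s) * (m e).adjugate (o, s) (none, 0) =
        ∑ e : Option ρ → κ, ∑ s, m e (none, 0) (none, s) *
          (m e).adjugate (none, s) (none, 0) := fun o => by
    rw [← ((Equiv.swap none o).arrowCongr (Equiv.refl κ)).sum_comp fun e => ∑ s,
      m e (none, 0) (none, s) * (m e).adjugate (none, s) (none, 0)]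
    refine Finset.sum_congr rfl fun e _ => Finset.sum_congr rfl fun s _ => ?_
    rw [← hadj]
    simp [hm, Equiv.arrowCongr]
  calc pairedMinorSum M = ∑ o, ∑ e : Option ρ → κ, ∑ s,
        m e (none, 0) (o, s) * (m e).adjugate (o, s) (none, 0) := by
        rw [Finset.sum_comm]
        exact Finset.sum_congr rfl fun e _ =>
          (det_eq_sum_mul_adjugate_row _ (none, 0)).trans (Fintype.sum_prod_type _)
    _ = _ := by
        simp only [hswap, Finset.sum_const, Finset.card_univ, Fintype.card_option, nsmul_eq_mul,
          Nat.cast_add_one]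
        have hsymm : ∀ (k : κ) (e : ρ → κ),
            (Equiv.piOptionEquivProd (β := fun _ : Option ρ => κ)).symm (k, e) =
              fun o => o.elim k e := fun k e => by
          ext (_ | i) <;> rfl
        rw [← (Equiv.piOptionEquivProd (β := fun _ => κ)).symm.sum_comp, Fintype.sum_prod_type]
        simp only [hsymm]
        rfl

end

theorem pairedMinorSum_option_of_isotropic [Fintype κ] [DecidableEq κ]
    {M : Matrix (Option ρ × Fin 2) (κ × Fin 2) ℂ}
    (h : ∀ i s, (M * symplecticUnit κ * Mᵀ) (none, 0) (some i, s) = 0) :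
    pairedMinorSum M = (Fintype.card ρ + 1) * (M * symplecticUnit κ * Mᵀ) (none, 0) (none, 1) *
      pairedMinorSum (M.submatrix (Prod.map some id) id) := by
  have hrow : (M * symplecticUnit κ * Mᵀ) (none, 0) = ∑ k, (M (none, 0) (k, 0) •
      (fun p => M p (k, 1)) - M (none, 0) (k, 1) • fun p => M p (k, 0)) := by
    ext p
    rw [mul_apply, Fintype.sum_prod_type, Finset.sum_apply]
    refine Finset.sum_congr rfl fun k _ => ?_
    rw [Fin.sum_univ_two, (mul_symplecticUnit_apply M _ k).1, (mul_symplecticUnit_apply M _ k).2]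
    simp [sub_eq_neg_add]
  have hexpand : ∀ e : ρ → κ, ∑ k, ∑ s, M (none, 0) (k, s) *
      (M.submatrix id (Prod.map (fun o : Option ρ => o.elim k e) id)).adjugate
        (none, s) (none, 0) =
      (pivotMatrix M e ((M * symplecticUnit κ * Mᵀ) (none, 0))).det := fun e => by
    rw [hrow, det_pivotMatrix_eq_cramer, map_sum, Finset.sum_apply]
    refine Finset.sum_congr rfl fun k _ => ?_
    rw [Fin.sum_univ_two, (adjugate_option_eq_det_pivotMatrix M e k).1,
      (adjugate_option_eq_det_pivotMatrix M e k).2, det_pivotMatrix_eq_cramer,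
      det_pivotMatrix_eq_cramer M e fun p => M p (k, 0), map_sub, map_smul, map_smul]
    simp [sub_eq_add_neg]
  rw [pairedMinorSum_option, Finset.sum_comm, mul_assoc]
  simp only [hexpand, det_pivotMatrix _ _ h, pairedMinorSum, Finset.mul_sum, submatrix_submatrix]
  rfl

end PairedMinors

section QuaternionMinors

universe u

variable {ρ : Type u} {κ : Type*} [Fintype ρ] [DecidableEq ρ] [Fintype κ]

theorem pairedMinorSum_fromRows_add_mul (C : Matrix (Unit × Fin 2) (κ × Fin 2) ℂ)
    (N : Matrix (ρ × Fin 2) (κ × Fin 2) ℂ) (K : Matrix (Unit × Fin 2) (ρ × Fin 2) ℂ) :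
    pairedMinorSum (((C + K * N).fromRows N).submatrix (optionRowsEquiv ρ) id) =
      pairedMinorSum ((C.fromRows N).submatrix (optionRowsEquiv ρ) id) := by
  have hmul : ((C + K * N).fromRows N).submatrix (optionRowsEquiv ρ) id =
      (fromBlocks 1 K 0 1).submatrix (optionRowsEquiv ρ) (optionRowsEquiv ρ) *
        (C.fromRows N).submatrix (optionRowsEquiv ρ) id := by
    rw [submatrix_mul_equiv, fromBlocks_mul_fromRows]
    simp
  rw [hmul, pairedMinorSum_mul, det_submatrix_equiv_self, det_fromBlocks_zero₂₁, det_one, det_one,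
    mul_one, one_mul]

/-- Projecting the first row to the orthogonal complement of the other ones makes it isotropic for
the form `J`. -/
theorem pairedMinorSum_quatRows_option [DecidableEq κ] {X : ρ → κ × Fin 2 → ℂ}
    (h : gramDet 0 (quatRows X) ≠ 0) (c : κ × Fin 2 → ℂ) :
    pairedMinorSum (quatRows fun o : Option ρ => o.elim c X) = (Fintype.card ρ + 1) *
      (c ᵥ* regKerProj 0 (quatRows X) ⬝ᵥ star c) * pairedMinorSum (quatRows X) := by
  set N := quatRows X
  set C := quatRows fun _ : Unit => c
  set P := regKerProj 0 N with hP
  have hQC : IsQuaternionic (C * P) :=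
    (isQuaternionic_quatRows _).mul ((isQuaternionic_quatRows X).regKerProj h)
  have hker : P * Nᴴ = 0 := by
    rw [regKerProj_mul_conjTranspose h, Complex.ofReal_zero, zero_smul]
  have hCP : C * P = C + -(C * Nᴴ * ((0 : ℝ) • 1 + N * Nᴴ)⁻¹) * N := by
    rw [hP, regKerProj]
    simp [Matrix.mul_add, Matrix.mul_assoc, sub_eq_add_neg]
  set M := ((C * P).fromRows N).submatrix (optionRowsEquiv ρ) id with hM
  have hcross : C * P * symplecticUnit κ * Nᵀ = 0 := by
    rw [Matrix.mul_assoc, (isQuaternionic_quatRows X).symplecticUnit_mul_transpose,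
      Matrix.mul_assoc, ← Matrix.mul_assoc P, hker, Matrix.zero_mul, Matrix.mul_zero]
  have hself : (C * P * symplecticUnit κ * (C * P)ᵀ) (default, 0) (default, 1) =
      c ᵥ* P ⬝ᵥ star c := by
    rw [Matrix.mul_assoc, hQC.symplecticUnit_mul_transpose, conjTranspose_mul,
      (isHermitian_regKerProj 0 N).eq, ← Matrix.mul_assoc, ← Matrix.mul_assoc, Matrix.mul_assoc C,
      regKerProj_zero_mul_self h, (mul_symplecticUnit_apply _ _ _).2]
    rfl
  calc pairedMinorSum (quatRows fun o : Option ρ => o.elim c X) = pairedMinorSum M := by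
        rw [quatRows_option, hM, hCP, pairedMinorSum_fromRows_add_mul]
        rfl
    _ = (Fintype.card ρ + 1) * (M * symplecticUnit κ * Mᵀ) (none, 0) (none, 1) *
        pairedMinorSum (M.submatrix (Prod.map some id) id) :=
      pairedMinorSum_option_of_isotropic fun i s => congrFun₂ hcross (default, 0) (i, s)
    _ = _ := by rw [← hself]; rfl

theorem pairedMinorSum_quatRows {X : ρ → κ × Fin 2 → ℂ} (h : gramDet 0 (quatRows X) ≠ 0) :
    pairedMinorSum (quatRows X) = (Fintype.card ρ).factorial * √(gramDet 0 (quatRows X)) := by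
  classical
  refine fintype_induction_option (P := fun ρ _ _ => ∀ X : ρ → κ × Fin 2 → ℂ,
    gramDet 0 (quatRows X) ≠ 0 →
    pairedMinorSum (quatRows X) = (Fintype.card ρ).factorial * √(gramDet 0 (quatRows X)))
    ?_ ?_ ?_ ρ X h
  · intro ρ σ _ _ _ _ e ih X h
    rw [← gramDet_quatRows_comp_equiv 0 e X] at h ⊢
    rw [← Fintype.card_congr e, ← ih _ h]
    exact (pairedMinorSum_submatrix_equiv e _).symm
  · intro X _
    simp [pairedMinorSum, gramDet]
  · intro ρ _ _ ih X h
    obtain ⟨c, Y, rfl⟩ : ∃ c Y, X = fun o : Option ρ => o.elim c Y :=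
      ⟨X none, X ∘ some, by ext (_ | i) <;> rfl⟩
    have hsub : quatRows Y = (quatRows fun o : Option ρ => o.elim c Y).submatrix
        (Prod.map some id) id := rfl
    have hY : gramDet 0 (quatRows Y) ≠ 0 := hsub ▸
      gramDet_zero_submatrix_ne_zero h ((Option.some_injective ρ).prodMap Function.injective_id)
    obtain ⟨L, Z, -, -, h0, -⟩ := exists_simultaneous_diagonalization_regKerProj hY
    have hdet : gramDet 0 (quatRows fun o : Option ρ => o.elim c Y) =
        gramDet 0 (quatRows Y) * sqSum Z (L *ᵥ c) ^ 2 := by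
      have := gramDet_quatRows_option hY c
      rw [h0, Complex.ofReal_zero, zero_add] at this
      exact_mod_cast this
    rw [hdet, Real.sqrt_mul (gramDet_nonneg le_rfl _), Real.sqrt_sq (sqSum_nonneg _ _),
      pairedMinorSum_quatRows_option hY, h0, ih _ hY, Fintype.card_option, Nat.factorial_succ]
    push_cast
    ring

end QuaternionMinors

section MinorAverages

universe u

variable {ρ : Type u} {κ υ : Type*} [Fintype ρ] [DecidableEq ρ] [Fintype κ] [Fintype υ]
  [DecidableEq υ] {a b : ℝ}

theorem gramWeight_add_half {τ ι : Type*} [Fintype τ] [DecidableEq τ] [Fintype ι]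
    {N : Matrix τ ι ℂ} (h : gramDet 0 N ≠ 0) (a b : ℝ) :
    gramWeight (a + 1 / 2) b N = gramWeight a b N * √(gramDet 0 N) := by
  rw [gramWeight, Real.rpow_add ((gramDet_nonneg le_rfl N).lt_of_ne' h), ← Real.sqrt_eq_rpow,
    mul_right_comm, gramWeight]

theorem gramWeight_sub_half {τ ι : Type*} [Fintype τ] [DecidableEq τ] [Fintype ι]
    (N : Matrix τ ι ℂ) (a b : ℝ) :
    gramWeight a (b - 1 / 2) N = gramWeight a b N * √(gramDet 1 N) := by
  rw [gramWeight, neg_sub, sub_eq_neg_add, Real.rpow_add (gramDet_pos one_pos N),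
    ← Real.sqrt_eq_rpow, ← mul_assoc, gramWeight]

theorem det_submatrix_eq_zero_of_not_injective_left {R σ τ : Type*} [CommRing R]
    (M : Matrix σ τ R) {f : υ → σ} (g : υ → τ) (hf : ¬Function.Injective f) :
    (M.submatrix f g).det = 0 := by
  obtain ⟨i, j, hij, hne⟩ := Function.not_injective_iff.1 hf
  exact det_zero_of_row_eq hne (funext fun k => by simp only [submatrix_apply, hij])

theorem det_submatrix_eq_zero_of_not_injective_right {R σ τ : Type*} [CommRing R]
    (M : Matrix σ τ R) (f : υ → σ) {g : υ → τ} (hg : ¬Function.Injective g) :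
    (M.submatrix f g).det = 0 := by
  rw [← det_transpose, transpose_submatrix]
  exact det_submatrix_eq_zero_of_not_injective_left _ _ hg

theorem integrable_det_submatrix_quatRows (hcard : Fintype.card ρ ≤ Fintype.card κ)
    (ha : Fintype.card ρ < a + Fintype.card κ + 1)
    (hb : a + Fintype.card κ + Fintype.card ρ - 1 / 2 < b) (f : υ → ρ × Fin 2)
    (g : υ → κ × Fin 2) :
    Integrable (fun X => ((quatRows X).submatrix f g).det) (gramMeasure ρ κ a b) := by
  classical
  have hcont : Continuous fun X : ρ → κ × Fin 2 → ℂ => ((quatRows X).submatrix f g).det :=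
    (continuous_quatRows.matrix_submatrix _ _).matrix_det
  have hsqrt : Integrable (fun X => √(gramDet 1 (quatRows X))) (gramMeasure ρ κ a b) := by
    have hmeas : Measurable fun X : ρ → κ × Fin 2 → ℂ => √(gramDet 1 (quatRows X)) :=
      ((continuous_gramDet 1).comp continuous_quatRows).measurable.sqrt
    have hfin := isFiniteMeasure_gramMeasure hcard ha (b := b - 1 / 2) (by linarith)
    refine ⟨hmeas.aestronglyMeasurable, ?_⟩
    rw [hasFiniteIntegral_iff_ofReal (.of_forall fun X => Real.sqrt_nonneg _),
      lintegral_gramMeasure a b hmeas.ennreal_ofReal]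
    have htop := measure_lt_top (gramMeasure ρ κ a (b - 1 / 2)) Set.univ
    rw [gramMeasure, withDensity_apply _ .univ, Measure.restrict_univ] at htop
    simpa only [gramWeight_sub_half, ENNReal.ofReal_mul (gramWeight_nonneg _ _ _)] using htop
  refine hsqrt.mono' hcont.aestronglyMeasurable (.of_forall fun X => ?_)
  by_cases hf : Function.Injective f
  · by_cases hg : Function.Injective g
    · exact Real.le_sqrt_of_sq_le (sq_norm_det_submatrix_le_gramDet_one (quatRows X) hf hg)
    · rw [det_submatrix_eq_zero_of_not_injective_right _ _ hg, norm_zero]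
      exact Real.sqrt_nonneg _
  · rw [det_submatrix_eq_zero_of_not_injective_left _ _ hf, norm_zero]
    exact Real.sqrt_nonneg _

theorem average_sqrt_gramDet (hcard : Fintype.card ρ ≤ Fintype.card κ)
    (ha : Fintype.card ρ < a + Fintype.card κ + 1)
    (hb : a + Fintype.card κ + Fintype.card ρ - 1 / 2 < b) :
    ⨍ X, √(gramDet 0 (quatRows X)) ∂gramMeasure ρ κ a b =
      ∏ i ∈ Finset.range (Fintype.card ρ), (a + Fintype.card κ - i) /
        (b - Fintype.card ρ - a - Fintype.card κ + 1 / 2 + i) := by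
  have hfin := isFiniteMeasure_gramMeasure hcard ha (by linarith : _ < b)
  have hmeas : Measurable fun X : ρ → κ × Fin 2 → ℂ => √(gramDet 0 (quatRows X)) :=
    ((continuous_gramDet 0).comp continuous_quatRows).measurable.sqrt
  have hmass : ∫⁻ X, ENNReal.ofReal √(gramDet 0 (quatRows X)) ∂gramMeasure ρ κ a b =
      gramMeasure ρ κ (a + 1 / 2) b Set.univ := by
    rw [lintegral_gramMeasure a b hmeas.ennreal_ofReal, gramMeasure,
      withDensity_apply _ .univ, Measure.restrict_univ]
    refine lintegral_congr_ae ?_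
    filter_upwards [ae_gramDet_quatRows_ne_zero hcard] with X hX
    rw [gramWeight_add_half hX, ENNReal.ofReal_mul (gramWeight_nonneg _ _ _)]
  have hprod : 0 ≤ ∏ i ∈ Finset.range (Fintype.card ρ), (a + Fintype.card κ - i) /
      (b - Fintype.card ρ - a - Fintype.card κ + 1 / 2 + i) := by
    refine Finset.prod_nonneg fun i hi => ?_
    have hi : (i : ℝ) + 1 ≤ Fintype.card ρ := by exact_mod_cast Finset.mem_range.1 hi
    exact div_nonneg (by linarith) (by linarith)
  rw [average_eq, integral_eq_lintegral_of_nonneg_ae (.of_forall fun X => Real.sqrt_nonneg _)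
    hmeas.aestronglyMeasurable, hmass, gramMeasure_add_half_univ hcard ha hb, ENNReal.toReal_mul,
    ENNReal.toReal_ofReal hprod, smul_eq_mul, mul_comm, measureReal_def, mul_inv_cancel_right₀]
  exact ENNReal.toReal_ne_zero.2 ⟨gramMeasure_univ_ne_zero hcard a b, measure_ne_top _ _⟩

theorem average_pairedMinorSum (hcard : Fintype.card ρ ≤ Fintype.card κ)
    (ha : Fintype.card ρ < a + Fintype.card κ + 1)
    (hb : a + Fintype.card κ + Fintype.card ρ - 1 / 2 < b) :
    ⨍ X, pairedMinorSum (quatRows X) ∂gramMeasure ρ κ a b = (Fintype.card ρ).factorial *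
      ((∏ i ∈ Finset.range (Fintype.card ρ), (a + Fintype.card κ - i) /
        (b - Fintype.card ρ - a - Fintype.card κ + 1 / 2 + i) : ℝ) : ℂ) := by
  rw [← average_sqrt_gramDet hcard ha hb, average_eq', average_eq', ← integral_complex_ofReal,
    ← integral_const_mul]
  refine integral_congr_ae (Measure.ae_smul_measure ?_ _)
  filter_upwards [ae_gramMeasure_gramDet_ne_zero hcard a b] with X hX
  exact pairedMinorSum_quatRows hX

theorem average_det_submatrix_perm (π : Equiv.Perm κ) (e : ρ → κ) (a b : ℝ) :
    ⨍ X, ((quatRows X).submatrix id (Prod.map (π ∘ e) id)).det ∂gramMeasure ρ κ a b =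
      ⨍ X, ((quatRows X).submatrix id (Prod.map e id)).det ∂gramMeasure ρ κ a b := by
  have hvol : MeasurePreserving fun (X : ρ → κ × Fin 2 → ℂ) i => X i ∘ π.prodCongr (Equiv.refl _) :=
    volume_preserving_pi fun _ => measurePreserving_comp_equiv _
  have hrows : ∀ X : ρ → κ × Fin 2 → ℂ, quatRows (fun i => X i ∘ π.prodCongr (Equiv.refl _)) =
      (quatRows X).submatrix (Equiv.refl _) (π.prodCongr (Equiv.refl _)) := fun X => rfl
  have hcont : Continuous fun X : ρ → κ × Fin 2 → ℂ =>
      ((quatRows X).submatrix id (Prod.map e id)).det :=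
    (continuous_quatRows.matrix_submatrix _ _).matrix_det
  exact average_comp_of_measurePreserving (measurePreserving_gramMeasure hvol
    (fun t X => by rw [hrows, gramDet_submatrix_equiv]) a b) hcont.aestronglyMeasurable

theorem choose_nsmul_average_det_submatrix_prodMap
    (ha : Fintype.card ρ < a + Fintype.card κ + 1)
    (hb : a + Fintype.card κ + Fintype.card ρ - 1 / 2 < b) {e : ρ → κ}
    (he : Function.Injective e) :
    (Fintype.card κ).choose (Fintype.card ρ) •
      ⨍ X, ((quatRows X).submatrix id (Prod.map e id)).det ∂gramMeasure ρ κ a b =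
      ((∏ i ∈ Finset.range (Fintype.card ρ), (a + Fintype.card κ - i) /
        (b - Fintype.card ρ - a - Fintype.card κ + 1 / 2 + i) : ℝ) : ℂ) := by
  classical
  have hcard : Fintype.card ρ ≤ Fintype.card κ := Fintype.card_le_of_injective e he
  have hterm : ∀ e' : ρ → κ,
      ⨍ X, ((quatRows X).submatrix id (Prod.map e' id)).det ∂gramMeasure ρ κ a b =
      if Function.Injective e' then
        ⨍ X, ((quatRows X).submatrix id (Prod.map e id)).det ∂gramMeasure ρ κ a b else 0 := by
    intro e'
    split_ifs with he'
    · obtain ⟨π, rfl⟩ : ∃ π : Equiv.Perm κ, π ∘ e = e' :=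
        (Equiv.Perm.exists_extending_pair e e' he he').imp fun π hπ => funext hπ
      exact average_det_submatrix_perm π e a b
    · have hmap : ¬Function.Injective (Prod.map e' (id : Fin 2 → Fin 2)) := fun h =>
        he' fun i j hij => congrArg Prod.fst
          (h (a₁ := (i, 0)) (a₂ := (j, 0)) (Prod.ext hij rfl))
      simp only [det_submatrix_eq_zero_of_not_injective_right _ _ hmap, average_zero]
  have hinj : (Finset.univ.filter fun e' : ρ → κ => Function.Injective e').card =
      (Fintype.card ρ).factorial * (Fintype.card κ).choose (Fintype.card ρ) := by
    rw [← Nat.descFactorial_eq_factorial_mul_choose, ← Fintype.card_embedding_eq,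
      ← Fintype.card_congr (Equiv.subtypeInjectiveEquivEmbedding ρ κ), Fintype.card_subtype]
  have hsum := average_pairedMinorSum hcard ha hb
  simp only [pairedMinorSum] at hsum
  rw [average_eq', integral_finsetSum _ fun e' _ =>
    (integrable_det_submatrix_quatRows hcard ha hb id (Prod.map e' id)).to_average,
    Finset.sum_congr rfl fun e' _ => (average_eq' _ _).symm.trans (hterm e'),
    ← Finset.sum_filter, Finset.sum_const, hinj, mul_nsmul', nsmul_eq_mul] at hsum
  exact mul_left_cancel₀ (Nat.cast_ne_zero.2 (Nat.factorial_ne_zero _)) hsum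

end MinorAverages

section PrincipalMinors

variable {κ : Type*}

theorem exists_mem_notMem_of_ne_product {S : Finset (κ × Fin 2)}
    (hS : S ∉ Set.range fun T : Finset κ => T ×ˢ (Finset.univ : Finset (Fin 2))) :
    ∃ k u v, (k, u) ∈ S ∧ (k, v) ∉ S := by
  classical
  contrapose! hS
  refine ⟨S.image Prod.fst, Finset.ext fun ⟨k, u⟩ => ?_⟩
  simp only [Finset.mem_product, Finset.mem_image, Prod.exists, exists_and_right,
    exists_eq_right, Finset.mem_univ, and_true]
  exact ⟨fun ⟨v, hv⟩ => hS k v u hv, fun h => ⟨u, h⟩⟩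

variable [DecidableEq κ]

theorem det_quatRows_submatrix_product (X : κ → κ × Fin 2 → ℂ) (T : Finset κ) :
    ((quatRows X).submatrix (Subtype.val : ↥(T ×ˢ Finset.univ) → κ × Fin 2) Subtype.val).det =
      ((quatRows (X ∘ (Subtype.val : T → κ))).submatrix id (Prod.map Subtype.val id)).det := by
  let E : T × Fin 2 ≃ ↥(T ×ˢ (Finset.univ : Finset (Fin 2))) :=
    { toFun := fun p => ⟨(p.1, p.2), Finset.mk_mem_product p.1.2 (Finset.mem_univ p.2)⟩
      invFun := fun p => (⟨p.1.1, (Finset.mem_product.1 p.2).1⟩, p.1.2) }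
  rw [← det_submatrix_equiv_self E]
  rfl

theorem quatRows_neg_row_apply (X : κ → κ × Fin 2 → ℂ) (k : κ) (p q : κ × Fin 2) :
    quatRows (fun i => if i = k then -X i else X i) p q =
      (if p.1 = k then -1 else 1) * quatRows X p q := by
  simp only [quatRows, of_apply]
  split_ifs <;> simp

theorem det_submatrix_quatRows_neg_row {S : Finset (κ × Fin 2)} {k : κ} {u v : Fin 2}
    (hu : (k, u) ∈ S) (hv : (k, v) ∉ S) (X : κ → κ × Fin 2 → ℂ) :
    ((quatRows fun i => if i = k then -X i else X i).submatrix (Subtype.val : S → κ × Fin 2)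
      Subtype.val).det = -((quatRows X).submatrix (Subtype.val : S → κ × Fin 2)
        Subtype.val).det := by
  have hrow : (quatRows fun i => if i = k then -X i else X i).submatrix
      (Subtype.val : S → κ × Fin 2) (Subtype.val : S → κ × Fin 2) =
      diagonal (fun p : S => if p.1.1 = k then -1 else 1) *
        (quatRows X).submatrix (Subtype.val : S → κ × Fin 2) Subtype.val := by
    ext p q
    rw [diagonal_mul, submatrix_apply, submatrix_apply, quatRows_neg_row_apply]
  rw [hrow, det_mul, det_diagonal, Finset.prod_coe_sort S fun p => if p.1 = k then (-1 : ℂ) else 1,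
    Finset.prod_eq_single_of_mem (k, u) hu, if_pos rfl, neg_one_mul]
  rintro ⟨l, w⟩ hlw hne
  refine if_neg ?_
  rintro rfl
  have hwu : w ≠ u := fun h => hne (by rw [h])
  have hwv : w ≠ v := fun h => hv (h ▸ hlw)
  have huv : u ≠ v := fun h => hv (h ▸ hu)
  omega

variable [Fintype κ]

theorem choose_nsmul_average_det_submatrix_product {a b : ℝ} (ha : -1 < a)
    (hb : a + 2 * Fintype.card κ - 1 / 2 < b) (T : Finset κ) :
    (Fintype.card κ).choose T.card • ⨍ X, ((quatRows X).submatrix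
        (Subtype.val : ↥(T ×ˢ Finset.univ) → κ × Fin 2) Subtype.val).det ∂gramMeasure κ κ a b =
      ((∏ i ∈ Finset.range T.card, (a + Fintype.card κ - i) /
        (b - a - 2 * Fintype.card κ + 1 / 2 + i) : ℝ) : ℂ) := by
  have hT : (Fintype.card T : ℝ) ≤ Fintype.card κ := by
    exact_mod_cast Fintype.card_subtype_le (· ∈ T)
  have hfin := isFiniteMeasure_gramMeasure (le_refl (Fintype.card κ)) (a := a) (b := b)
    (by linarith) (by linarith)
  have hcont : Continuous fun X : T → κ × Fin 2 → ℂ =>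
      ((quatRows X).submatrix id (Prod.map Subtype.val id)).det :=
    (continuous_quatRows.matrix_submatrix _ _).matrix_det
  simp only [det_quatRows_submatrix_product]
  rw [average_comp_injective le_rfl Subtype.val_injective hcont, ← Fintype.card_coe T,
    choose_nsmul_average_det_submatrix_prodMap (by linarith) (by linarith) Subtype.val_injective]
  congr! 4
  ring

theorem measurePreserving_neg_row_gramMeasure (k : κ) (a b : ℝ) :
    MeasurePreserving (fun X i => if i = k then -X i else X i) (gramMeasure κ κ a b)
      (gramMeasure κ κ a b) := by
  refine measurePreserving_gramMeasure (volume_preserving_pi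
    (f := fun i v => if i = k then -v else v) fun i => ?_) (fun t X => ?_) a b
  · by_cases hi : i = k
    · simpa only [hi, if_true] using Measure.measurePreserving_neg volume
    · simp only [hi, if_false]
      exact MeasurePreserving.id volume
  · have hdiag : quatRows (fun i => if i = k then -X i else X i) =
        diagonal (fun p : κ × Fin 2 => if p.1 = k then -1 else 1) * quatRows X := by
      ext p q
      rw [diagonal_mul, quatRows_neg_row_apply]
    rw [hdiag, gramDet_mul_of_conjTranspose_mul_self]
    rw [diagonal_conjTranspose, diagonal_mul_diagonal, ← diagonal_one]
    refine congrArg diagonal (funext fun p => ?_)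
    by_cases hp : p.1 = k <;> simp [hp]

theorem average_det_submatrix_eq_zero {S : Finset (κ × Fin 2)}
    (hS : S ∉ Set.range fun T : Finset κ => T ×ˢ (Finset.univ : Finset (Fin 2))) (a b : ℝ) :
    ⨍ X, ((quatRows X).submatrix (Subtype.val : S → κ × Fin 2) Subtype.val).det
      ∂gramMeasure κ κ a b = 0 := by
  obtain ⟨k, u, v, hu, hv⟩ := exists_mem_notMem_of_ne_product hS
  have hcont : Continuous fun X : κ → κ × Fin 2 → ℂ =>
      ((quatRows X).submatrix (Subtype.val : S → κ × Fin 2) Subtype.val).det :=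
    (continuous_quatRows.matrix_submatrix _ _).matrix_det
  have hneg := average_comp_of_measurePreserving (measurePreserving_neg_row_gramMeasure k a b)
    hcont.aestronglyMeasurable
  simp only [det_submatrix_quatRows_neg_row hu hv, average_neg] at hneg
  exact self_eq_neg.1 hneg.symm

end PrincipalMinors

section AverageCharacteristicPolynomial

variable {κ : Type*} [Fintype κ] [DecidableEq κ]

theorem det_smul_one_sub_eq_sum_minors {R : Type*} [CommRing R] [Nontrivial R] (M : Matrix κ κ R)
    (z : R) :
    (z • (1 : Matrix κ κ R) - M).det = ∑ S : Finset κ, z ^ (Fintype.card κ - S.card) *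
      (-1) ^ S.card * (M.submatrix (Subtype.val : S → κ) Subtype.val).det := by
  have h := eval_charpoly M z
  rw [scalar_apply, ← smul_one_eq_diagonal] at h
  rw [← h, Polynomial.eval_eq_sum_range, charpoly_natDegree_eq_dim, ← Finset.sum_range_reflect,
    ← Finset.powerset_univ, Finset.sum_powerset, Finset.card_univ]
  refine Finset.sum_congr rfl fun k hk => ?_
  have hk' : k ≤ Fintype.card κ := Nat.lt_succ_iff.1 (Finset.mem_range.1 hk)
  rw [Nat.add_sub_cancel, charpoly_coeff_eq_sum_minors M k hk', mul_comm, ← mul_assoc,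
    Finset.mul_sum]
  refine Finset.sum_congr rfl fun S hS => ?_
  rw [(Finset.mem_powersetCard.1 hS).2]

theorem average_det_smul_one_sub_quatRows {a b : ℝ} (ha : -1 < a)
    (hb : a + 2 * Fintype.card κ - 1 / 2 < b) (z : ℂ) :
    ⨍ X, (z • (1 : Matrix (κ × Fin 2) (κ × Fin 2) ℂ) - quatRows X).det ∂gramMeasure κ κ a b =
      ∑ j ∈ Finset.range (Fintype.card κ + 1), z ^ (2 * (Fintype.card κ - j)) *
        ((∏ i ∈ Finset.range j, (a + Fintype.card κ - i) /
          (b - a - 2 * Fintype.card κ + 1 / 2 + i) : ℝ) : ℂ) := by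
  have hinj : Function.Injective fun T : Finset κ => T ×ˢ (Finset.univ : Finset (Fin 2)) :=
    fun S T h => Finset.ext fun k => by simpa using congrArg ((k, (0 : Fin 2)) ∈ ·) h
  simp only [det_smul_one_sub_eq_sum_minors]
  rw [average_eq', integral_finsetSum _ fun S _ => (Integrable.to_average
    (integrable_det_submatrix_quatRows le_rfl (by linarith) (by linarith) _ _)).const_mul _]
  simp only [integral_const_mul, ← average_eq']
  rw [← Fintype.sum_of_injective _ hinj (fun T => z ^ (2 * (Fintype.card κ - T.card)) *
      ⨍ X, ((quatRows X).submatrix (Subtype.val : ↥(T ×ˢ Finset.univ) → κ × Fin 2)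
        Subtype.val).det ∂gramMeasure κ κ a b) _
    (fun S hS => by rw [average_det_submatrix_eq_zero hS, mul_zero]) fun T => ?_]
  · rw [← Finset.powerset_univ, Finset.sum_powerset, Finset.card_univ]
    refine Finset.sum_congr rfl fun j hj => ?_
    have hchoose : (((Fintype.card κ).choose j : ℕ) : ℂ) ≠ 0 :=
      Nat.cast_ne_zero.2 (Nat.choose_pos (Nat.lt_succ_iff.1 (Finset.mem_range.1 hj))).ne'
    have hterm : ∀ T ∈ Finset.powersetCard j (Finset.univ : Finset κ),
        z ^ (2 * (Fintype.card κ - T.card)) * ⨍ X, ((quatRows X).submatrix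
          (Subtype.val : ↥(T ×ˢ Finset.univ) → κ × Fin 2) Subtype.val).det ∂gramMeasure κ κ a b =
        ((Fintype.card κ).choose j : ℂ)⁻¹ * (z ^ (2 * (Fintype.card κ - j)) *
          ((∏ i ∈ Finset.range j, (a + Fintype.card κ - i) /
            (b - a - 2 * Fintype.card κ + 1 / 2 + i) : ℝ) : ℂ)) := by
      intro T hT
      rw [← (Finset.mem_powersetCard.1 hT).2] at hchoose ⊢
      rw [← choose_nsmul_average_det_submatrix_product ha hb, nsmul_eq_mul, mul_left_comm,
        inv_mul_cancel_left₀ hchoose]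
    rw [Finset.sum_congr rfl hterm, Finset.sum_const, Finset.card_powersetCard, Finset.card_univ,
      nsmul_eq_mul, mul_inv_cancel_left₀ hchoose]
  · rw [Finset.card_product, Finset.card_univ, Fintype.card_prod, Fintype.card_fin,
      pow_mul' (-1 : ℂ), neg_one_sq, one_pow, mul_one, ← Nat.sub_mul, mul_comm 2]

end AverageCharacteristicPolynomial

section QuaternionEntries

/-- The first complex row of a row of quaternions, each given by a pair of complex numbers. -/
def firstComplexRow {κ : Type*} (c : κ → ℂ × ℂ) (p : κ × Fin 2) : ℂ :=
  if p.2 = 0 then (c p.1).1 else (c p.1).2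

theorem measurePreserving_firstComplexRow {κ : Type*} [Fintype κ] :
    MeasurePreserving (firstComplexRow : (κ → ℂ × ℂ) → κ × Fin 2 → ℂ) := by
  have hmeas : Measurable (firstComplexRow : (κ → ℂ × ℂ) → κ × Fin 2 → ℂ) := by
    refine measurable_pi_lambda _ fun p => ?_
    unfold firstComplexRow
    split_ifs <;> fun_prop
  refine ⟨hmeas, (Measure.pi_eq fun s hs => ?_).symm⟩
  have hpre : firstComplexRow ⁻¹' Set.univ.pi s =
      Set.univ.pi fun k : κ => s (k, 0) ×ˢ s (k, 1) := by
    ext c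
    simp [firstComplexRow, Set.mem_pi, Prod.forall, Fin.forall_fin_two]
  rw [Measure.map_apply hmeas (.univ_pi hs), hpre, volume_pi_pi, Fintype.prod_prod_type]
  simp only [Measure.volume_eq_prod, Measure.prod_prod, Fin.prod_univ_two]

theorem quatMatrix_eq_quatRows (n : ℕ) (x : Fin n → Fin n → ℂ × ℂ) :
    quatMatrix n x = quatRows fun i => firstComplexRow (x i) := by
  ext p q
  simp only [quatMatrix, quatRows, firstComplexRow, of_apply]
  split_ifs <;> simp_all

theorem quatSphericalWeight_eq_gramWeight (n : ℕ) (α₁ α₂ : ℝ) (x : Fin n → Fin n → ℂ × ℂ) :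
    quatSphericalWeight n α₁ α₂ x =
      gramWeight α₁ α₂ (quatRows fun i => firstComplexRow (x i)) := by
  rw [quatSphericalWeight, quatMatrix_eq_quatRows, det_mul_comm, det_one_add_mul_comm, gramWeight,
    gramDet, gramDet, Complex.ofReal_zero, zero_smul, zero_add, Complex.ofReal_one, one_smul]

theorem average_gramMeasure {ρ κ E : Type*} [Fintype ρ] [DecidableEq ρ] [Fintype κ]
    [NormedAddCommGroup E] [NormedSpace ℝ E] (a b : ℝ) (f : (ρ → κ × Fin 2 → ℂ) → E) :
    ⨍ X, f X ∂gramMeasure ρ κ a b =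
      (∫ X : ρ → κ × Fin 2 → ℂ, gramWeight a b (quatRows X))⁻¹ •
        ∫ X, gramWeight a b (quatRows X) • f X := by
  have hw : Measurable fun X : ρ → κ × Fin 2 → ℂ => gramWeight a b (quatRows X) :=
    measurable_gramWeight_quatRows a b
  have hnonneg := fun X : ρ → κ × Fin 2 → ℂ => gramWeight_nonneg a b (quatRows X)
  rw [average_eq, measureReal_def, gramMeasure, withDensity_apply _ .univ, Measure.restrict_univ,
    ← integral_eq_lintegral_of_nonneg_ae (.of_forall hnonneg) hw.aestronglyMeasurable,
    integral_withDensity_eq_integral_toReal_smul hw.ennreal_ofReal (.of_forall fun X =>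
      ENNReal.ofReal_lt_top)]
  simp only [ENNReal.toReal_ofReal (hnonneg _)]

theorem integral_quatSphericalWeight_div (n : ℕ) (α₁ α₂ : ℝ)
    {f : Matrix (Fin n × Fin 2) (Fin n × Fin 2) ℂ → ℂ} (hf : Continuous f) :
    (∫ x : Fin n → Fin n → ℂ × ℂ,
        (quatSphericalWeight n α₁ α₂ x : ℂ) * f (quatMatrix n x)) /
      ((∫ x : Fin n → Fin n → ℂ × ℂ, quatSphericalWeight n α₁ α₂ x : ℝ) : ℂ) =
      ⨍ X, f (quatRows X) ∂gramMeasure (Fin n) (Fin n) α₁ α₂ := by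
  have hrow : MeasurePreserving
      fun (x : Fin n → Fin n → ℂ × ℂ) i => (firstComplexRow (x i) : Fin n × Fin 2 → ℂ) :=
    volume_preserving_pi fun _ => measurePreserving_firstComplexRow
  have hw : Measurable fun X : Fin n → Fin n × Fin 2 → ℂ => gramWeight α₁ α₂ (quatRows X) :=
    measurable_gramWeight_quatRows α₁ α₂
  have hwf : Measurable fun X : Fin n → Fin n × Fin 2 → ℂ =>
      gramWeight α₁ α₂ (quatRows X) • f (quatRows X) :=
    hw.smul (hf.comp continuous_quatRows).measurable
  rw [average_gramMeasure, ← hrow.map_eq,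
    integral_map hrow.aemeasurable hw.aestronglyMeasurable,
    integral_map hrow.aemeasurable hwf.aestronglyMeasurable, div_eq_inv_mul]
  simp only [quatSphericalWeight_eq_gramWeight, quatMatrix_eq_quatRows, Complex.real_smul,
    Complex.ofReal_inv]

end QuaternionEntries

theorem quatSpherical_even_skew_orthogonal_poly_general (n : ℕ) {α₁ α₂ : ℝ} (hα₁ : -1 < α₁)
    (hα₂ : α₁ + 2 * n - 1 / 2 < α₂) (z : ℂ) :
    (∫ x : Fin n → Fin n → ℂ × ℂ,
        (quatSphericalWeight n α₁ α₂ x : ℂ) *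
          (z • (1 : Matrix (Fin n × Fin 2) (Fin n × Fin 2) ℂ) - quatMatrix n x).det) /
      ((∫ x : Fin n → Fin n → ℂ × ℂ, quatSphericalWeight n α₁ α₂ x : ℝ) : ℂ)
      = ∑ j ∈ Finset.range (n + 1), z ^ (2 * (n - j)) *
          ∏ i ∈ Finset.range j,
            (((α₁ + n + 1 - (i + 1)) / (α₂ - α₁ - 2 * n - 1 / 2 + (i + 1)) : ℝ) : ℂ) := by
  have hcont : Continuous fun M : Matrix (Fin n × Fin 2) (Fin n × Fin 2) ℂ =>
      (z • (1 : Matrix (Fin n × Fin 2) (Fin n × Fin 2) ℂ) - M).det :=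
    (continuous_const.sub continuous_id).matrix_det
  rw [integral_quatSphericalWeight_div n α₁ α₂ hcont,
    average_det_smul_one_sub_quatRows hα₁ (by rwa [Fintype.card_fin]), Fintype.card_fin]
  refine Finset.sum_congr rfl fun j _ => ?_
  rw [Complex.ofReal_prod]
  refine congrArg _ (Finset.prod_congr rfl fun i _ => ?_)
  congr 2 <;> ring

/-- The even-degree skew orthogonal polynomial for the quaternion real spherical
ensemble: `⟨det (z I - G)⟩ = ∑_{j=0}^{n} z^{2(n-j)} ∏_{i=1}^{j}
(α₁ + n + 1 - i)/(α₂ - α₁ - 2n - 1/2 + i)`. -/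
theorem quatSpherical_even_skew_orthogonal_poly (n : ℕ) (hn : 0 < n)
    (α₁ α₂ : ℝ) (hα₁ : 0 ≤ α₁) (hα₂ : α₁ + 3 * n + 1 < α₂) (z : ℂ) :
    (∫ x : Fin n → Fin n → ℂ × ℂ,
        (quatSphericalWeight n α₁ α₂ x : ℂ) *
          (z • (1 : Matrix (Fin n × Fin 2) (Fin n × Fin 2) ℂ) - quatMatrix n x).det) /
      ((∫ x : Fin n → Fin n → ℂ × ℂ, quatSphericalWeight n α₁ α₂ x : ℝ) : ℂ)
      = ∑ j ∈ Finset.range (n + 1), z ^ (2 * (n - j)) *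
          ∏ i ∈ Finset.range j,
            (((α₁ + n + 1 - (i + 1)) / (α₂ - α₁ - 2 * n - 1 / 2 + (i + 1)) : ℝ) : ℂ) :=
  quatSpherical_even_skew_orthogonal_poly_general n (by linarith)
    (by linarith [(n.cast_nonneg : (0 : ℝ) ≤ n)]) z
end

section
/- Let n be a positive integer and let α₁, α₂ be real parameters with α₁ ≥ 0 and α₂ > α₁ + 3n + 1. For G drawn from the quaternion real spherical ensemble of size 2n with parameters (α₁, α₂), and for every complex number z, z·⟨det(z·I − G)⟩ + ⟨det(z·I − G)·Tr(G)⟩ = z^{2n+1}; that is, the odd-degree skew orthogonal polynomial for the quaternion real spherical ensemble is the monomial Q_{2n+1}(z) = z^{2n+1}. -/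
open MeasureTheory Matrix

/-!
The weight depends only on `Gᴴ * G`, so the law of `G` is invariant under left multiplication by
the compact symplectic group `Sp(n)`. Expand `det (z - G)` into principal minors. The diagonal
quaternions `diag(i, -i)` in `Sp(n)` multiply the integrands by a constant `≠ 1`, so that
`⟨minor_S(G) * G b b⟩` vanishes for `b ∈ S`, and both `⟨minor_S(G)⟩` and
`⟨minor_{S \ b}(G) * G b b⟩` with `b ∈ S` vanish unless `S` is a union of `2 × 2` blocks. If `S` is
such a union, block permutations and quaternion units act transitively on the rows in `S`, so all
the terms of the Laplace expansion of `minor_S(G)` along the column `b` have the average of its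
diagonal term `minor_{S \ b}(G) * G b b`. In every case
`∑_{b ∈ S} ⟨minor_{S \ b}(G) * G b b⟩ = ⟨minor_S(G)⟩` for nonempty `S`, and therefore
`⟨det (z - G) * Tr G⟩` cancels `z * ⟨det (z - G)⟩` except for the term `z ^ (2n + 1)` of `S = ∅`.
-/

section PrincipalMinors

variable {R κ : Type*} [CommRing R] [DecidableEq κ]

/-- The principal minor of `G` on the index set `S`. -/
def principalMinor (S : Finset κ) (G : Matrix κ κ R) : R :=
  (G.submatrix (Subtype.val : S → κ) (Subtype.val : S → κ)).det

lemma principalMinor_empty (G : Matrix κ κ R) : principalMinor ∅ G = 1 :=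
  det_isEmpty

lemma principalMinor_singleton (b : κ) (G : Matrix κ κ R) : principalMinor {b} G = G b b :=
  det_unique _

/-- The matrix whose rows indexed by `S` are those of `G` and whose other rows are those of the
identity: a full-size matrix whose determinant is `principalMinor S G`. -/
def keepRows (S : Finset κ) (G : Matrix κ κ R) : Matrix κ κ R :=
  of (S.piecewise G.row (1 : Matrix κ κ R).row)

lemma keepRows_apply_of_mem {S : Finset κ} {a : κ} (ha : a ∈ S) (G : Matrix κ κ R) (b : κ) :
    keepRows S G a b = G a b := by
  simp [keepRows, ha]

lemma keepRows_apply_of_notMem {S : Finset κ} {a : κ} (ha : a ∉ S) (G : Matrix κ κ R) (b : κ) :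
    keepRows S G a b = (1 : Matrix κ κ R) a b := by
  simp [keepRows, ha]

variable [Fintype κ]

lemma det_keepRows (S : Finset κ) (G : Matrix κ κ R) :
    (keepRows S G).det = principalMinor S G :=
  det_piecewise_one_eq_submatrix_det G S

/-- The coefficient of the principal minor on `S` in the expansion of `det (z - G)`. -/
def minorCoeff (z : R) (S : Finset κ) : R :=
  (-1) ^ S.card * z ^ (Fintype.card κ - S.card)

lemma minorCoeff_erase (z : R) {S : Finset κ} {b : κ} (hb : b ∈ S) :
    minorCoeff z (S.erase b) = -z * minorCoeff z S := by
  obtain ⟨k, hk⟩ : ∃ k, S.card = k + 1 := ⟨_, (Finset.card_erase_add_one hb).symm⟩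
  have hle : k + 1 ≤ Fintype.card κ := hk ▸ S.card_le_univ
  rw [minorCoeff, minorCoeff, Finset.card_erase_of_mem hb, hk, Nat.add_sub_cancel,
    show Fintype.card κ - k = Fintype.card κ - (k + 1) + 1 by omega]
  ring

lemma det_smul_one_sub_eq_sum_principalMinor (z : R) (G : Matrix κ κ R) :
    (z • (1 : Matrix κ κ R) - G).det =
      ∑ S : Finset κ, minorCoeff z S * principalMinor S G := by
  nontriviality R
  calc (z • (1 : Matrix κ κ R) - G).det
      = G.charpoly.eval z := by rw [eval_charpoly, scalar_apply, smul_one_eq_diagonal]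
    _ = ∑ k ∈ Finset.range (Fintype.card κ + 1),
          G.charpoly.coeff (Fintype.card κ - k) * z ^ (Fintype.card κ - k) := by
        rw [Polynomial.eval_eq_sum_range, charpoly_natDegree_eq_dim, ← Finset.sum_range_reflect]
        simp only [Nat.add_sub_cancel]
    _ = ∑ k ∈ Finset.range (Fintype.card κ + 1), ∑ S ∈ Finset.univ.powersetCard k,
          minorCoeff z S * principalMinor S G := by
        refine Finset.sum_congr rfl fun k hk => ?_
        rw [charpoly_coeff_eq_sum_minors G k (Finset.mem_range_succ_iff.1 hk), mul_right_comm,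
          Finset.mul_sum]
        refine Finset.sum_congr rfl fun S hS => ?_
        rw [minorCoeff, (Finset.mem_powersetCard.1 hS).2, principalMinor]
    _ = _ := by rw [← Finset.powerset_univ, Finset.sum_powerset, Finset.card_univ]

/-- The term of row `c` in the Laplace expansion of the principal minor on `S` along column `b`. -/
def laplaceTerm (S : Finset κ) (b c : κ) (G : Matrix κ κ R) : R :=
  (keepRows S G).adjugate b c * G c b

lemma laplaceTerm_self (S : Finset κ) (b : κ) (G : Matrix κ κ R) :
    laplaceTerm S b b G = principalMinor (S.erase b) G * G b b := by
  rw [laplaceTerm, adjugate_apply, ← det_keepRows]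
  congr 2
  ext a c
  rcases eq_or_ne a b with rfl | hab
  · simp [keepRows, one_apply, Pi.single_apply, eq_comm]
  · by_cases ha : a ∈ S <;> simp [keepRows, hab, ha]

/-- Only the rows in `S` contribute, since the other rows of `keepRows S G` vanish in column `b`. -/
lemma sum_laplaceTerm {S : Finset κ} {b : κ} (hb : b ∈ S) (G : Matrix κ κ R) :
    ∑ c ∈ S, laplaceTerm S b c G = principalMinor S G := by
  have hdiag := congr_fun₂ (adjugate_mul (keepRows S G)) b b
  rw [mul_apply, Matrix.smul_apply, one_apply_eq, smul_eq_mul, mul_one, det_keepRows] at hdiag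
  rw [← hdiag, ← Finset.sum_subset S.subset_univ]
  · exact Finset.sum_congr rfl fun c hc => by rw [laplaceTerm, keepRows_apply_of_mem hc]
  · intro c _ hc
    rw [keepRows_apply_of_notMem hc, one_apply_ne (ne_of_mem_of_not_mem hb hc).symm, mul_zero]

lemma principalMinor_diagonal_mul (S : Finset κ) (d : κ → R) (G : Matrix κ κ R) :
    principalMinor S (diagonal d * G) = (∏ a ∈ S, d a) * principalMinor S G := by
  have hsub : (diagonal d * G).submatrix (Subtype.val : S → κ) (Subtype.val : S → κ) =
      diagonal (fun a : S => d a) * G.submatrix Subtype.val Subtype.val := by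
    ext a b
    simp only [submatrix_apply, diagonal_mul]
  rw [principalMinor, hsub, det_mul, det_diagonal, Finset.prod_coe_sort, principalMinor]

end PrincipalMinors

section MonomialMatrices

variable {R κ : Type*} [CommRing R] [Fintype κ] [DecidableEq κ]

/-- The monomial matrix whose row `a` is `d a` times the standard basis vector `π a`. -/
def monomialMatrix (d : κ → R) (π : Equiv.Perm κ) : Matrix κ κ R :=
  diagonal d * π.permMatrix R

lemma monomialMatrix_apply (d : κ → R) (π : Equiv.Perm κ) (a b : κ) :
    monomialMatrix d π a b = if b = π a then d a else 0 := by
  simp [monomialMatrix, Equiv.Perm.permMatrix, PEquiv.toMatrix_apply, eq_comm]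

lemma monomialMatrix_mul_apply (d : κ → R) (π : Equiv.Perm κ) (G : Matrix κ κ R) (a b : κ) :
    (monomialMatrix d π * G) a b = d a * G (π a) b := by
  simp [mul_apply, monomialMatrix_apply]

lemma det_monomialMatrix (d : κ → R) (π : Equiv.Perm κ) :
    (monomialMatrix d π).det = (∏ a, d a) * π.sign := by
  rw [monomialMatrix, det_mul, det_diagonal, det_permutation]

variable {S : Finset κ} {d : κ → R} {π : Equiv.Perm κ}

lemma keepRows_monomialMatrix_mul (hS : ∀ a ∈ S, π a ∈ S) (hfix : ∀ a ∉ S, d a = 1 ∧ π a = a)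
    (G : Matrix κ κ R) :
    keepRows S (monomialMatrix d π * G) = monomialMatrix d π * keepRows S G := by
  ext a b
  rw [monomialMatrix_mul_apply]
  by_cases ha : a ∈ S
  · rw [keepRows_apply_of_mem ha, keepRows_apply_of_mem (hS a ha), monomialMatrix_mul_apply]
  · rw [(hfix a ha).1, (hfix a ha).2, keepRows_apply_of_notMem ha, keepRows_apply_of_notMem ha,
      one_mul]

variable [StarRing R]

lemma monomialMatrix_mem_unitaryGroup (hd : ∀ a, d a * star (d a) = 1) (π : Equiv.Perm κ) :
    monomialMatrix d π ∈ unitaryGroup κ R := by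
  rw [mem_unitaryGroup_iff]
  ext a b
  rw [monomialMatrix_mul_apply, star_apply, monomialMatrix_apply, one_apply]
  by_cases hab : a = b <;> simp [hab, hd]

lemma adjugate_eq_star_of_mem_specialUnitaryGroup {U : Matrix κ κ R}
    (hU : U ∈ specialUnitaryGroup κ R) : U.adjugate = star U := by
  rw [mem_specialUnitaryGroup_iff, mem_unitaryGroup_iff] at hU
  rw [← Matrix.mul_one U.adjugate, ← hU.1, ← Matrix.mul_assoc, adjugate_mul, hU.2, one_smul,
    Matrix.one_mul]

lemma laplaceTerm_monomialMatrix_mul (hd : ∀ a, d a * star (d a) = 1)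
    (hdet : (monomialMatrix d π).det = 1) (hS : ∀ a ∈ S, π a ∈ S)
    (hfix : ∀ a ∉ S, d a = 1 ∧ π a = a) (b c : κ) (G : Matrix κ κ R) :
    laplaceTerm S b c (monomialMatrix d π * G) = laplaceTerm S b (π c) G := by
  have hU : monomialMatrix d π ∈ specialUnitaryGroup κ R :=
    mem_specialUnitaryGroup_iff.2 ⟨monomialMatrix_mem_unitaryGroup hd π, hdet⟩
  have hadj : ((keepRows S G).adjugate * star (monomialMatrix d π)) b c =
      (keepRows S G).adjugate b (π c) * star (d c) := by
    simp [mul_apply, monomialMatrix_apply, apply_ite star]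
  rw [laplaceTerm, keepRows_monomialMatrix_mul hS hfix, adjugate_mul_distrib,
    adjugate_eq_star_of_mem_specialUnitaryGroup hU, hadj, monomialMatrix_mul_apply, laplaceTerm]
  linear_combination (keepRows S G).adjugate b (π c) * G (π c) b * hd c

end MonomialMatrices

section PosSemidefDeterminants

open scoped ComplexOrder MatrixOrder

variable {𝕜 κ : Type*} [RCLike 𝕜]

lemma mul_conjTranspose_self_eq_sum_vecMulVec {μ : Type*} [Fintype μ] (B : Matrix κ μ 𝕜) :
    B * Bᴴ = ∑ a, vecMulVec (B.col a) (star (B.col a)) := by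
  ext i j
  simp [Matrix.mul_apply, Matrix.sum_apply, vecMulVec_apply]

lemma posSemidef_sum_vecMulVec_self_star [Finite κ] {μ : Type*} (v : μ → κ → 𝕜) (s : Finset μ) :
    (∑ a ∈ s, vecMulVec (v a) (star (v a))).PosSemidef :=
  posSemidef_sum _ fun a _ => posSemidef_vecMulVec_self_star (v a)

variable [Fintype κ] [DecidableEq κ] {S P : Matrix κ κ 𝕜}

lemma det_add_vecMulVec_self_star (hS : S.PosDef) (v : κ → 𝕜) :
    (S + vecMulVec v (star v)).det = S.det * (1 + star v ⬝ᵥ (S⁻¹ *ᵥ v)) := by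
  have h := det_add_replicateCol_mul_replicateRow (ι := Unit)
    ((isUnit_iff_isUnit_det S).1 hS.isUnit) v (star v)
  rw [← vecMulVec_eq, Matrix.mul_assoc, ← replicateCol_mulVec] at h
  simpa [det_unique] using h

lemma det_le_det_add_of_posDef (hS : S.PosDef) (hP : P.PosSemidef) :
    S.det ≤ (S + P).det := by
  obtain ⟨B, rfl⟩ := CStarAlgebra.nonneg_iff_eq_mul_star_self.mp hP.nonneg
  rw [star_eq_conjTranspose, mul_conjTranspose_self_eq_sum_vecMulVec]
  induction (Finset.univ : Finset κ) using Finset.induction_on with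
  | empty => simp
  | insert a s ha ih =>
    have hT := hS.add_posSemidef (posSemidef_sum_vecMulVec_self_star B.col s)
    rw [Finset.sum_insert ha, add_comm (vecMulVec _ _), ← add_assoc,
      det_add_vecMulVec_self_star hT]
    exact ih.trans (le_mul_of_one_le_right hT.det_pos.le
      (le_add_of_nonneg_right (hT.inv.posSemidef.dotProduct_mulVec_nonneg _)))

lemma det_le_det_add (hS : S.PosSemidef) (hP : P.PosSemidef) : S.det ≤ (S + P).det := by
  by_cases h : S.det = 0
  · exact h ▸ (hS.add hP).det_nonneg
  · exact det_le_det_add_of_posDef (hS.posDef_iff_det_ne_zero.2 h) hP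

lemma one_le_det_one_add (hP : P.PosSemidef) : 1 ≤ (1 + P).det := by
  simpa using det_le_det_add_of_posDef Matrix.PosDef.one hP

lemma normSq_det_eq_re_det (B : Matrix κ κ ℂ) :
    Complex.normSq B.det = (star B * B).det.re := by
  rw [det_mul, star_eq_conjTranspose, det_conjTranspose, Complex.star_def,
    ← Complex.normSq_eq_conj_mul_self, Complex.ofReal_re]

end PosSemidefDeterminants

section MatrixBetaIntegral

open scoped ComplexOrder MatrixOrder ENNReal

lemma lintegral_fin_succ_arrow {E : Type*} [MeasureSpace E] [SigmaFinite (volume : Measure E)]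
    {k : ℕ} {f : (Fin (k + 1) → E) → ℝ≥0∞} (hf : Measurable f) :
    ∫⁻ x, f x = ∫⁻ x : Fin k → E, ∫⁻ v : E, f (Fin.cons v x) := by
  have hcons := (volume_preserving_piFinSuccAbove (fun _ : Fin (k + 1) => E) 0).symm
  rw [← hcons.lintegral_comp hf, Measure.volume_eq_prod]
  refine (lintegral_prod_symm _ (hf.comp hcons.measurable).aemeasurable).trans ?_
  simp [MeasurableEquiv.piFinSuccAbove, Fin.insertNthEquiv]

variable {κ : Type*} [Fintype κ]

lemma star_dotProduct_mulVec_eq_sum_norm_sq (B : Matrix κ κ ℂ) (v : κ → ℂ) :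
    (star v ⬝ᵥ ((star B * B) *ᵥ v)).re = ∑ a, ‖(B *ᵥ v) a‖ ^ 2 := by
  rw [star_eq_conjTranspose, ← mulVec_mulVec, dotProduct_mulVec, vecMul_conjTranspose, star_star]
  simp [dotProduct, Complex.conj_mul', ← Complex.ofReal_pow]

lemma lintegral_one_add_sum_norm_sq_rpow_lt_top {t : ℝ} (ht : Fintype.card κ < t) :
    ∫⁻ v : κ → ℂ, ENNReal.ofReal ((1 + ∑ a, ‖v a‖ ^ 2) ^ (-t)) < ∞ := by
  have hrank : (Module.finrank ℝ (κ → ℂ) : ℝ) < 2 * t := by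
    simp only [Module.finrank_pi_fintype, Complex.finrank_real_complex, Finset.sum_const,
      Finset.card_univ, smul_eq_mul, Nat.cast_mul, Nat.cast_ofNat]
    linarith
  have hsup := integrable_rpow_neg_one_add_norm_sq (μ := (volume : Measure (κ → ℂ))) hrank
  rw [neg_div, mul_div_cancel_left₀ t two_ne_zero] at hsup
  have hnorm (v : κ → ℂ) : ‖v‖ ^ 2 ≤ ∑ a, ‖v a‖ ^ 2 := by
    have hsum : 0 ≤ ∑ a, ‖v a‖ ^ 2 := by positivity
    rw [← Real.le_sqrt (norm_nonneg _) hsum, pi_norm_le_iff_of_nonneg (Real.sqrt_nonneg _)]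
    exact fun a => Real.le_sqrt_of_sq_le (Finset.single_le_sum (f := fun a => ‖v a‖ ^ 2)
      (fun _ _ => by positivity) (Finset.mem_univ a))
  refine (lintegral_mono fun v => ENNReal.ofReal_le_ofReal ?_).trans_lt hsup.lintegral_lt_top
  exact Real.rpow_le_rpow_of_nonpos (by positivity) (by gcongr; exact hnorm v)
    (neg_nonpos.2 ((Nat.cast_nonneg _).trans ht.le))

variable [DecidableEq κ]

lemma lintegral_comp_quadForm {M : Matrix κ κ ℂ} (hM : M.PosDef) {f : ℝ → ℝ≥0∞}
    (hf : Measurable f) :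
    ∫⁻ v : κ → ℂ, f (star v ⬝ᵥ (M *ᵥ v)).re =
      ENNReal.ofReal (M.det.re)⁻¹ * ∫⁻ v : κ → ℂ, f (∑ a, ‖v a‖ ^ 2) := by
  obtain ⟨B, rfl⟩ := CStarAlgebra.nonneg_iff_eq_star_mul_self.mp hM.posSemidef.nonneg
  have hpos : 0 < (star B * B).det.re := (Complex.lt_def.1 hM.det_pos).1
  let L : (κ → ℂ) →ₗ[ℝ] κ → ℂ := (Matrix.toLin' B).restrictScalars ℝ
  have hL : LinearMap.det L = (star B * B).det.re := by
    rw [LinearMap.det_restrictScalars, Algebra.norm_complex_apply, LinearMap.det_toLin',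
      normSq_det_eq_re_det]
  have hmap := Measure.map_linearMap_addHaar_eq_smul_addHaar (volume : Measure (κ → ℂ))
    (f := L) (hL ▸ hpos.ne')
  calc ∫⁻ v : κ → ℂ, f (star v ⬝ᵥ ((star B * B) *ᵥ v)).re
      = ∫⁻ v, f (∑ a, ‖L v a‖ ^ 2) := by simp_rw [star_dotProduct_mulVec_eq_sum_norm_sq]; rfl
    _ = ∫⁻ v, f (∑ a, ‖v a‖ ^ 2) ∂(volume.map L) :=
        (lintegral_map (f := fun v : κ → ℂ => f (∑ a, ‖v a‖ ^ 2)) (by fun_prop)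
          (LinearMap.continuous_of_finiteDimensional L).measurable).symm
    _ = _ := by rw [hmap, lintegral_smul_measure, hL, abs_of_pos (inv_pos.2 hpos), smul_eq_mul]

lemma lintegral_one_add_vecMulVec_det_rpow {S : Matrix κ κ ℂ} (hS : S.PosDef) (t : ℝ) :
    ∫⁻ v : κ → ℂ, ENNReal.ofReal ((S + vecMulVec v (star v)).det.re ^ (-t)) =
      ENNReal.ofReal (S.det.re ^ (1 - t)) *
        ∫⁻ v : κ → ℂ, ENNReal.ofReal ((1 + ∑ a, ‖v a‖ ^ 2) ^ (-t)) := by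
  have hpos : 0 < S.det.re := (Complex.lt_def.1 hS.det_pos).1
  have him : S.det = (S.det.re : ℂ) := Complex.ext rfl (Complex.lt_def.1 hS.det_pos).2.symm
  have hinv : (S⁻¹.det.re)⁻¹ = S.det.re := by
    rw [det_nonsing_inv, Ring.inverse_eq_inv', him, ← Complex.ofReal_inv, Complex.ofReal_re,
      Complex.ofReal_re, inv_inv]
  have hfactor (v : κ → ℂ) : ENNReal.ofReal ((S + vecMulVec v (star v)).det.re ^ (-t)) =
      ENNReal.ofReal (S.det.re ^ (-t)) *
        ENNReal.ofReal ((1 + (star v ⬝ᵥ (S⁻¹ *ᵥ v)).re) ^ (-t)) := by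
    have hq : 0 ≤ (star v ⬝ᵥ (S⁻¹ *ᵥ v)).re :=
      (Complex.le_def.1 (hS.inv.posSemidef.dotProduct_mulVec_nonneg v)).1
    rw [det_add_vecMulVec_self_star hS, him, Complex.re_ofReal_mul, Complex.add_re, Complex.one_re,
      Complex.ofReal_re, Real.mul_rpow hpos.le (by positivity), ENNReal.ofReal_mul (by positivity)]
  simp_rw [hfactor]
  rw [lintegral_const_mul' _ _ ENNReal.ofReal_ne_top,
    lintegral_comp_quadForm (f := fun r => ENNReal.ofReal ((1 + r) ^ (-t))) hS.inv (by fun_prop),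
    hinv, ← mul_assoc, ← ENNReal.ofReal_mul (by positivity), sub_eq_neg_add,
    Real.rpow_add hpos, Real.rpow_one]

/-- Integrating out the columns `x j` one at a time lowers the exponent by one each time. -/
lemma lintegral_det_one_add_sum_vecMulVec_rpow_lt_top (k : ℕ) {t : ℝ}
    (ht : (Fintype.card κ : ℝ) + k < t + 1) :
    ∫⁻ x : Fin k → κ → ℂ, ENNReal.ofReal
      ((1 + ∑ j, vecMulVec (x j) (star (x j))).det.re ^ (-t)) < ∞ := by
  have hmeas (k : ℕ) (s : ℝ) : Measurable fun x : Fin k → κ → ℂ => ENNReal.ofReal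
      ((1 + ∑ j, vecMulVec (x j) (star (x j))).det.re ^ s) := by
    have hcont : Continuous fun x : Fin k → κ → ℂ =>
        (1 + ∑ j, vecMulVec (x j) (star (x j))).det.re := by
      refine Complex.continuous_re.comp (Continuous.matrix_det ?_)
      exact continuous_const.add (continuous_finsetSum _ fun j _ =>
        Continuous.matrix_vecMulVec (by fun_prop) (by fun_prop))
    exact (hcont.measurable.pow_const s).ennreal_ofReal
  induction k generalizing t with
  | zero => simp [lintegral_unique, volume_pi]
  | succ k ih =>
    push_cast at ht
    have hS (x : Fin k → κ → ℂ) : (1 + ∑ j, vecMulVec (x j) (star (x j))).PosDef :=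
      Matrix.PosDef.one.add_posSemidef (posSemidef_sum_vecMulVec_self_star x _)
    rw [lintegral_fin_succ_arrow (hmeas (k + 1) (-t))]
    simp_rw [Fin.sum_univ_succ, Fin.cons_zero, Fin.cons_succ, add_comm (vecMulVec _ _),
      ← add_assoc, fun x => lintegral_one_add_vecMulVec_det_rpow (hS x) t]
    rw [lintegral_mul_const _ (hmeas k _)]
    refine ENNReal.mul_lt_top ?_ (lintegral_one_add_sum_norm_sq_rpow_lt_top
      (by linarith [(Nat.cast_nonneg k : (0 : ℝ) ≤ k)]))
    simpa using ih (t := t - 1) (by linarith)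

end MatrixBetaIntegral

section MinorBounds

open scoped ComplexOrder MatrixOrder

variable {κ : Type*} [Fintype κ] [DecidableEq κ]

lemma one_le_re_det_one_add_gram (G : Matrix κ κ ℂ) : 1 ≤ (1 + Gᴴ * G).det.re :=
  (Complex.le_def.1 (one_le_det_one_add (posSemidef_conjTranspose_mul_self G))).1

lemma continuous_re_det_gram :
    Continuous fun G : Matrix κ κ ℂ => (Gᴴ * G).det.re :=
  Complex.continuous_re.comp
    (continuous_id.matrix_conjTranspose.matrix_mul continuous_id).matrix_det

lemma continuous_re_det_one_add_gram :
    Continuous fun G : Matrix κ κ ℂ => (1 + Gᴴ * G).det.re :=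
  Complex.continuous_re.comp (continuous_const.add
    (continuous_id.matrix_conjTranspose.matrix_mul continuous_id)).matrix_det

lemma re_det_gram_nonneg (G : Matrix κ κ ℂ) :
    0 ≤ (Gᴴ * G).det.re :=
  (Complex.le_def.1 (posSemidef_conjTranspose_mul_self G).det_nonneg).1

lemma re_det_gram_le_re_det_one_add_gram (G : Matrix κ κ ℂ) :
    (Gᴴ * G).det.re ≤ (1 + Gᴴ * G).det.re := by
  rw [add_comm]
  exact (Complex.le_def.1
    (det_le_det_add (posSemidef_conjTranspose_mul_self G) Matrix.PosSemidef.one)).1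

lemma keepRows_gram_add_keepRows_compl_gram (S : Finset κ) (G : Matrix κ κ ℂ) :
    (keepRows S G)ᴴ * keepRows S G + (keepRows Sᶜ G)ᴴ * keepRows Sᶜ G = 1 + Gᴴ * G := by
  have hone : (1 : Matrix κ κ ℂ) = 1ᴴ * 1 := by rw [conjTranspose_one, one_mul]
  rw [hone]
  ext a b
  simp only [Matrix.add_apply, Matrix.mul_apply, conjTranspose_apply, ← Finset.sum_add_distrib]
  refine Finset.sum_congr rfl fun c _ => ?_
  by_cases hc : c ∈ S <;> simp [keepRows, hc, add_comm]

lemma norm_principalMinor_sq_le (S : Finset κ) (G : Matrix κ κ ℂ) :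
    ‖principalMinor S G‖ ^ 2 ≤ (1 + Gᴴ * G).det.re := by
  have hle := (Complex.le_def.1 (det_le_det_add (posSemidef_conjTranspose_mul_self (keepRows S G))
    (posSemidef_conjTranspose_mul_self (keepRows Sᶜ G)))).1
  rwa [keepRows_gram_add_keepRows_compl_gram, ← star_eq_conjTranspose, ← normSq_det_eq_re_det,
    Complex.normSq_eq_norm_sq, det_keepRows] at hle

lemma norm_principalMinor_mul_principalMinor_le (S T : Finset κ) (G : Matrix κ κ ℂ) :
    ‖principalMinor S G * principalMinor T G‖ ≤ (1 + Gᴴ * G).det.re := by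
  rw [norm_mul]
  nlinarith [norm_principalMinor_sq_le S G, norm_principalMinor_sq_le T G,
    sq_nonneg (‖principalMinor S G‖ - ‖principalMinor T G‖)]

end MinorBounds

section SymplecticGroup

/-- The `2 × 2`-block matrices whose blocks are quaternions `[[z, w], [-conj w, conj z]]`. -/
def quaternionicMatrices (ι : Type*) [Fintype ι] [DecidableEq ι] :
    Submonoid (Matrix (ι × Fin 2) (ι × Fin 2) ℂ) where
  carrier := {M | ∀ i j, M (i, 1) (j, 0) = -starRingEnd ℂ (M (i, 0) (j, 1)) ∧
    M (i, 1) (j, 1) = starRingEnd ℂ (M (i, 0) (j, 0))}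
  one_mem' i j := by simp [one_apply]
  mul_mem' {M N} hM hN i j := by
    simp only [mul_apply, Fintype.sum_prod_type, Fin.sum_univ_two, map_sum, map_add, map_mul,
      ← Finset.sum_neg_distrib]
    constructor
    · exact Finset.sum_congr rfl fun k _ => by simp [hM i k, hN k j, add_comm]
    · exact Finset.sum_congr rfl fun k _ => by simp [hM i k, hN k j, add_comm]

/-- The compact symplectic group `Sp(n)`, realised as the unitary quaternionic matrices. -/
def compactSymplecticGroup (ι : Type*) [Fintype ι] [DecidableEq ι] :
    Submonoid (Matrix (ι × Fin 2) (ι × Fin 2) ℂ) :=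
  unitaryGroup (ι × Fin 2) ℂ ⊓ quaternionicMatrices ι

/-- The index sets that contain both or neither of the two rows of each block. -/
def IsUnionOfBlocks {ι : Type*} (S : Finset (ι × Fin 2)) : Prop :=
  ∀ i s t, (i, s) ∈ S → (i, t) ∈ S

variable {ι : Type*} [DecidableEq ι]

/-- The diagonal of the identity matrix with its `j`-th diagonal block replaced by the quaternion
unit `[[i, 0], [0, -i]]`. -/
def torusPhase (j : ι) : ι × Fin 2 → ℂ :=
  Pi.mulSingle (j, 0) Complex.I * Pi.mulSingle (j, 1) (-Complex.I)

lemma prod_torusPhase (j : ι) (S : Finset (ι × Fin 2)) :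
    ∏ a ∈ S, torusPhase j a =
      (if (j, 0) ∈ S then Complex.I else 1) * (if (j, 1) ∈ S then -Complex.I else 1) := by
  simp only [torusPhase, Pi.mul_apply, Finset.prod_mul_distrib, Finset.prod_pi_mulSingle']

lemma prod_torusPhase_mul_torusPhase_ne_one {S : Finset (ι × Fin 2)} {b : ι × Fin 2} (hb : b ∈ S) :
    (∏ a ∈ S, torusPhase b.1 a) * torusPhase b.1 b ≠ 1 := by
  have hne : (-1 : ℂ) ≠ 1 := by norm_num
  obtain ⟨j, s⟩ := b
  rw [prod_torusPhase]
  fin_cases s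
  · by_cases h : (j, 1) ∈ S <;> simp_all [torusPhase, Complex.ext_iff]
  · by_cases h : (j, 0) ∈ S <;> simp_all [torusPhase, Complex.ext_iff]

lemma exists_prod_torusPhase_ne_one {S : Finset (ι × Fin 2)} (hS : ¬IsUnionOfBlocks S) :
    ∃ j, ∏ a ∈ S, torusPhase j a ≠ 1 := by
  simp only [IsUnionOfBlocks, not_forall] at hS
  obtain ⟨j, s, t, hs, ht⟩ := hS
  refine ⟨j, ?_⟩
  rw [prod_torusPhase]
  fin_cases s <;> fin_cases t <;> simp_all [Complex.ext_iff]

variable [Fintype ι]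

lemma diagonal_torusPhase_mem_compactSymplecticGroup (j : ι) :
    diagonal (torusPhase j) ∈ compactSymplecticGroup ι := by
  refine ⟨mem_unitaryGroup_iff.2 ?_, fun i k => ?_⟩
  · rw [star_eq_conjTranspose, diagonal_conjTranspose, diagonal_mul_diagonal, ← diagonal_one]
    congr 1
    ext ⟨i, s⟩
    rcases eq_or_ne i j with rfl | hij <;> fin_cases s <;> simp [torusPhase, *]
  · rcases eq_or_ne i k with rfl | hik <;> rcases eq_or_ne i j with rfl | hij <;>
      simp [torusPhase, *]

/-- The identity matrix with its `j`-th diagonal block replaced by the quaternion unit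
`[[0, 1], [-1, 0]]`. -/
def blockFlip (j : ι) : Matrix (ι × Fin 2) (ι × Fin 2) ℂ :=
  monomialMatrix (Pi.mulSingle (j, 1) (-1)) (Equiv.swap (j, 0) (j, 1))

lemma mulSingle_neg_one_mul_star {κ : Type*} [DecidableEq κ] (a b : κ) :
    (Pi.mulSingle a (-1) : κ → ℂ) b * star ((Pi.mulSingle a (-1) : κ → ℂ) b) = 1 := by
  rcases eq_or_ne b a with rfl | hba <;> simp [*]

lemma det_blockFlip (j : ι) : (blockFlip j).det = 1 := by
  rw [blockFlip, det_monomialMatrix, Finset.prod_pi_mulSingle', Equiv.Perm.sign_swap (by simp)]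
  simp

lemma blockFlip_mem_compactSymplecticGroup (j : ι) :
    blockFlip j ∈ compactSymplecticGroup ι := by
  refine ⟨monomialMatrix_mem_unitaryGroup (mulSingle_neg_one_mul_star _) _, fun i k => ?_⟩
  simp only [blockFlip, monomialMatrix_apply, Equiv.swap_apply_def, Pi.mulSingle_apply]
  rcases eq_or_ne i j with rfl | hij <;> rcases eq_or_ne k i with rfl | hki <;> simp [*]

/-- The permutation matrix exchanging the `i`-th and `j`-th block rows. -/
def blockSwap (i j : ι) : Matrix (ι × Fin 2) (ι × Fin 2) ℂ :=
  monomialMatrix 1 (Equiv.prodCongrLeft fun _ => Equiv.swap i j)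

lemma det_blockSwap (i j : ι) : (blockSwap i j).det = 1 := by
  rw [blockSwap, det_monomialMatrix, Equiv.Perm.sign_prodCongrLeft]
  simp

lemma blockSwap_mem_compactSymplecticGroup (i j : ι) :
    blockSwap i j ∈ compactSymplecticGroup ι := by
  refine ⟨monomialMatrix_mem_unitaryGroup (by simp) _, fun k l => ?_⟩
  simp [blockSwap, monomialMatrix_apply, apply_ite (starRingEnd ℂ)]

end SymplecticGroup

section SymplecticAverages

section MeasurePreserving

variable {X E : Type*} [MeasurableSpace X] {μ : Measure X} [NormedAddCommGroup E] [NormedSpace ℝ E]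
  {T : X → X} {F : X → E}

lemma integral_comp_eq_of_measurePreserving (hT : MeasurePreserving T μ μ)
    (hF : AEStronglyMeasurable F μ) : ∫ x, F (T x) ∂μ = ∫ x, F x ∂μ := by
  rw [← integral_map hT.aemeasurable (hT.map_eq.symm ▸ hF), hT.map_eq]

lemma integral_eq_zero_of_comp_eq_mul {F : X → ℂ} {c : ℂ} (hc : c ≠ 1)
    (hT : MeasurePreserving T μ μ) (hF : AEStronglyMeasurable F μ)
    (hcomp : ∀ x, F (T x) = c * F x) : ∫ x, F x ∂μ = 0 := by
  have h := integral_comp_eq_of_measurePreserving hT hF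
  simp_rw [hcomp, integral_const_mul] at h
  exact (mul_left_eq_self₀.1 h).resolve_left hc

end MeasurePreserving

instance {m n R : Type*} [MeasurableSpace R] : MeasurableSpace (Matrix m n R) :=
  inferInstanceAs (MeasurableSpace (m → n → R))

instance {m n : Type*} [Countable m] [Countable n] : BorelSpace (Matrix m n ℂ) :=
  inferInstanceAs (BorelSpace (m → n → ℂ))

variable {ι : Type*} [Fintype ι] [DecidableEq ι]

/-- Invariance of a measure under left multiplication by the compact symplectic group. -/
def IsLeftSpInvariant (μ : Measure (Matrix (ι × Fin 2) (ι × Fin 2) ℂ)) : Prop :=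
  ∀ U ∈ compactSymplecticGroup ι, MeasurePreserving (U * ·) μ μ

section Integrability

variable {κ : Type*} [DecidableEq κ]

lemma continuous_principalMinor (S : Finset κ) :
    Continuous fun G : Matrix κ κ ℂ => principalMinor S G :=
  (continuous_id.matrix_submatrix _ _).matrix_det

variable [Fintype κ] {μ : Measure (Matrix κ κ ℂ)}
  (hint : Integrable (fun G : Matrix κ κ ℂ => (1 + Gᴴ * G).det.re) μ)

include hint

lemma integrable_principalMinor_mul_principalMinor (S T : Finset κ) :
    Integrable (fun G => principalMinor S G * principalMinor T G) μ :=
  hint.mono' ((continuous_principalMinor S).mul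
    (continuous_principalMinor T)).aestronglyMeasurable
    (.of_forall (norm_principalMinor_mul_principalMinor_le S T))

lemma integrable_principalMinor (S : Finset κ) : Integrable (principalMinor S) μ := by
  simpa [principalMinor_empty] using integrable_principalMinor_mul_principalMinor hint S ∅

lemma integrable_principalMinor_mul_apply (S : Finset κ) (b : κ) :
    Integrable (fun G => principalMinor S G * G b b) μ := by
  simpa [principalMinor_singleton] using integrable_principalMinor_mul_principalMinor hint S {b}

end Integrability

section Transitivity

variable {S : Finset (ι × Fin 2)} {i j : ι} {s t : Fin 2}

lemma laplaceTerm_blockSwap_mul (hS : IsUnionOfBlocks S) (hi : (i, s) ∈ S) (hj : (j, t) ∈ S)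
    (b c : ι × Fin 2) (G : Matrix (ι × Fin 2) (ι × Fin 2) ℂ) :
    laplaceTerm S b c (blockSwap i j * G) = laplaceTerm S b (Equiv.swap i j c.1, c.2) G := by
  refine laplaceTerm_monomialMatrix_mul (by simp) (det_blockSwap i j) (fun a ha => ?_)
    (fun a ha => ⟨rfl, ?_⟩) b c G
  · rw [Equiv.prodCongrLeft_apply, Equiv.swap_apply_def]
    split_ifs
    exacts [hS j t _ hj, hS i s _ hi, ha]
  · rw [Equiv.prodCongrLeft_apply, Equiv.swap_apply_of_ne_of_ne]
    · rintro rfl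
      exact ha (hS _ s _ hi)
    · rintro rfl
      exact ha (hS _ t _ hj)

lemma laplaceTerm_blockFlip_mul (hS : IsUnionOfBlocks S) (hj : (j, s) ∈ S)
    (b c : ι × Fin 2) (G : Matrix (ι × Fin 2) (ι × Fin 2) ℂ) :
    laplaceTerm S b c (blockFlip j * G) = laplaceTerm S b (Equiv.swap (j, 0) (j, 1) c) G := by
  refine laplaceTerm_monomialMatrix_mul (mulSingle_neg_one_mul_star _) (det_blockFlip j)
    (fun a ha => ?_) (fun a ha => ?_) b c G
  · rw [Equiv.swap_apply_def]
    split_ifs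
    exacts [hS j s _ hj, hS j s _ hj, ha]
  · have hne (r : Fin 2) : a ≠ (j, r) := fun h => ha (h ▸ hS j s r hj)
    exact ⟨Pi.mulSingle_eq_of_ne (hne 1) _, Equiv.swap_apply_of_ne_of_ne (hne 0) (hne 1)⟩

lemma exists_laplaceTerm_mul_eq (hS : IsUnionOfBlocks S) {b c : ι × Fin 2} (hb : b ∈ S)
    (hc : c ∈ S) :
    ∃ U ∈ compactSymplecticGroup ι, ∀ G, laplaceTerm S b b (U * G) = laplaceTerm S b c G := by
  obtain ⟨i, s⟩ := b
  obtain ⟨j, t⟩ := c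
  have hswap := laplaceTerm_blockSwap_mul hS hb hc (i, s) (i, s)
  simp only [Equiv.swap_apply_left] at hswap
  rcases eq_or_ne s t with rfl | hst
  · exact ⟨_, blockSwap_mem_compactSymplecticGroup i j, hswap⟩
  · refine ⟨_, mul_mem (blockSwap_mem_compactSymplecticGroup i j)
      (blockFlip_mem_compactSymplecticGroup j), fun G => ?_⟩
    have hflip : Equiv.swap (j, 0) (j, 1) (j, s) = (j, t) := by
      fin_cases s <;> fin_cases t <;> simp_all
    rw [Matrix.mul_assoc, hswap, laplaceTerm_blockFlip_mul hS hc, hflip]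

end Transitivity

variable {μ : Measure (Matrix (ι × Fin 2) (ι × Fin 2) ℂ)} {S : Finset (ι × Fin 2)}

section Integrals

variable (hμ : IsLeftSpInvariant μ) (hint : Integrable (fun G => (1 + Gᴴ * G).det.re) μ)

include hμ hint

lemma integral_principalMinor_mul_apply_eq_zero {b : ι × Fin 2} (hb : b ∈ S) :
    ∫ G, principalMinor S G * G b b ∂μ = 0 := by
  refine integral_eq_zero_of_comp_eq_mul (prod_torusPhase_mul_torusPhase_ne_one hb)
    (hμ _ (diagonal_torusPhase_mem_compactSymplecticGroup b.1))
    (integrable_principalMinor_mul_apply hint S b).aestronglyMeasurable fun G => ?_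
  rw [principalMinor_diagonal_mul, diagonal_mul, mul_mul_mul_comm]

lemma integral_principalMinor_eq_zero (hS : ¬IsUnionOfBlocks S) :
    ∫ G, principalMinor S G ∂μ = 0 := by
  obtain ⟨j, hj⟩ := exists_prod_torusPhase_ne_one hS
  exact integral_eq_zero_of_comp_eq_mul hj
    (hμ _ (diagonal_torusPhase_mem_compactSymplecticGroup j))
    (integrable_principalMinor hint S).aestronglyMeasurable (principalMinor_diagonal_mul S _)

lemma integral_principalMinor_erase_mul_apply_eq_zero (hS : ¬IsUnionOfBlocks S)
    {b : ι × Fin 2} (hb : b ∈ S) :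
    ∫ G, principalMinor (S.erase b) G * G b b ∂μ = 0 := by
  obtain ⟨j, hj⟩ := exists_prod_torusPhase_ne_one hS
  refine integral_eq_zero_of_comp_eq_mul hj
    (hμ _ (diagonal_torusPhase_mem_compactSymplecticGroup j))
    (integrable_principalMinor_mul_apply hint _ b).aestronglyMeasurable fun G => ?_
  rw [principalMinor_diagonal_mul, diagonal_mul, mul_mul_mul_comm, Finset.prod_erase_mul _ _ hb]

lemma card_mul_integral_principalMinor_erase_mul_apply (hS : IsUnionOfBlocks S)
    {b : ι × Fin 2} (hb : b ∈ S) :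
    S.card * ∫ G, principalMinor (S.erase b) G * G b b ∂μ = ∫ G, principalMinor S G ∂μ := by
  have hself := integrable_principalMinor_mul_apply hint (S.erase b) b
  simp_rw [← laplaceTerm_self] at hself ⊢
  have hterm : ∀ c ∈ S, Integrable (laplaceTerm S b c) μ ∧
      ∫ G, laplaceTerm S b c G ∂μ = ∫ G, laplaceTerm S b b G ∂μ := by
    intro c hc
    obtain ⟨U, hU, hUc⟩ := exists_laplaceTerm_mul_eq hS hb hc
    rw [← funext hUc]
    exact ⟨(hμ U hU).integrable_comp_of_integrable hself,
      integral_comp_eq_of_measurePreserving (hμ U hU) hself.aestronglyMeasurable⟩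
  simp_rw [← sum_laplaceTerm hb]
  rw [integral_finsetSum _ fun c hc => (hterm c hc).1,
    Finset.sum_congr rfl fun c hc => (hterm c hc).2, Finset.sum_const, nsmul_eq_mul]

lemma sum_integral_principalMinor_erase_mul_apply (hne : S.Nonempty) :
    ∑ b ∈ S, ∫ G, principalMinor (S.erase b) G * G b b ∂μ = ∫ G, principalMinor S G ∂μ := by
  by_cases hS : IsUnionOfBlocks S
  · have hcard : (S.card : ℂ) ≠ 0 := Nat.cast_ne_zero.2 hne.card_ne_zero
    rw [Finset.sum_congr rfl fun b hb => eq_div_of_mul_eq hcard <| (mul_comm _ _).trans <|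
      card_mul_integral_principalMinor_erase_mul_apply hμ hint hS hb,
      Finset.sum_const, nsmul_eq_mul, mul_div_cancel₀ _ hcard]
  · rw [integral_principalMinor_eq_zero hμ hint hS]
    exact Finset.sum_eq_zero fun b hb =>
      integral_principalMinor_erase_mul_apply_eq_zero hμ hint hS hb

end Integrals

end SymplecticAverages

section CharacteristicPolynomialAverages

lemma sum_sum_compl_eq_sum_sum_erase {κ A : Type*} [Fintype κ] [DecidableEq κ] [AddCommMonoid A]
    (f : Finset κ → κ → A) :
    ∑ S : Finset κ, ∑ b ∈ Sᶜ, f S b = ∑ S : Finset κ, ∑ b ∈ S, f (S.erase b) b := by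
  rw [Finset.sum_sigma', Finset.sum_sigma']
  refine Finset.sum_bij' (fun p _ => ⟨insert p.2 p.1, p.2⟩) (fun p _ => ⟨p.1.erase p.2, p.2⟩)
    ?_ ?_ ?_ ?_ ?_ <;> simp +contextual [Finset.insert_erase]

variable {ι : Type*} [Fintype ι] [DecidableEq ι]
  {μ : Measure (Matrix (ι × Fin 2) (ι × Fin 2) ℂ)} (hμ : IsLeftSpInvariant μ)
  (hint : Integrable (fun G => (1 + Gᴴ * G).det.re) μ)

include hint

lemma integral_det_smul_one_sub (z : ℂ) :
    ∫ G, (z • (1 : Matrix (ι × Fin 2) (ι × Fin 2) ℂ) - G).det ∂μ =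
      ∑ S, minorCoeff z S * ∫ G, principalMinor S G ∂μ := by
  simp_rw [det_smul_one_sub_eq_sum_principalMinor]
  rw [integral_finsetSum _ fun S _ => (integrable_principalMinor hint S).const_mul _]
  simp_rw [integral_const_mul]

lemma integral_det_smul_one_sub_mul_trace (z : ℂ) :
    ∫ G, (z • (1 : Matrix (ι × Fin 2) (ι × Fin 2) ℂ) - G).det * G.trace ∂μ =
      ∑ S, minorCoeff z S * ∑ b, ∫ G, principalMinor S G * G b b ∂μ := by
  simp_rw [det_smul_one_sub_eq_sum_principalMinor, trace, diag_apply, Finset.sum_mul,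
    mul_assoc _ (principalMinor _ _), Finset.mul_sum]
  have h S b := integrable_principalMinor_mul_apply hint S b
  rw [integral_finsetSum _ fun S _ => integrable_finsetSum _ fun b _ => (h S b).const_mul _]
  refine Finset.sum_congr rfl fun S _ => ?_
  rw [integral_finsetSum _ fun b _ => (h S b).const_mul _]
  simp_rw [integral_const_mul]

include hμ

theorem mul_integral_det_smul_one_sub_add (z : ℂ) :
    z * ∫ G, (z • (1 : Matrix (ι × Fin 2) (ι × Fin 2) ℂ) - G).det ∂μ +
        ∫ G, (z • (1 : Matrix (ι × Fin 2) (ι × Fin 2) ℂ) - G).det * G.trace ∂μ =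
      z ^ (2 * Fintype.card ι + 1) * μ.real Set.univ := by
  have htrace (S : Finset (ι × Fin 2)) : ∑ b, ∫ G, principalMinor S G * G b b ∂μ =
      ∑ b ∈ Sᶜ, ∫ G, principalMinor S G * G b b ∂μ :=
    (Finset.sum_subset (Finset.subset_univ _) fun b _ hb =>
      integral_principalMinor_mul_apply_eq_zero hμ hint (by simpa using hb)).symm
  have hshift (S : Finset (ι × Fin 2)) (hS : S ≠ ∅) : ∑ b ∈ S, minorCoeff z (S.erase b) *
      ∫ G, principalMinor (S.erase b) G * G b b ∂μ =
        -(z * (minorCoeff z S * ∫ G, principalMinor S G ∂μ)) := by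
    rw [← sum_integral_principalMinor_erase_mul_apply hμ hint (Finset.nonempty_iff_ne_empty.2 hS),
      Finset.mul_sum, Finset.mul_sum, ← Finset.sum_neg_distrib]
    exact Finset.sum_congr rfl fun b hb => by rw [minorCoeff_erase z hb]; ring
  rw [integral_det_smul_one_sub hint, integral_det_smul_one_sub_mul_trace hint]
  simp_rw [htrace, Finset.mul_sum]
  rw [sum_sum_compl_eq_sum_sum_erase fun S b => minorCoeff z S *
      ∫ G, principalMinor S G * G b b ∂μ, ← Finset.sum_add_distrib,
    Finset.sum_eq_single ∅ (fun S _ hS => by rw [hshift S hS, add_neg_cancel]) (by simp)]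
  simp [minorCoeff, principalMinor_empty, mul_comm 2, pow_succ', mul_assoc]

end CharacteristicPolynomialAverages

section HaarMeasure

open scoped ENNReal

variable {E F : Type*} [NormedAddCommGroup E] [NormedSpace ℝ E] [FiniteDimensional ℝ E]
  [MeasurableSpace E] [BorelSpace E] (ν : Measure E) [ν.IsAddHaarMeasure]

lemma lintegral_comp_linearEquiv_lt_top [NormedAddCommGroup F] [NormedSpace ℝ F]
    [FiniteDimensional ℝ F] [MeasurableSpace F] [BorelSpace F] (μ : Measure F)
    [μ.IsAddHaarMeasure] (e : E ≃ₗ[ℝ] F) {f : F → ℝ≥0∞} (hf : ∫⁻ y, f y ∂μ < ∞) :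
    ∫⁻ x, f (e x) ∂ν < ∞ := by
  let eM : E ≃ᵐ F := e.toContinuousLinearEquiv.toHomeomorph.toMeasurableEquiv
  have : (ν.map eM).IsAddHaarMeasure :=
    e.toContinuousLinearEquiv.isAddHaarMeasure_map ν
  have hsmul := Measure.isAddLeftInvariant_eq_smul (ν.map eM) μ
  calc ∫⁻ x, f (e x) ∂ν = ∫⁻ y, f y ∂(ν.map eM) := (lintegral_map_equiv f eM).symm
    _ < ∞ := by
      rw [hsmul, lintegral_smul_measure]
      exact ENNReal.mul_lt_top ENNReal.coe_lt_top hf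

lemma measurePreserving_of_injective_of_comp_eq {L : E →ₗ[ℝ] E} (hL : Function.Injective L)
    {f : E → ℝ≥0∞} (hf : Measurable f) (hfL : ∀ x, f (L x) = f x)
    (hpos : ∫⁻ x, f x ∂ν ≠ 0) (hfin : ∫⁻ x, f x ∂ν ≠ ∞) : MeasurePreserving L ν ν := by
  have hmeas : Measurable L := L.continuous_of_finiteDimensional.measurable
  have hdet : LinearMap.det L ≠ 0 := (LinearEquiv.ofInjectiveEndo L hL).isUnit_det'.ne_zero
  have hmap := Measure.map_linearMap_addHaar_eq_smul_addHaar ν hdet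
  have hscale : ENNReal.ofReal |(LinearMap.det L)⁻¹| * ∫⁻ x, f x ∂ν = 1 * ∫⁻ x, f x ∂ν := by
    rw [one_mul, ← smul_eq_mul, ← lintegral_smul_measure, ← hmap, lintegral_map hf hmeas]
    simp_rw [hfL]
  refine ⟨hmeas, ?_⟩
  rw [hmap, (ENNReal.mul_left_inj hpos hfin).1 hscale, one_smul]

lemma measurePreserving_withDensity_of_comp_eq {X : Type*} [MeasurableSpace X] {μ : Measure X}
    {L : X → X} (hL : MeasurePreserving L μ μ) {f : X → ℝ≥0∞} (hf : Measurable f)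
    (hfL : ∀ x, f (L x) = f x) : MeasurePreserving L (μ.withDensity f) (μ.withDensity f) := by
  refine ⟨hL.measurable, Measure.ext fun s hs => ?_⟩
  rw [Measure.map_apply hL.measurable hs, withDensity_apply _ hs,
    withDensity_apply _ (hL.measurable hs), ← hL.setLIntegral_comp_preimage hs hf]
  simp_rw [hfL]

end HaarMeasure

section SphericalWeight

open scoped ComplexOrder

variable {n : ℕ} {α₁ α₂ : ℝ}

lemma continuous_quatMatrix (n : ℕ) : Continuous (quatMatrix n) := by
  refine continuous_matrix fun a b => ?_
  unfold quatMatrix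
  simp only [of_apply]
  split_ifs <;> fun_prop

lemma continuous_re_det_one_add_gram_quatMatrix (n : ℕ) :
    Continuous fun x => (1 + (quatMatrix n x)ᴴ * quatMatrix n x).det.re :=
  continuous_re_det_one_add_gram.comp (continuous_quatMatrix n)

lemma continuous_quatSphericalWeight (hα₁ : 0 ≤ α₁) :
    Continuous (quatSphericalWeight n α₁ α₂) :=
  ((continuous_re_det_gram.comp (continuous_quatMatrix n)).rpow_const fun _ => Or.inr hα₁).mul
    ((continuous_re_det_one_add_gram_quatMatrix n).rpow_const fun x =>
      Or.inl (zero_lt_one.trans_le (one_le_re_det_one_add_gram (quatMatrix n x))).ne')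

lemma quatSphericalWeight_nonneg (x : Fin n → Fin n → ℂ × ℂ) :
    0 ≤ quatSphericalWeight n α₁ α₂ x :=
  mul_nonneg (Real.rpow_nonneg (re_det_gram_nonneg _) _)
    (Real.rpow_nonneg (zero_le_one.trans (one_le_re_det_one_add_gram _)) _)

lemma quatSphericalWeight_mul_re_det_le (hα₁ : 0 ≤ α₁) (x : Fin n → Fin n → ℂ × ℂ) :
    quatSphericalWeight n α₁ α₂ x * (1 + (quatMatrix n x)ᴴ * quatMatrix n x).det.re ≤
      (1 + (quatMatrix n x)ᴴ * quatMatrix n x).det.re ^ (-(α₂ - α₁ - 1)) := by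
  have hpos := zero_lt_one.trans_le (one_le_re_det_one_add_gram (quatMatrix n x))
  have hle := Real.rpow_le_rpow (re_det_gram_nonneg _)
    (re_det_gram_le_re_det_one_add_gram (quatMatrix n x)) hα₁
  rw [show -(α₂ - α₁ - 1) = α₁ + -α₂ + 1 by ring, Real.rpow_add_one hpos.ne',
    Real.rpow_add hpos, quatSphericalWeight]
  gcongr

lemma quatSphericalWeight_eq_of_gram_eq {x y : Fin n → Fin n → ℂ × ℂ}
    (h : (quatMatrix n x)ᴴ * quatMatrix n x = (quatMatrix n y)ᴴ * quatMatrix n y) :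
    quatSphericalWeight n α₁ α₂ x = quatSphericalWeight n α₁ α₂ y := by
  rw [quatSphericalWeight, quatSphericalWeight, h]

section Integrability

instance : (volume : Measure (ℂ × ℂ)).IsAddHaarMeasure :=
  Measure.prod.instIsAddHaarMeasure _ _

instance (n : ℕ) : (volume : Measure (Fin n → ℂ × ℂ)).IsAddHaarMeasure :=
  Measure.pi.isAddHaarMeasure _

instance (n : ℕ) : (volume : Measure (Fin n → Fin n → ℂ × ℂ)).IsAddHaarMeasure :=
  Measure.pi.isAddHaarMeasure _

instance (κ : Type*) [Fintype κ] (n : ℕ) : (volume : Measure (Fin n → κ → ℂ)).IsAddHaarMeasure :=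
  Measure.pi.isAddHaarMeasure _

/-- The top row of each `2 × 2` block, as a real-linear chart of the space of block rows. -/
noncomputable def blockRowEquiv (n : ℕ) : (Fin n → ℂ × ℂ) ≃ₗ[ℝ] (Fin n × Fin 2 → ℂ) :=
  (LinearEquiv.piCongrRight fun _ => (LinearEquiv.finTwoArrow ℝ ℂ).symm).trans
    (LinearEquiv.curry ℝ ℂ (Fin n) (Fin 2)).symm

lemma quatMatrix_row_zero (x : Fin n → Fin n → ℂ × ℂ) (j : Fin n) :
    (quatMatrix n x).row (j, 0) = blockRowEquiv n (x j) := by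
  ext ⟨k, s⟩
  fin_cases s <;> simp [quatMatrix, blockRowEquiv]

lemma re_det_one_add_sum_vecMulVec_le (x : Fin n → Fin n → ℂ × ℂ) :
    (1 + ∑ j, vecMulVec (blockRowEquiv n (x j)) (star (blockRowEquiv n (x j)))).det.re ≤
      (1 + (quatMatrix n x)ᴴ * quatMatrix n x).det.re := by
  set G := quatMatrix n x
  have hgram : (1 + Gᴴ * G).det = (1 + ∑ j, vecMulVec (G.row (j, 0)) (star (G.row (j, 0))) +
      ∑ j, vecMulVec (G.row (j, 1)) (star (G.row (j, 1)))).det := by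
    have htr : (Gᴴ * G)ᵀ = Gᵀ * Gᵀᴴ := by rw [transpose_mul]; rfl
    rw [← det_transpose, transpose_add, transpose_one, htr, mul_conjTranspose_self_eq_sum_vecMulVec,
      Fintype.sum_prod_type, add_assoc, ← Finset.sum_add_distrib]
    simp only [Fin.sum_univ_two]
    rfl
  rw [hgram]
  simp_rw [← quatMatrix_row_zero]
  exact (Complex.le_def.1 (det_le_det_add_of_posDef
    (Matrix.PosDef.one.add_posSemidef (posSemidef_sum_vecMulVec_self_star _ _))
    (posSemidef_sum_vecMulVec_self_star _ _))).1

lemma integrable_re_det_one_add_gram_quatMatrix_rpow {t : ℝ} (ht₀ : 0 ≤ t)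
    (ht : 3 * (n : ℝ) < t + 1) :
    Integrable fun x : Fin n → Fin n → ℂ × ℂ =>
      (1 + (quatMatrix n x)ᴴ * quatMatrix n x).det.re ^ (-t) := by
  have hpos (x : Fin n → Fin n → ℂ × ℂ) := one_le_re_det_one_add_gram (quatMatrix n x)
  refine ⟨((continuous_re_det_one_add_gram_quatMatrix n).measurable.pow_const
    _).aestronglyMeasurable, ?_⟩
  rw [hasFiniteIntegral_iff_ofReal
    (.of_forall fun x => Real.rpow_nonneg (zero_le_one.trans (hpos x)) _)]
  have hbeta := lintegral_comp_linearEquiv_lt_top volume volume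
    (LinearEquiv.piCongrRight fun _ : Fin n => blockRowEquiv n)
    (lintegral_det_one_add_sum_vecMulVec_rpow_lt_top (κ := Fin n × Fin 2) n (t := t) (by
      simp only [Fintype.card_prod, Fintype.card_fin, Nat.cast_mul, Nat.cast_ofNat]
      linarith))
  refine (lintegral_mono fun x => ENNReal.ofReal_le_ofReal ?_).trans_lt hbeta
  have hS : (1 + ∑ j, vecMulVec (blockRowEquiv n (x j)) (star (blockRowEquiv n (x j)))).PosDef :=
    Matrix.PosDef.one.add_posSemidef (posSemidef_sum_vecMulVec_self_star _ _)
  exact Real.rpow_le_rpow_of_nonpos (Complex.lt_def.1 hS.det_pos).1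
    (re_det_one_add_sum_vecMulVec_le x) (neg_nonpos.2 ht₀)

lemma integrable_quatSphericalWeight_mul_re_det (hα₁ : 0 ≤ α₁)
    (hα₂ : α₁ + 3 * n < α₂) :
    Integrable fun x => quatSphericalWeight n α₁ α₂ x *
      (1 + (quatMatrix n x)ᴴ * quatMatrix n x).det.re := by
  have hcont_mul := (continuous_quatSphericalWeight (α₂ := α₂) hα₁).mul
    (continuous_re_det_one_add_gram_quatMatrix n)
  rcases n.eq_zero_or_pos with rfl | hn
  · exact hcont_mul.integrable_of_hasCompactSupport (HasCompactSupport.of_compactSpace _)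
  have hn' : (1 : ℝ) ≤ n := Nat.one_le_cast.2 hn
  refine (integrable_re_det_one_add_gram_quatMatrix_rpow (t := α₂ - α₁ - 1) (by linarith)
    (by linarith)).mono' hcont_mul.aestronglyMeasurable (.of_forall fun x => ?_)
  rw [Real.norm_of_nonneg (mul_nonneg (quatSphericalWeight_nonneg x)
    (zero_le_one.trans (one_le_re_det_one_add_gram _)))]
  exact quatSphericalWeight_mul_re_det_le hα₁ x

lemma integrable_quatSphericalWeight (hα₁ : 0 ≤ α₁) (hα₂ : α₁ + 3 * n < α₂) :
    Integrable (quatSphericalWeight n α₁ α₂) :=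
  (integrable_quatSphericalWeight_mul_re_det hα₁ hα₂).mono'
    (continuous_quatSphericalWeight hα₁).aestronglyMeasurable (.of_forall fun x => by
      rw [Real.norm_of_nonneg (quatSphericalWeight_nonneg x)]
      exact le_mul_of_one_le_right (quatSphericalWeight_nonneg x) (one_le_re_det_one_add_gram _))

lemma integral_quatSphericalWeight_pos (hα₁ : 0 ≤ α₁) (hα₂ : α₁ + 3 * n < α₂) :
    0 < ∫ x, quatSphericalWeight n α₁ α₂ x := by
  have hone : quatMatrix n (fun i j => if i = j then (1, 0) else 0) = 1 := by
    ext ⟨i, s⟩ ⟨j, t⟩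
    fin_cases s <;> fin_cases t <;> by_cases hij : i = j <;> simp [quatMatrix, one_apply, hij]
  refine integral_pos_of_integrable_nonneg_nonzero (continuous_quatSphericalWeight hα₁)
    (integrable_quatSphericalWeight hα₁ hα₂) (fun _ => quatSphericalWeight_nonneg _)
    (x := fun i j => if i = j then (1, 0) else 0) ?_
  have hpos := zero_lt_one.trans_le
    (one_le_re_det_one_add_gram (1 : Matrix (Fin n × Fin 2) (Fin n × Fin 2) ℂ))
  rw [quatSphericalWeight, hone]
  exact mul_ne_zero (by simp) (Real.rpow_pos_of_pos hpos _).ne'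

end Integrability

end SphericalWeight

section LeftInvariance

/-- The coordinates of the quaternionic matrix `U * G`, as a real-linear function of the
coordinates of `G`. -/
noncomputable def quatLeftMul {n : ℕ} (U : Matrix (Fin n × Fin 2) (Fin n × Fin 2) ℂ) :
    (Fin n → Fin n → ℂ × ℂ) →ₗ[ℝ] (Fin n → Fin n → ℂ × ℂ) where
  toFun x i j := ((U * quatMatrix n x) (i, 0) (j, 0), (U * quatMatrix n x) (i, 0) (j, 1))
  map_add' x y := by
    have hadd : quatMatrix n (x + y) = quatMatrix n x + quatMatrix n y := by
      ext ⟨i, s⟩ ⟨j, t⟩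
      fin_cases s <;> fin_cases t <;> simp [quatMatrix, add_comm]
    simp only [hadd, mul_add]
    rfl
  map_smul' c x := by
    have hsmul : quatMatrix n (c • x) = c • quatMatrix n x := by
      ext ⟨i, s⟩ ⟨j, t⟩
      fin_cases s <;> fin_cases t <;> simp [quatMatrix]
    simp only [hsmul, mul_smul_comm]
    rfl

variable {n : ℕ} {α₁ α₂ : ℝ} {U : Matrix (Fin n × Fin 2) (Fin n × Fin 2) ℂ}

lemma quatMatrix_mem_quaternionicMatrices (x : Fin n → Fin n → ℂ × ℂ) :
    quatMatrix n x ∈ quaternionicMatrices (Fin n) := fun i j => by simp [quatMatrix]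

lemma quatMatrix_injective (n : ℕ) : Function.Injective (quatMatrix n) := fun x y h => by
  ext i j
  · simpa [quatMatrix] using congr_fun₂ h (i, 0) (j, 0)
  · simpa [quatMatrix] using congr_fun₂ h (i, 0) (j, 1)

lemma quatMatrix_eq_of_mem_quaternionicMatrices {M : Matrix (Fin n × Fin 2) (Fin n × Fin 2) ℂ}
    (hM : M ∈ quaternionicMatrices (Fin n)) :
    quatMatrix n (fun i j => (M (i, 0) (j, 0), M (i, 0) (j, 1))) = M := by
  ext ⟨i, s⟩ ⟨j, t⟩
  fin_cases s <;> fin_cases t <;> simp [quatMatrix, hM i j]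

lemma quatMatrix_quatLeftMul (hU : U ∈ quaternionicMatrices (Fin n))
    (x : Fin n → Fin n → ℂ × ℂ) : quatMatrix n (quatLeftMul U x) = U * quatMatrix n x :=
  quatMatrix_eq_of_mem_quaternionicMatrices (mul_mem hU (quatMatrix_mem_quaternionicMatrices x))

lemma quatLeftMul_injective (hU : U ∈ compactSymplecticGroup (Fin n)) :
    Function.Injective (quatLeftMul U) := fun x y h => quatMatrix_injective n <| by
  have hmul := congr_arg (quatMatrix n) h
  rw [quatMatrix_quatLeftMul hU.2, quatMatrix_quatLeftMul hU.2] at hmul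
  simpa [← Matrix.mul_assoc, mem_unitaryGroup_iff'.1 hU.1] using congr_arg (star U * ·) hmul

lemma quatSphericalWeight_quatLeftMul (hU : U ∈ compactSymplecticGroup (Fin n))
    (x : Fin n → Fin n → ℂ × ℂ) :
    quatSphericalWeight n α₁ α₂ (quatLeftMul U x) = quatSphericalWeight n α₁ α₂ x := by
  refine quatSphericalWeight_eq_of_gram_eq ?_
  rw [quatMatrix_quatLeftMul hU.2, conjTranspose_mul, Matrix.mul_assoc, ← Matrix.mul_assoc Uᴴ,
    ← star_eq_conjTranspose U, mem_unitaryGroup_iff'.1 hU.1, Matrix.one_mul]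

lemma measurePreserving_quatLeftMul (hU : U ∈ compactSymplecticGroup (Fin n)) :
    MeasurePreserving (quatLeftMul U) volume volume := by
  have hint := integrable_quatSphericalWeight (α₁ := 0) (α₂ := 3 * n + 1) le_rfl (by linarith)
  have heq := ofReal_integral_eq_lintegral_ofReal hint (.of_forall quatSphericalWeight_nonneg)
  refine measurePreserving_of_injective_of_comp_eq volume (quatLeftMul_injective hU)
    (continuous_quatSphericalWeight (α₁ := 0) (α₂ := 3 * n + 1) le_rfl).measurable.ennreal_ofReal
    (fun x => by rw [quatSphericalWeight_quatLeftMul hU]) ?_ ?_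
  · rw [← heq]
    exact (ENNReal.ofReal_pos.2
      (integral_quatSphericalWeight_pos le_rfl (by linarith))).ne'
  · rw [← heq]
    exact ENNReal.ofReal_ne_top

end LeftInvariance

section SphericalMeasure

/-- The unnormalized law of the quaternion real spherical ensemble, as a measure on matrices. -/
noncomputable def quatSphericalMeasure (n : ℕ) (α₁ α₂ : ℝ) :
    Measure (Matrix (Fin n × Fin 2) (Fin n × Fin 2) ℂ) :=
  (volume.withDensity fun x => ENNReal.ofReal (quatSphericalWeight n α₁ α₂ x)).map (quatMatrix n)

variable {n : ℕ} {α₁ α₂ : ℝ}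

lemma isLeftSpInvariant_quatSphericalMeasure (hα₁ : 0 ≤ α₁) :
    IsLeftSpInvariant (quatSphericalMeasure n α₁ α₂) := fun U hU => by
  have hquat := (continuous_quatMatrix n).measurable
  have hL := measurePreserving_withDensity_of_comp_eq (measurePreserving_quatLeftMul hU)
    (continuous_quatSphericalWeight (α₂ := α₂) hα₁).measurable.ennreal_ofReal
    fun x => by rw [quatSphericalWeight_quatLeftMul hU]
  refine (hquat.measurePreserving _).of_semiconj hL
    (fun x => quatMatrix_quatLeftMul hU.2 x) (by fun_prop)

lemma integral_quatSphericalMeasure (hα₁ : 0 ≤ α₁)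
    {F : Matrix (Fin n × Fin 2) (Fin n × Fin 2) ℂ → ℂ} (hF : Continuous F) :
    ∫ G, F G ∂quatSphericalMeasure n α₁ α₂ =
      ∫ x, (quatSphericalWeight n α₁ α₂ x : ℂ) * F (quatMatrix n x) := by
  have hweight := (continuous_quatSphericalWeight (n := n) (α₂ := α₂) hα₁).measurable
  rw [quatSphericalMeasure, integral_map (continuous_quatMatrix n).aemeasurable
    hF.aestronglyMeasurable, integral_withDensity_eq_integral_toReal_smul
    hweight.ennreal_ofReal (by simp)]
  simp [ENNReal.toReal_ofReal, quatSphericalWeight_nonneg]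

lemma integrable_re_det_one_add_gram_quatSphericalMeasure (hα₁ : 0 ≤ α₁)
    (hα₂ : α₁ + 3 * n < α₂) :
    Integrable (fun G => (1 + Gᴴ * G).det.re) (quatSphericalMeasure n α₁ α₂) := by
  have hweight := (continuous_quatSphericalWeight (n := n) (α₂ := α₂) hα₁).measurable
  rw [quatSphericalMeasure, integrable_map_measure
    continuous_re_det_one_add_gram.aestronglyMeasurable (continuous_quatMatrix n).aemeasurable,
    integrable_withDensity_iff_integrable_smul' hweight.ennreal_ofReal (by simp)]
  simpa [ENNReal.toReal_ofReal, quatSphericalWeight_nonneg] using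
    integrable_quatSphericalWeight_mul_re_det hα₁ hα₂

lemma real_univ_quatSphericalMeasure (hα₁ : 0 ≤ α₁) :
    (quatSphericalMeasure n α₁ α₂).real Set.univ = ∫ x, quatSphericalWeight n α₁ α₂ x := by
  rw [integral_eq_lintegral_of_nonneg_ae (.of_forall quatSphericalWeight_nonneg)
    (continuous_quatSphericalWeight hα₁).aestronglyMeasurable, measureReal_def,
    quatSphericalMeasure, Measure.map_apply (continuous_quatMatrix n).measurable .univ]
  simp

theorem quatSpherical_odd_skew_orthogonal_poly_general (n : ℕ)
    (α₁ α₂ : ℝ) (hα₁ : 0 ≤ α₁) (hα₂ : α₁ + 3 * n < α₂) (z : ℂ) :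
    z * ((∫ x : Fin n → Fin n → ℂ × ℂ,
          (quatSphericalWeight n α₁ α₂ x : ℂ) *
            (z • (1 : Matrix (Fin n × Fin 2) (Fin n × Fin 2) ℂ) - quatMatrix n x).det) /
        ((∫ x : Fin n → Fin n → ℂ × ℂ, quatSphericalWeight n α₁ α₂ x : ℝ) : ℂ))
      + (∫ x : Fin n → Fin n → ℂ × ℂ,
          (quatSphericalWeight n α₁ α₂ x : ℂ) *
            ((z • (1 : Matrix (Fin n × Fin 2) (Fin n × Fin 2) ℂ) - quatMatrix n x).det
              * (quatMatrix n x).trace)) /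
        ((∫ x : Fin n → Fin n → ℂ × ℂ, quatSphericalWeight n α₁ α₂ x : ℝ) : ℂ)
      = z ^ (2 * n + 1) := by
  have hmass : ((∫ x, quatSphericalWeight n α₁ α₂ x : ℝ) : ℂ) ≠ 0 :=
    Complex.ofReal_ne_zero.2 (integral_quatSphericalWeight_pos hα₁ hα₂).ne'
  have hdet : Continuous fun G : Matrix (Fin n × Fin 2) (Fin n × Fin 2) ℂ => (z • 1 - G).det :=
    (continuous_const.sub continuous_id).matrix_det
  have hdet_trace : Continuous fun G : Matrix (Fin n × Fin 2) (Fin n × Fin 2) ℂ =>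
      (z • 1 - G).det * G.trace := hdet.mul continuous_id.matrix_trace
  have haverages := mul_integral_det_smul_one_sub_add
    (isLeftSpInvariant_quatSphericalMeasure (α₂ := α₂) hα₁)
    (integrable_re_det_one_add_gram_quatSphericalMeasure hα₁ hα₂) z
  rw [integral_quatSphericalMeasure hα₁ hdet, integral_quatSphericalMeasure hα₁ hdet_trace,
    real_univ_quatSphericalMeasure hα₁, Fintype.card_fin] at haverages
  rw [← mul_div_assoc, ← add_div, div_eq_iff hmass]
  exact haverages

end SphericalMeasure

/-- The odd-degree skew orthogonal polynomial for the quaternion real spherical ensemble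
is a monomial: `z ⟨det (z I - G)⟩ + ⟨det (z I - G) Tr G⟩ = z^(2n+1)`. -/
theorem quatSpherical_odd_skew_orthogonal_poly (n : ℕ) (hn : 0 < n)
    (α₁ α₂ : ℝ) (hα₁ : 0 ≤ α₁) (hα₂ : α₁ + 3 * n + 1 < α₂) (z : ℂ) :
    z * ((∫ x : Fin n → Fin n → ℂ × ℂ,
          (quatSphericalWeight n α₁ α₂ x : ℂ) *
            (z • (1 : Matrix (Fin n × Fin 2) (Fin n × Fin 2) ℂ) - quatMatrix n x).det) /
        ((∫ x : Fin n → Fin n → ℂ × ℂ, quatSphericalWeight n α₁ α₂ x : ℝ) : ℂ))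
      + (∫ x : Fin n → Fin n → ℂ × ℂ,
          (quatSphericalWeight n α₁ α₂ x : ℂ) *
            ((z • (1 : Matrix (Fin n × Fin 2) (Fin n × Fin 2) ℂ) - quatMatrix n x).det
              * (quatMatrix n x).trace)) /
        ((∫ x : Fin n → Fin n → ℂ × ℂ, quatSphericalWeight n α₁ α₂ x : ℝ) : ℂ)
      = z ^ (2 * n + 1) := by
  exact quatSpherical_odd_skew_orthogonal_poly_general n α₁ α₂ hα₁ (by linarith) z
end
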